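/- arXiv:2012.13515 — 2 statements merged into one kernel-verified Lean document; each statement's English description precedes it below -/
import Mathlib

section
/- Let E ⊆ ℝ² be compact, ε > 0, and let x ∈ ∂E_ε be such that Π_ext(x) = {y₁, y₂} with y₁ − x = −(y₂ − x), and let ξ ∈ Ξ_ext(x). Then exactly one of the following holds: (i) (sharp type) there exist r > 0 and a connected component V of E_ε^c with x ∈ ∂V such that E_ε^c ∩ U_r(x, ξ) = V ∩ U_r(x, ξ) and V is the only connected component of E_ε^c meeting U_r(x, ξ); (ii) (chain type) there exist r > 0, a sequence (V_n) of pairwise disjoint connected components of E_ε^c contained in U_r(x, ξ) with Hausdorff distance dist_H({x}, V_n) → 0, and a sequence of singularities x_n ∈ ∂V_n with x_n → x and ⟨(y_n^{(1)} − x_n)/ε, (y_n^{(2)} − x_n)/ε⟩ → −1, where Π_ext(x_n) = {y_n^{(1)}, y_n^{(2)}}. -/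
open Metric Set Filter Topology RealInnerProductSpace

noncomputable section

/-- The Euclidean plane. -/
abbrev Plane := EuclideanSpace ℝ (Fin 2)

/-- The closed ε-neighbourhood of a set `E ⊆ ℝ²`: the closure of the union of open
ε-balls centred at points of `E`. -/
def eNbhd (E : Set Plane) (ε : ℝ) : Set Plane :=
  closure (⋃ y ∈ E, ball y ε)

/-- The set of contributors of a boundary point `x ∈ ∂E_ε`: points `y ∈ ∂E` with
`‖y - x‖ = ε`. -/
def contributors (E : Set Plane) (ε : ℝ) (x : Plane) : Set Plane :=
  {y ∈ frontier E | ‖y - x‖ = ε}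

/-- The set of outward directions from `E_ε` at `x`. -/
def outwardDirs (E : Set Plane) (ε : ℝ) (x : Plane) : Set Plane :=
  {ξ | ‖ξ‖ = 1 ∧ ∃ u : ℕ → Plane, (∀ n, u n ∉ eNbhd E ε) ∧
    Tendsto u atTop (nhds x) ∧
    Tendsto (fun n => (‖u n - x‖)⁻¹ • (u n - x)) atTop (nhds ξ)}

/-- The set of extremal outward directions at `x`: outward directions perpendicular to
`y - x` for some contributor `y`. -/
def extOutward (E : Set Plane) (ε : ℝ) (x : Plane) : Set Plane :=
  {ξ ∈ outwardDirs E ε x | ∃ y ∈ contributors E ε x, ⟪y - x, ξ⟫ = 0}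

/-- The set of extremal contributors at `x`: contributors perpendicular to some
outward direction. -/
def extContrib (E : Set Plane) (ε : ℝ) (x : Plane) : Set Plane :=
  {y ∈ contributors E ε x | ∃ ξ ∈ outwardDirs E ε x, ⟪y - x, ξ⟫ = 0}

/-- The set of extremal pairs at `x`. -/
def extPairs (E : Set Plane) (ε : ℝ) (x : Plane) : Set (Plane × Plane) :=
  {p | p.1 ∈ outwardDirs E ε x ∧ p.2 ∈ contributors E ε x ∧ ⟪p.2 - x, p.1⟫ = 0}

/-- The set `Unp(E)` of boundary points of `E_ε` with a unique contributor. -/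
def unp (E : Set Plane) (ε : ℝ) : Set Plane :=
  {x ∈ frontier (eNbhd E ε) | ∃ y, contributors E ε x = {y}}

/-- A boundary point `x ∈ ∂E_ε` is smooth if `x ∈ Unp(E)` and a whole neighbourhood of
`x` on the boundary consists of points of `Unp(E)`. -/
def IsSmoothPt (E : Set Plane) (ε : ℝ) (x : Plane) : Prop :=
  x ∈ unp E ε ∧ ∃ r > 0, frontier (eNbhd E ε) ∩ ball x r ⊆ unp E ε

/-- A singularity: a non-smooth boundary point of `E_ε`. -/
def IsSingularity (E : Set Plane) (ε : ℝ) (x : Plane) : Prop :=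
  x ∈ frontier (eNbhd E ε) ∧ ¬ IsSmoothPt E ε x

/-- The open half-ball of radius `r` at `x` in direction `v`. -/
def halfBall (x v : Plane) (r : ℝ) : Set Plane :=
  {z ∈ ball x r | 0 < ⟪z - x, v⟫}

/-- `V` is a connected component of the complement of `E_ε`. -/
def IsCompOfCompl (E : Set Plane) (ε : ℝ) (V : Set Plane) : Prop :=
  ∃ z, z ∉ eNbhd E ε ∧ V = connectedComponentIn (eNbhd E ε)ᶜ z

/-- The closed geodesic arc-segment between `v, w ∈ S¹`. -/
def arcSeg (v w : Plane) : Set Plane :=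
  {u | ‖u‖ = 1 ∧ ∃ a b : ℝ, 0 ≤ a ∧ 0 ≤ b ∧ u = a • v + b • w}

/-- The open geodesic arc-segment between `v, w ∈ S¹`. -/
def openArc (v w : Plane) : Set Plane :=
  arcSeg v w \ {v, w}

/-- A chain sequence for `x`: a sequence of singularities converging to `x` whose
extremal contributors become increasingly opposed. -/
def IsChainSeq (E : Set Plane) (ε : ℝ) (x : Plane) (u : ℕ → Plane) : Prop :=
  (∀ n, IsSingularity E ε (u n)) ∧ (∀ n, u n ≠ x) ∧ Tendsto u atTop (nhds x) ∧
  ∃ y1 y2 : ℕ → Plane, (∀ n, extContrib E ε (u n) = {y1 n, y2 n}) ∧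
    Tendsto (fun n => ⟪ε⁻¹ • (y1 n - u n), ε⁻¹ • (y2 n - u n)⟫) atTop (nhds (-1))

/-- Type S1: wedge. -/
def IsWedge (E : Set Plane) (ε : ℝ) (x : Plane) : Prop :=
  IsSingularity E ε x ∧
  ∃ ξ₁ ξ₂, extOutward E ε x = {ξ₁, ξ₂} ∧ ξ₁ ≠ ξ₂ ∧ ξ₁ ≠ -ξ₂

/-- Type S2: one-sided sharp singularity. -/
def IsSharp (E : Set Plane) (ε : ℝ) (x : Plane) : Prop :=
  IsSingularity E ε x ∧ (∃ ξ, extOutward E ε x = {ξ}) ∧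
  ∃ δ > 0, IsConnected (ball x δ ∩ (eNbhd E ε)ᶜ)

/-- Type S3: sharp-sharp singularity. -/
def IsSharpSharp (E : Set Plane) (ε : ℝ) (x : Plane) : Prop :=
  IsSingularity E ε x ∧ ∃ ξ, extOutward E ε x = {ξ, -ξ} ∧
    ∀ η ∈ ({ξ, -ξ} : Set Plane), ∃ δ > 0, IsConnected (halfBall x η δ ∩ (eNbhd E ε)ᶜ)

/-- Type S4: one-sided shallow singularity. -/
def IsShallow (E : Set Plane) (ε : ℝ) (x : Plane) : Prop :=
  IsSingularity E ε x ∧ x ∈ unp E ε ∧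
  ∃ ξ₁ ξ₂, extOutward E ε x = {ξ₁, ξ₂} ∧
    (∃ δ > 0, halfBall x ξ₁ δ ∩ frontier (eNbhd E ε) ⊆ unp E ε) ∧
    (∀ δ > 0, ¬ (halfBall x ξ₂ δ ∩ frontier (eNbhd E ε) ⊆ unp E ε))

/-- Type S5: shallow-shallow singularity. -/
def IsShallowShallow (E : Set Plane) (ε : ℝ) (x : Plane) : Prop :=
  IsSingularity E ε x ∧ x ∈ unp E ε ∧
  ∃ ξ₁ ξ₂, extOutward E ε x = {ξ₁, ξ₂} ∧
    ∀ η ∈ ({ξ₁, ξ₂} : Set Plane), ∀ δ > 0,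
      ¬ (halfBall x η δ ∩ frontier (eNbhd E ε) ⊆ unp E ε)

/-- Type S6: one-sided chain singularity. -/
def IsChainSing (E : Set Plane) (ε : ℝ) (x : Plane) : Prop :=
  IsSingularity E ε x ∧ (∃ ξ, extOutward E ε x = {ξ}) ∧
  ∃ u, IsChainSeq E ε x u

/-- Type S7: chain-chain singularity. -/
def IsChainChain (E : Set Plane) (ε : ℝ) (x : Plane) : Prop :=
  IsSingularity E ε x ∧ ∃ ξ, extOutward E ε x = {ξ, -ξ} ∧
    ∀ η ∈ ({ξ, -ξ} : Set Plane), ∃ δ > 0, ∃ u,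
      IsChainSeq E ε x u ∧ ∀ n, u n ∈ halfBall x η δ

/-- Type S8: sharp-chain singularity. -/
def IsSharpChain (E : Set Plane) (ε : ℝ) (x : Plane) : Prop :=
  IsSingularity E ε x ∧ ∃ ξ, extOutward E ε x = {ξ, -ξ} ∧
    (∃ δ > 0, IsConnected (halfBall x ξ δ ∩ (eNbhd E ε)ᶜ)) ∧
    (∃ δ > 0, ∃ u, IsChainSeq E ε x u ∧ ∀ n, u n ∈ halfBall x (-ξ) δ)

/-- Sharp-type geometry in the direction `ξ` at `x`: the complement of `E_ε` meets the
half-ball `U_r(x, ξ)` in a single connected component whose boundary contains `x`. -/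
def SharpType (E : Set Plane) (ε : ℝ) (x ξ : Plane) : Prop :=
  ∃ r > 0, ∃ V, IsCompOfCompl E ε V ∧ x ∈ frontier V ∧
    (eNbhd E ε)ᶜ ∩ halfBall x ξ r = V ∩ halfBall x ξ r ∧
    ∀ W, IsCompOfCompl E ε W → (W ∩ halfBall x ξ r).Nonempty → W = V

/-- Chain-type geometry in the direction `ξ` at `x`: a sequence of pairwise disjoint
connected components of the complement contained in the half-ball `U_r(x, ξ)` converges
to `x` in Hausdorff distance, with singularities on their boundaries converging to `x`
whose extremal contributors become increasingly opposed. -/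
def ChainType (E : Set Plane) (ε : ℝ) (x ξ : Plane) : Prop :=
  ∃ r > 0, ∃ Vs : ℕ → Set Plane, ∃ u : ℕ → Plane,
    (∀ n, IsCompOfCompl E ε (Vs n)) ∧
    (Pairwise fun m n => Disjoint (Vs m) (Vs n)) ∧
    (∀ n, Vs n ⊆ halfBall x ξ r) ∧
    Tendsto (fun n => hausdorffDist {x} (Vs n)) atTop (nhds 0) ∧
    (∀ n, IsSingularity E ε (u n)) ∧ (∀ n, u n ∈ frontier (Vs n)) ∧
    Tendsto u atTop (nhds x) ∧
    ∃ y1 y2 : ℕ → Plane, (∀ n, extContrib E ε (u n) = {y1 n, y2 n}) ∧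
      Tendsto (fun n => ⟪ε⁻¹ • (y1 n - u n), ε⁻¹ • (y2 n - u n)⟫) atTop (nhds (-1))

/-!
Write `ζ` for the unit vector pointing from `x` to one of the two opposite contributors; it is
orthogonal to `ξ`. The two circles of radius `ε` around the contributors confine the complement of
`E_ε` near `x`, on the side of `ξ`, to a parabolic cusp tangent to `ξ`. Contributors of points deep
in the cusp are almost parallel to `±ζ`, so the complement meets each line orthogonal to `ξ` in an
interval. Hence the complement in the cusp is connected over every interval contained in its
projection `T` to the `ξ`-axis. If `T` contains all small heights, this gives the sharp type. If
not, `T` has maximal intervals accumulating at `0`, and the complement over each of them is a whole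
component; its topmost boundary point is a singularity, with one extremal contributor close to
direction `ζ` and another close to `-ζ`, which gives the chain type.
-/

section InnerProduct

variable {F : Type*} [NormedAddCommGroup F] [InnerProductSpace ℝ F]

lemma isOpenMap_inner_sub {x ξ : F} (hξ : ξ ≠ 0) :
    IsOpenMap fun z : F => ⟪z - x, ξ⟫ := by
  have hne : innerSL ℝ ξ ≠ 0 := fun h0 => hξ (inner_self_eq_zero.1 (DFunLike.congr_fun h0 ξ))
  have h := ((innerSL ℝ ξ).isOpenMap_of_ne_zero hne).comp (Homeomorph.subRight x).isOpenMap
  simpa only [Function.comp_def, innerSL_apply_apply, real_inner_comm ξ,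
    Homeomorph.coe_subRight] using h

lemma orthonormal_pair_iff {ξ ζ : F} :
    Orthonormal ℝ ![ξ, ζ] ↔ ‖ξ‖ = 1 ∧ ‖ζ‖ = 1 ∧ ⟪ξ, ζ⟫ = 0 := by
  simp [orthonormal_vecCons_iff, and_comm]

lemma orthonormal_pair_neg {ξ ζ : F} (h : Orthonormal ℝ ![ξ, ζ]) : Orthonormal ℝ ![ξ, -ζ] := by
  simpa [orthonormal_pair_iff] using h

variable [Fact (Module.finrank ℝ F = 2)] {ξ ζ : F}

lemma inner_eq_of_orthonormal_pair (h : Orthonormal ℝ ![ξ, ζ]) (v w : F) :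
    ⟪v, w⟫ = ⟪v, ξ⟫ * ⟪w, ξ⟫ + ⟪v, ζ⟫ * ⟪w, ζ⟫ := by
  have hspan : ⊤ ≤ Submodule.span ℝ (range ![ξ, ζ]) :=
    (h.linearIndependent.span_eq_top_of_card_eq_finrank
      (by simp [(Fact.out : Module.finrank ℝ F = 2)])).ge
  simpa [real_inner_comm w] using ((OrthonormalBasis.mk h hspan).sum_inner_mul_inner v w).symm

lemma norm_sq_eq_of_orthonormal_pair (h : Orthonormal ℝ ![ξ, ζ]) (v : F) :
    ‖v‖ ^ 2 = ⟪v, ξ⟫ ^ 2 + ⟪v, ζ⟫ ^ 2 := by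
  rw [← real_inner_self_eq_norm_sq, inner_eq_of_orthonormal_pair h]
  ring

lemma eq_of_inner_eq_of_orthonormal_pair (h : Orthonormal ℝ ![ξ, ζ]) {v w : F}
    (hξ : ⟪v, ξ⟫ = ⟪w, ξ⟫) (hζ : ⟪v, ζ⟫ = ⟪w, ζ⟫) : v = w := by
  refine ext_inner_right ℝ fun u => ?_
  rw [inner_eq_of_orthonormal_pair h v, inner_eq_of_orthonormal_pair h w, hξ, hζ]

lemma tendsto_inner_neg_one_of_orthonormal_pair {ι : Type*} {l : Filter ι} {v w : ι → F}
    (h : Orthonormal ℝ ![ξ, ζ]) (hv : ∀ i, ‖v i‖ = 1) (hw : ∀ i, ‖w i‖ = 1)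
    (hvζ : ∀ i, 0 ≤ ⟪v i, ζ⟫) (hwζ : ∀ i, ⟪w i, ζ⟫ ≤ 0)
    (hvξ : Tendsto (fun i => ⟪v i, ξ⟫) l (𝓝 0)) (hwξ : Tendsto (fun i => ⟪w i, ξ⟫) l (𝓝 0)) :
    Tendsto (fun i => ⟪v i, w i⟫) l (𝓝 (-1)) := by
  have inner_eq (i : ι) : ⟪v i, w i⟫ =
      ⟪v i, ξ⟫ * ⟪w i, ξ⟫ + √(1 - ⟪v i, ξ⟫ ^ 2) * -√(1 - ⟪w i, ξ⟫ ^ 2) := by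
    have hv' : 1 - ⟪v i, ξ⟫ ^ 2 = ⟪v i, ζ⟫ ^ 2 := by
      linarith [norm_sq_eq_of_orthonormal_pair h (v i), congrArg (· ^ 2) (hv i)]
    have hw' : 1 - ⟪w i, ξ⟫ ^ 2 = ⟪w i, ζ⟫ ^ 2 := by
      linarith [norm_sq_eq_of_orthonormal_pair h (w i), congrArg (· ^ 2) (hw i)]
    rw [hv', hw', Real.sqrt_sq (hvζ i), Real.sqrt_sq_eq_abs, abs_of_nonpos (hwζ i), neg_neg,
      inner_eq_of_orthonormal_pair h]
  simp only [inner_eq]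
  have hlim := (hvξ.mul hwξ).add ((hvξ.pow 2).const_sub 1 |>.sqrt.mul
    ((hwξ.pow 2).const_sub 1).sqrt.neg)
  simpa using hlim

end InnerProduct

section Connectedness

variable {X Y : Type*} [TopologicalSpace X] [TopologicalSpace Y]

lemma isPreconnected_of_isOpenMap_of_fibers {f : X → Y} (hf : IsOpenMap f) {W : Set X}
    (hW : IsOpen W) (hfiber : ∀ y, IsPreconnected (W ∩ f ⁻¹' {y}))
    (himage : IsPreconnected (f '' W)) : IsPreconnected W := by
  rintro u v hu hv hcover ⟨p, hpW, hpu⟩ ⟨q, hqW, hqv⟩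
  obtain ⟨y, -, ⟨p', ⟨hp'W, hp'u⟩, rfl⟩, ⟨q', ⟨hq'W, hq'v⟩, hq'⟩⟩ :=
    himage (f '' (W ∩ u)) (f '' (W ∩ v)) (hf _ (hW.inter hu)) (hf _ (hW.inter hv))
      (by rw [← image_union, ← inter_union_distrib_left, inter_eq_left.2 hcover])
      ⟨f p, mem_image_of_mem f hpW, mem_image_of_mem f ⟨hpW, hpu⟩⟩
      ⟨f q, mem_image_of_mem f hqW, mem_image_of_mem f ⟨hqW, hqv⟩⟩
  obtain ⟨z, ⟨hzW, -⟩, hz⟩ := hfiber (f p') u v hu hv (inter_subset_left.trans hcover)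
    ⟨p', ⟨hp'W, rfl⟩, hp'u⟩ ⟨q', ⟨hq'W, hq'⟩, hq'v⟩
  exact ⟨z, hzW, hz⟩

lemma connectedComponentIn_eq_of_closure_inter_subset {U W : Set X} {z : X} (hW : IsOpen W)
    (hconn : IsPreconnected W) (hWU : W ⊆ U) (hz : z ∈ W) (hclosed : closure W ∩ U ⊆ W) :
    connectedComponentIn U z = W :=
  (isPreconnected_connectedComponentIn.subset_of_closure_inter_subset hW
    ⟨z, mem_connectedComponentIn (hWU hz), hz⟩
    ((inter_subset_inter_right _ (connectedComponentIn_subset U z)).trans hclosed)).antisymm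
    (hconn.subset_connectedComponentIn hz hWU)

end Connectedness

lemma hausdorffDist_singleton_le {X : Type*} [PseudoMetricSpace X] {x : X} {s : Set X} {r : ℝ}
    (hs : s.Nonempty) (h : ∀ z ∈ s, dist z x ≤ r) : hausdorffDist {x} s ≤ r := by
  obtain ⟨z, hz⟩ := hs
  refine hausdorffDist_le_of_mem_dist (dist_nonneg.trans (h z hz)) ?_
    fun w hw => ⟨x, rfl, h w hw⟩
  rintro _ rfl
  exact ⟨z, hz, dist_comm z _ ▸ h z hz⟩

lemma mem_uIcc_of_abs_sub_lt_abs_sub {α : Type*} [AddCommGroup α] [LinearOrder α]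
    [IsOrderedAddMonoid α] {q s a b : α} (hs : s ∈ uIcc a b) (ha : |q - s| < |q - a|)
    (hb : |q - s| < |q - b|) : q ∈ uIcc a b := by
  wlog hab : a ≤ b generalizing a b
  · exact uIcc_comm b a ▸ this (uIcc_comm a b ▸ hs) hb ha (le_of_not_ge hab)
  rw [uIcc_of_le hab] at hs ⊢
  constructor
  · by_contra! hqa
    rw [abs_sub_comm, abs_sub_comm q, abs_of_pos (sub_pos.2 (hqa.trans_le hs.1)),
      abs_of_pos (sub_pos.2 hqa)] at ha
    exact ha.not_ge (sub_le_sub_right hs.1 q)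
  · by_contra! hbq
    rw [abs_of_pos (sub_pos.2 (hs.2.trans_lt hbq)), abs_of_pos (sub_pos.2 hbq)] at hb
    exact hb.not_ge (sub_le_sub_left hs.2 q)

section MaximalIntervals

/-- `Ioo a b` is a connected component of `T`, in the sense that it is contained in `T` whereas its
end points are not. -/
structure IsMaximalIoo {α : Type*} [Preorder α] (T : Set α) (a b : α) : Prop where
  lt : a < b
  left_notMem : a ∉ T
  right_notMem : b ∉ T
  subset : Ioo a b ⊆ T

section LinearOrder

variable {α : Type*} [LinearOrder α]

lemma IsMaximalIoo.disjoint {T : Set α} {a b a' b' : α} (h : IsMaximalIoo T a b)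
    (h' : IsMaximalIoo T a' b') (hb : b ≠ b') : Disjoint (Ioo a b) (Ioo a' b') := by
  wlog hlt : b < b' generalizing a b a' b'
  · exact (this h' h hb.symm (hb.lt_or_gt.resolve_left hlt)).symm
  have hle : b ≤ a' := le_of_not_gt fun h_lt => h.right_notMem (h'.subset ⟨h_lt, hlt⟩)
  exact disjoint_left.2 fun τ hτ hτ' => (hτ.2.trans_le hle).not_gt hτ'.1

lemma exists_strictAnti_tendsto_of_frequently_nhdsGT [TopologicalSpace α] [OrderTopology α]
    [FirstCountableTopology α] {p : α → Prop} {c : α} (h : ∃ᶠ τ in 𝓝[>] c, p τ) :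
    ∃ b : ℕ → α, StrictAnti b ∧ Tendsto b atTop (𝓝[>] c) ∧ ∀ n, p (b n) := by
  rw [frequently_nhdsWithin_iff] at h
  have hc : IsGLB {τ | p τ ∧ c < τ} c :=
    isGLB_of_mem_closure (fun τ hτ => hτ.2.le) (mem_closure_iff_frequently.2 h)
  obtain ⟨b, hb, hcb, hlim, hmem⟩ :=
    hc.exists_seq_strictAnti_tendsto_of_notMem (fun h => h.2.false) h.exists
  exact ⟨b, hb, tendsto_nhdsWithin_iff.2 ⟨hlim, .of_forall hcb⟩, fun n => (hmem n).1⟩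

end LinearOrder

variable {α : Type*} [ConditionallyCompleteLinearOrder α] [TopologicalSpace α] [OrderTopology α]

lemma exists_isMaximalIoo {T : Set α} (hT : IsOpen T) {p t q : α} (hpt : p ≤ t) (htq : t ≤ q)
    (hp : p ∉ T) (ht : t ∈ T) (hq : q ∉ T) :
    ∃ a b, p ≤ a ∧ b ≤ q ∧ IsMaximalIoo T a b := by
  obtain ⟨a, ⟨⟨hpa, hat⟩, haT⟩, ha⟩ :=
    (isCompact_Icc.inter_right hT.isClosed_compl).exists_isGreatest ⟨p, left_mem_Icc.2 hpt, hp⟩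
  obtain ⟨b, ⟨⟨htb, hbq⟩, hbT⟩, hb⟩ :=
    (isCompact_Icc.inter_right hT.isClosed_compl).exists_isLeast ⟨q, right_mem_Icc.2 htq, hq⟩
  have hat' : a < t := hat.lt_of_ne fun h => haT (h ▸ ht)
  have htb' : t < b := htb.lt_of_ne fun h => hbT (h ▸ ht)
  refine ⟨a, b, hpa, hbq, hat'.trans htb', haT, hbT, fun τ ⟨haτ, hτb⟩ => ?_⟩
  by_contra hτ
  rcases le_total τ t with hτt | htτ
  · exact haτ.not_ge (ha ⟨⟨hpa.trans haτ.le, hτt⟩, hτ⟩)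
  · exact hτb.not_ge (hb ⟨⟨htτ, hτb.le.trans hbq⟩, hτ⟩)

lemma frequently_exists_isMaximalIoo [NoMaxOrder α] {T : Set α}
    (hT : IsOpen T) {c : α} (hmem : ∃ᶠ τ in 𝓝[>] c, τ ∈ T) (hnotMem : ∃ᶠ τ in 𝓝[>] c, τ ∉ T) :
    ∃ᶠ b in 𝓝[>] c, ∃ a, c < a ∧ IsMaximalIoo T a b := by
  rw [(nhdsGT_basis c).frequently_iff] at *
  intro d (hd : c < d)
  obtain ⟨q, ⟨hcq, hqd⟩, hq⟩ := hnotMem d hd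
  obtain ⟨t, ⟨hct, htq⟩, ht⟩ := hmem q hcq
  obtain ⟨p, ⟨hcp, hpt⟩, hp⟩ := hnotMem t hct
  obtain ⟨a, b, hpa, hbq, hab⟩ := exists_isMaximalIoo hT hpt.le htq.le hp ht hq
  have hca := hcp.trans_le hpa
  exact ⟨b, ⟨hca.trans hab.lt, hbq.trans_lt hqd⟩, a, hca, hab⟩

end MaximalIntervals

section Neighbourhood

variable {E : Set Plane} {ε : ℝ} {x y z : Plane}

lemma eNbhd_eq_cthickening (hε : 0 < ε) : eNbhd E ε = cthickening ε E := by
  rw [eNbhd, ← thickening_eq_biUnion_ball, closure_thickening hε]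

lemma notMem_eNbhd_iff (hε : 0 < ε) : z ∉ eNbhd E ε ↔ ∀ y ∈ closure E, ε < ‖y - z‖ := by
  rw [eNbhd_eq_cthickening hε, ← cthickening_closure,
    isClosed_closure.cthickening_eq_biUnion_closedBall hε.le]
  simp only [mem_iUnion, exists_prop, mem_closedBall, dist_comm z, dist_eq_norm, not_exists,
    not_and, not_le]

lemma isOpen_compl_eNbhd : IsOpen (eNbhd E ε)ᶜ :=
  isClosed_closure.isOpen_compl

lemma le_norm_sub_of_mem_frontier (hε : 0 < ε) (hx : x ∈ frontier (eNbhd E ε))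
    (hy : y ∈ closure E) : ε ≤ ‖y - x‖ := by
  have hsub : (eNbhd E ε)ᶜ ⊆ {z | ε ≤ ‖y - z‖} :=
    fun z hz => ((notMem_eNbhd_iff hε).1 hz y hy).le
  rw [frontier_eq_closure_inter_closure] at hx
  exact closure_minimal hsub (isClosed_le continuous_const (by fun_prop)) hx.2

lemma mem_contributors_iff (hε : 0 < ε) (hx : x ∈ frontier (eNbhd E ε)) :
    y ∈ contributors E ε x ↔ y ∈ closure E ∧ ‖y - x‖ = ε := by
  refine ⟨fun h => ⟨h.1.1, h.2⟩, fun h => ⟨⟨h.1, fun hint => ?_⟩, h.2⟩⟩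
  have hsub : E ⊆ (ball x ε)ᶜ := fun y hy => by
    simpa [dist_eq_norm] using le_norm_sub_of_mem_frontier hε hx (subset_closure hy)
  have hy := interior_mono hsub hint
  rw [interior_compl, closure_ball x hε.ne'] at hy
  exact hy (mem_closedBall_iff_norm.2 h.2.le)

lemma isCompact_contributors : IsCompact (contributors E ε x) := by
  have h : contributors E ε x = sphere x ε ∩ frontier E := by
    ext y
    exact and_comm.trans (and_congr_left' mem_sphere_iff_norm.symm)
  exact h ▸ (isCompact_sphere x ε).inter_right isClosed_frontier

lemma eventually_lt_norm_sub_of_forall_notMem (hε : 0 < ε) (hx : x ∈ frontier (eNbhd E ε))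
    {F : Set Plane} (hF : IsClosed F) (hdisj : ∀ y ∈ contributors E ε x, y ∉ F) :
    ∀ᶠ z in 𝓝 x, ∀ y ∈ closure E, y ∈ F → ε < ‖y - z‖ := by
  have hclosure : closure (closure E ∩ F) = closure E ∩ F :=
    (isClosed_closure.inter hF).closure_eq
  have hx' : x ∉ eNbhd (closure E ∩ F) ε := by
    rw [notMem_eNbhd_iff hε, hclosure]
    rintro y ⟨hyE, hyF⟩
    exact (le_norm_sub_of_mem_frontier hε hx hyE).lt_of_ne fun h =>
      hdisj y ((mem_contributors_iff hε hx).2 ⟨hyE, h.symm⟩) hyF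
  filter_upwards [isOpen_compl_eNbhd.mem_nhds hx'] with z hz y hyE hyF
  exact (notMem_eNbhd_iff hε).1 hz y (hclosure.symm ▸ ⟨hyE, hyF⟩)

end Neighbourhood

section OutwardDirections

variable {E : Set Plane} {ε : ℝ} {x y v η : Plane}

lemma inner_nonpos_of_mem_outwardDirs (hε : 0 < ε) (hη : η ∈ outwardDirs E ε x)
    (hy : y ∈ contributors E ε x) : ⟪y - x, η⟫ ≤ 0 := by
  obtain ⟨-, u, hu, hux, hdir⟩ := hη
  have hlt (n : ℕ) : ⟪y - x, ‖u n - x‖⁻¹ • (u n - x)⟫ ≤ ‖u n - x‖ / 2 := by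
    have hyu : ‖y - x‖ ^ 2 < ‖(y - x) - (u n - x)‖ ^ 2 := by
      rw [sub_sub_sub_cancel_right, hy.2]
      exact pow_lt_pow_left₀ ((notMem_eNbhd_iff hε).1 (hu n) y hy.1.1) hε.le two_ne_zero
    rw [norm_sub_sq_real (y - x)] at hyu
    rcases (norm_nonneg (u n - x)).eq_or_lt with h0 | h0
    · simp [← h0]
    · rw [real_inner_smul_right, inv_mul_le_iff₀ h0]
      linarith
  have hlim : Tendsto (fun n => ‖u n - x‖ / 2) atTop (𝓝 0) := by
    simpa using ((hux.sub_const x).norm.div_const 2)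
  exact le_of_tendsto_of_tendsto' (tendsto_const_nhds.inner hdir) hlim hlt

lemma eventually_add_smul_notMem_eNbhd (hε : 0 < ε) (hx : x ∈ frontier (eNbhd E ε))
    (hv : ∀ y ∈ contributors E ε x, ⟪y - x, v⟫ < 0) :
    ∀ᶠ δ in 𝓝[>] (0 : ℝ), x + δ • v ∉ eNbhd E ε := by
  have hfar := eventually_lt_norm_sub_of_forall_notMem hε hx (F := {y | 0 ≤ ⟪y - x, v⟫})
    (isClosed_le continuous_const (by fun_prop)) fun y hy => (hv y hy).not_ge
  have hlim : Tendsto (fun δ : ℝ => x + δ • v) (𝓝[>] 0) (𝓝 x) :=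
    tendsto_nhdsWithin_of_tendsto_nhds (Continuous.tendsto' (by fun_prop) _ _ (by simp))
  filter_upwards [hlim.eventually hfar, self_mem_nhdsWithin] with δ hδ (hδ0 : 0 < δ)
  refine (notMem_eNbhd_iff hε).2 fun y hy => ?_
  rcases le_or_gt 0 ⟪y - x, v⟫ with h | h
  · exact hδ y hy h
  · refine (le_norm_sub_of_mem_frontier hε hx hy).trans_lt
      (lt_of_pow_lt_pow_left₀ 2 (norm_nonneg _) ?_)
    rw [← sub_sub, norm_sub_sq_real (y - x), real_inner_smul_right]
    nlinarith [sq_nonneg ‖δ • v‖, mul_pos_of_neg_of_neg h (neg_lt_zero.2 hδ0)]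

lemma exists_contributor_inner_nonneg (hε : 0 < ε) (hx : x ∈ frontier (eNbhd E ε))
    (hv : ∃ᶠ δ in 𝓝[>] (0 : ℝ), x + δ • v ∈ eNbhd E ε) :
    ∃ y ∈ contributors E ε x, 0 ≤ ⟪y - x, v⟫ := by
  by_contra! h
  exact hv (eventually_add_smul_notMem_eNbhd hε hx h)

lemma inv_norm_smul_mem_outwardDirs (hε : 0 < ε) (hx : x ∈ frontier (eNbhd E ε)) (hv0 : v ≠ 0)
    (hv : v ∈ closure {w | ∀ y ∈ contributors E ε x, ⟪y - x, w⟫ < 0}) :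
    ‖v‖⁻¹ • v ∈ outwardDirs E ε x := by
  obtain ⟨w, hw, hwv⟩ := mem_closure_iff_seq_limit.1 hv
  choose δ hδ hδ0 hδ1 using fun n : ℕ => ((eventually_add_smul_notMem_eNbhd hε hx (hw n)).and
    (Ioo_mem_nhdsGT (Nat.one_div_pos_of_nat (α := ℝ) (n := n)))).exists
  have hδlim : Tendsto δ atTop (𝓝 0) :=
    squeeze_zero (fun n => (hδ0 n).le) (fun n => (hδ1 n).le) tendsto_one_div_add_atTop_nhds_zero_nat
  refine ⟨by simp [norm_smul, hv0], fun n => x + δ n • w n, hδ, ?_, ?_⟩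
  · simpa using (hδlim.smul hwv).const_add x
  · have hdir (n : ℕ) : ‖x + δ n • w n - x‖⁻¹ • (x + δ n • w n - x) = ‖w n‖⁻¹ • w n := by
      rw [add_sub_cancel_left, norm_smul, Real.norm_of_nonneg (hδ0 n).le, smul_smul, mul_inv_rev,
        inv_mul_cancel_right₀ (hδ0 n).ne']
    simp only [hdir]
    exact (hwv.norm.inv₀ (norm_ne_zero_iff.2 hv0)).smul hwv

lemma exists_mem_outwardDirs_inner_nonpos (hx : x ∈ eNbhd E ε)
    (hxv : x ∈ closure {z | z ∉ eNbhd E ε ∧ ⟪z - x, v⟫ ≤ 0}) :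
    ∃ η ∈ outwardDirs E ε x, ⟪η, v⟫ ≤ 0 := by
  obtain ⟨u, hu, hux⟩ := mem_closure_iff_seq_limit.1 hxv
  have hu0 (n : ℕ) : ‖u n - x‖ ≠ 0 := fun h =>
    (hu n).1 (sub_eq_zero.1 (norm_eq_zero.1 h) ▸ hx)
  have hunit (n : ℕ) : ‖u n - x‖⁻¹ • (u n - x) ∈ sphere (0 : Plane) 1 := by
    simp [norm_smul, hu0 n]
  obtain ⟨η, hη, φ, hφ, hlim⟩ := (isCompact_sphere (0 : Plane) 1).tendsto_subseq hunit
  refine ⟨η, ⟨mem_sphere_zero_iff_norm.1 hη, u ∘ φ, fun n => (hu _).1,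
    hux.comp hφ.tendsto_atTop, hlim⟩, le_of_tendsto' (hlim.inner tendsto_const_nhds) fun n => ?_⟩
  simp only [Function.comp_apply, real_inner_smul_left]
  exact mul_nonpos_of_nonneg_of_nonpos (by positivity) (hu _).2

lemma mem_closure_of_mem_outwardDirs (hη : η ∈ outwardDirs E ε x) :
    x ∈ closure {z | z ∉ eNbhd E ε ∧ 0 < ⟪z - x, η⟫} := by
  obtain ⟨hη1, u, hu, hux, hdir⟩ := hη
  have hpos : ∀ᶠ n in atTop, 0 < ⟪‖u n - x‖⁻¹ • (u n - x), η⟫ :=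
    (hdir.inner tendsto_const_nhds).eventually_const_lt (by simp [hη1])
  refine mem_closure_of_tendsto hux (hpos.mono fun n hn => ⟨hu n, ?_⟩)
  rw [real_inner_smul_left] at hn
  exact pos_of_mul_pos_right hn (by positivity)

end OutwardDirections

section PerpSlope

variable {F : Type*} [NormedAddCommGroup F] [InnerProductSpace ℝ F]

/-- The slope, in the coordinates along `ξ` and `ζ`, of the line orthogonal to `v`; it is the junk
value `0` when this line is parallel to `ζ`. -/
def perpSlope (ξ ζ v : F) : ℝ := -⟪v, ξ⟫ / ⟪v, ζ⟫

variable {ξ ζ v w : F}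

lemma perpSlope_neg_right : perpSlope ξ (-ζ) v = -perpSlope ξ ζ v := by
  rw [perpSlope, perpSlope, inner_neg_right, div_neg]

lemma inner_neg_add_smul_eq_mul_perpSlope_sub (hv : ⟪v, ζ⟫ ≠ 0) (m : ℝ) :
    ⟪v, -(ξ + m • ζ)⟫ = ⟪v, ζ⟫ * (perpSlope ξ ζ v - m) := by
  rw [perpSlope, inner_neg_right, inner_add_right, real_inner_smul_right]
  field_simp
  ring

variable [Fact (Module.finrank ℝ F = 2)]

lemma inner_eq_mul_sub_perpSlope_mul (h : Orthonormal ℝ ![ξ, ζ]) (hv : ⟪v, ζ⟫ ≠ 0) :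
    ⟪v, w⟫ = ⟪v, ζ⟫ * (⟪w, ζ⟫ - perpSlope ξ ζ v * ⟪w, ξ⟫) := by
  rw [perpSlope, inner_eq_of_orthonormal_pair h]
  field_simp
  ring

lemma inner_eq_perpSlope_mul (h : Orthonormal ℝ ![ξ, ζ]) (hv : ⟪v, ζ⟫ ≠ 0) (hvw : ⟪v, w⟫ = 0) :
    ⟪w, ζ⟫ = perpSlope ξ ζ v * ⟪w, ξ⟫ := by
  rw [inner_eq_mul_sub_perpSlope_mul h hv] at hvw
  exact sub_eq_zero.1 ((mul_eq_zero_iff_left hv).1 hvw)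

lemma inner_ne_zero_of_inner_eq_zero (h : Orthonormal ℝ ![ξ, ζ]) (hv : ⟪v, ζ⟫ ≠ 0) (hw : w ≠ 0)
    (hvw : ⟪v, w⟫ = 0) : ⟪w, ξ⟫ ≠ 0 := by
  intro hwξ
  have hwζ : ⟪w, ζ⟫ = 0 := by
    simpa [inner_eq_of_orthonormal_pair h v w, hwξ, hv] using hvw
  exact hw (eq_of_inner_eq_of_orthonormal_pair h (by simp [hwξ]) (by simp [hwζ]))

lemma eq_of_perpSlope_eq (h : Orthonormal ℝ ![ξ, ζ]) (hv : 0 < ⟪v, ζ⟫) (hw : 0 < ⟪w, ζ⟫)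
    (hnorm : ‖v‖ = ‖w‖) (hslope : perpSlope ξ ζ v = perpSlope ξ ζ w) : v = w := by
  have hinner {u : F} (hu : 0 < ⟪u, ζ⟫) : ⟪u, ξ⟫ = -(perpSlope ξ ζ u * ⟪u, ζ⟫) := by
    rw [perpSlope, div_mul_cancel₀ _ hu.ne', neg_neg]
  have hsq {u : F} (hu : 0 < ⟪u, ζ⟫) : ‖u‖ ^ 2 = (perpSlope ξ ζ u ^ 2 + 1) * ⟪u, ζ⟫ ^ 2 := by
    rw [norm_sq_eq_of_orthonormal_pair h, hinner hu]
    ring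
  have hζ : ⟪v, ζ⟫ = ⟪w, ζ⟫ := by
    refine (pow_left_inj₀ hv.le hw.le two_ne_zero).1 ?_
    refine mul_left_cancel₀ (by positivity : perpSlope ξ ζ w ^ 2 + 1 ≠ 0) ?_
    rw [← hsq hw, ← hslope, ← hsq hv, hnorm]
  exact eq_of_inner_eq_of_orthonormal_pair h (by rw [hinner hv, hinner hw, hslope, hζ]) hζ

end PerpSlope

instance : Fact (Module.finrank ℝ Plane = 2) := ⟨finrank_euclideanSpace_fin⟩

section ExtremalContributors

variable {E : Set Plane} {ε : ℝ} {u ξ ζ : Plane}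

lemma isSingularity_of_mem_contributors (hu : u ∈ frontier (eNbhd E ε)) {p q : Plane}
    (hp : p ∈ contributors E ε u) (hq : q ∈ contributors E ε u) (hpq : p ≠ q) :
    IsSingularity E ε u := by
  refine ⟨hu, fun ⟨⟨_, y, hy⟩, _⟩ => hpq ?_⟩
  rw [hy] at hp hq
  exact hp.trans hq.symm

lemma inner_le_perpSlope_mul (hε : 0 < ε) (h : Orthonormal ℝ ![ξ, ζ]) {η y : Plane}
    (hη : η ∈ outwardDirs E ε u) (hy : y ∈ contributors E ε u) (hyζ : 0 < ⟪y - u, ζ⟫) :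
    ⟪η, ζ⟫ ≤ perpSlope ξ ζ (y - u) * ⟪η, ξ⟫ := by
  have hpolar := inner_nonpos_of_mem_outwardDirs hε hη hy
  rw [inner_eq_mul_sub_perpSlope_mul h hyζ.ne'] at hpolar
  exact sub_nonpos.1 (nonpos_of_mul_nonpos_right hpolar hyζ)

lemma perpSlope_mul_le_inner (hε : 0 < ε) (h : Orthonormal ℝ ![ξ, ζ]) {η y : Plane}
    (hη : η ∈ outwardDirs E ε u) (hy : y ∈ contributors E ε u) (hyζ : ⟪y - u, ζ⟫ < 0) :
    perpSlope ξ ζ (y - u) * ⟪η, ξ⟫ ≤ ⟪η, ζ⟫ := by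
  have hpolar := inner_nonpos_of_mem_outwardDirs hε hη hy
  rw [inner_eq_mul_sub_perpSlope_mul h hyζ.ne] at hpolar
  exact sub_nonneg.1 (nonneg_of_mul_nonpos_right hpolar hyζ)

lemma eq_of_mem_extContrib (hε : 0 < ε) (h : Orthonormal ℝ ![ξ, ζ]) {b y y' : Plane}
    (hb : b ∈ contributors E ε u) (hbζ : ⟪b - u, ζ⟫ < 0)
    (hy : y ∈ extContrib E ε u) (hyζ : 0 < ⟪y - u, ζ⟫)
    (hy' : y' ∈ extContrib E ε u) (hy'ζ : 0 < ⟪y' - u, ζ⟫) : y = y' := by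
  obtain ⟨hyC, η, hη, hyη⟩ := hy
  obtain ⟨hyC', η', hη', hyη'⟩ := hy'
  have hη0 := inner_ne_zero_of_inner_eq_zero h hyζ.ne' (norm_ne_zero_iff.1 (by simp [hη.1])) hyη
  have hη'0 := inner_ne_zero_of_inner_eq_zero h hy'ζ.ne' (norm_ne_zero_iff.1 (by simp [hη'.1])) hyη'
  have hslope := inner_eq_perpSlope_mul h hyζ.ne' hyη
  have hslope' := inner_eq_perpSlope_mul h hy'ζ.ne' hyη'
  have hle := inner_le_perpSlope_mul hε h hη hyC' hy'ζ
  have hle' := inner_le_perpSlope_mul hε h hη' hyC hyζ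
  have hge := perpSlope_mul_le_inner hε h hη hb hbζ
  have hge' := perpSlope_mul_le_inner hε h hη' hb hbζ
  rw [hslope] at hle hge
  rw [hslope'] at hle' hge'
  refine sub_left_injective (b := u) (eq_of_perpSlope_eq h hyζ hy'ζ (hyC.2.trans hyC'.2.symm) ?_)
  rcases hη0.lt_or_gt with h1 | h1 <;> rcases hη'0.lt_or_gt with h2 | h2 <;>
    simp only [mul_le_mul_right_of_neg, mul_le_mul_iff_left₀, h1, h2] at hle hle' hge hge' <;>
    linarith

lemma inner_neg_add_smul_neg_of_forall_perpSlope {C : Set Plane} (hC : ∀ y ∈ C, ⟪y - u, ζ⟫ ≠ 0)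
    {m : ℝ} (hupper : ∀ y ∈ C, 0 < ⟪y - u, ζ⟫ → perpSlope ξ ζ (y - u) < m)
    (hlower : ∀ y ∈ C, ⟪y - u, ζ⟫ < 0 → m < perpSlope ξ ζ (y - u)) :
    ∀ y ∈ C, ⟪y - u, -(ξ + m • ζ)⟫ < 0 := by
  intro y hy
  rw [inner_neg_add_smul_eq_mul_perpSlope_sub (hC y hy)]
  rcases (hC y hy).lt_or_gt with hyζ | hyζ
  · exact mul_neg_of_neg_of_pos hyζ (sub_pos.2 (hlower y hy hyζ))
  · exact mul_neg_of_pos_of_neg hyζ (sub_neg.2 (hupper y hy hyζ))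

lemma mem_extContrib_of_perpSlope_lt (hε : 0 < ε) (hu : u ∈ frontier (eNbhd E ε))
    (h : Orthonormal ℝ ![ξ, ζ]) (hC : ∀ y ∈ contributors E ε u, ⟪y - u, ζ⟫ ≠ 0) {a : Plane} {m : ℝ}
    (ha : a ∈ contributors E ε u) (ham : perpSlope ξ ζ (a - u) < m)
    (hupper : ∀ y ∈ contributors E ε u, 0 < ⟪y - u, ζ⟫ →
      perpSlope ξ ζ (y - u) ≤ perpSlope ξ ζ (a - u))
    (hlower : ∀ y ∈ contributors E ε u, ⟪y - u, ζ⟫ < 0 → m ≤ perpSlope ξ ζ (y - u)) :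
    a ∈ extContrib E ε u := by
  obtain ⟨hξ, -, hξζ⟩ := orthonormal_pair_iff.1 h
  set v := -(ξ + perpSlope ξ ζ (a - u) • ζ) with hv
  have hv0 : v ≠ 0 := fun h0 => by
    have := congrArg (⟪·, ξ⟫) h0
    simp [hv, inner_add_left, real_inner_smul_left, real_inner_comm ξ ζ, hξζ, hξ] at this
  have hvclosure : v ∈ closure {w | ∀ y ∈ contributors E ε u, ⟪y - u, w⟫ < 0} := by
    refine map_mem_closure (f := fun m : ℝ => -(ξ + m • ζ)) (s := Ioo (perpSlope ξ ζ (a - u)) m)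
      (by fun_prop) ?_ fun m' hm' => ?_
    · rw [closure_Ioo ham.ne]
      exact left_mem_Icc.2 ham.le
    · exact inner_neg_add_smul_neg_of_forall_perpSlope hC
        (fun y hy hyζ => (hupper y hy hyζ).trans_lt hm'.1)
        (fun y hy hyζ => hm'.2.trans_le (hlower y hy hyζ))
  refine ⟨ha, ‖v‖⁻¹ • v, inv_norm_smul_mem_outwardDirs hε hu hv0 hvclosure, ?_⟩
  rw [real_inner_smul_right, hv, inner_neg_add_smul_eq_mul_perpSlope_sub (hC a ha), sub_self,
    mul_zero, mul_zero]

lemma exists_isMaxOn_perpSlope (hC : ∀ y ∈ contributors E ε u, ⟪y - u, ζ⟫ ≠ 0)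
    (hupper : ∃ y ∈ contributors E ε u, 0 < ⟪y - u, ζ⟫) :
    ∃ a ∈ contributors E ε u, 0 < ⟪a - u, ζ⟫ ∧ ∀ y ∈ contributors E ε u, 0 < ⟪y - u, ζ⟫ →
      perpSlope ξ ζ (y - u) ≤ perpSlope ξ ζ (a - u) := by
  have hcompact : IsCompact (contributors E ε u ∩ {y | 0 ≤ ⟪y - u, ζ⟫}) :=
    isCompact_contributors.inter_right (isClosed_le continuous_const (by fun_prop))
  have hcont : ContinuousOn (fun y => perpSlope ξ ζ (y - u))
      (contributors E ε u ∩ {y | 0 ≤ ⟪y - u, ζ⟫}) := by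
    unfold perpSlope
    exact ContinuousOn.div (by fun_prop) (by fun_prop) fun y hy => hC y hy.1
  obtain ⟨y₀, hy₀, hy₀ζ⟩ := hupper
  obtain ⟨a, ⟨haC, haζ⟩, hmax⟩ := hcompact.exists_isMaxOn ⟨y₀, hy₀, hy₀ζ.le⟩ hcont
  exact ⟨a, haC, haζ.lt_of_ne' (hC a haC), fun y hy hyζ => hmax ⟨hy, hyζ.le⟩⟩

lemma exists_mem_extContrib_inner_pos (hε : 0 < ε) (hu : u ∈ frontier (eNbhd E ε))
    (h : Orthonormal ℝ ![ξ, ζ]) (hC : ∀ y ∈ contributors E ε u, ⟪y - u, ζ⟫ ≠ 0)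
    (hupper : ∃ y ∈ contributors E ε u, 0 < ⟪y - u, ζ⟫)
    (hlower : ∃ y ∈ contributors E ε u, ⟪y - u, ζ⟫ < 0)
    (hout : ∃ η ∈ outwardDirs E ε u, ⟪η, ξ⟫ ≤ 0) :
    ∃ a ∈ extContrib E ε u, 0 < ⟪a - u, ζ⟫ := by
  obtain ⟨a, haC, haζ, hmax⟩ := exists_isMaxOn_perpSlope (ξ := ξ) hC hupper
  obtain ⟨b, hbC, hbζ, hmin⟩ := exists_isMaxOn_perpSlope (ξ := ξ) (ζ := -ζ) (E := E) (ε := ε)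
    (u := u) (by simpa only [inner_neg_right, neg_ne_zero])
    (by simpa only [inner_neg_right, neg_pos])
  simp only [inner_neg_right, neg_pos, perpSlope_neg_right, neg_le_neg_iff] at hbζ hmin
  rcases lt_or_ge (perpSlope ξ ζ (a - u)) (perpSlope ξ ζ (b - u)) with hab | hba
  · exact ⟨a, mem_extContrib_of_perpSlope_lt hε hu h hC haC hab hmax hmin, haζ⟩
  · obtain ⟨η, hη, hηξ⟩ := hout
    have hηa := inner_le_perpSlope_mul hε h hη haC haζ
    have hbη := perpSlope_mul_le_inner hε h hη hbC hbζ
    have hηeq : ⟪η, ζ⟫ = perpSlope ξ ζ (a - u) * ⟪η, ξ⟫ :=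
      hηa.antisymm ((mul_le_mul_of_nonpos_right hba hηξ).trans hbη)
    refine ⟨a, ⟨haC, η, hη, ?_⟩, haζ⟩
    rw [inner_eq_mul_sub_perpSlope_mul h haζ.ne', hηeq, sub_self, mul_zero]

lemma exists_extContrib_eq_pair (hε : 0 < ε) (hu : u ∈ frontier (eNbhd E ε))
    (h : Orthonormal ℝ ![ξ, ζ]) (hC : ∀ y ∈ contributors E ε u, ⟪y - u, ζ⟫ ≠ 0)
    (hupper : ∃ y ∈ contributors E ε u, 0 < ⟪y - u, ζ⟫)
    (hlower : ∃ y ∈ contributors E ε u, ⟪y - u, ζ⟫ < 0)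
    (hout : ∃ η ∈ outwardDirs E ε u, ⟪η, ξ⟫ ≤ 0) :
    ∃ p q, extContrib E ε u = {p, q} ∧ 0 < ⟪p - u, ζ⟫ ∧ ⟪q - u, ζ⟫ < 0 := by
  obtain ⟨p, hp, hpζ⟩ := exists_mem_extContrib_inner_pos hε hu h hC hupper hlower hout
  have hneg := orthonormal_pair_neg h
  obtain ⟨q, hq, hqζ⟩ := exists_mem_extContrib_inner_pos hε hu hneg
    (by simpa only [inner_neg_right, neg_ne_zero]) (by simpa only [inner_neg_right, neg_pos])
    (by simpa only [inner_neg_right, neg_lt_zero]) hout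
  refine ⟨p, q, Subset.antisymm (fun y hy => ?_) (pair_subset hp hq), hpζ, by simpa using hqζ⟩
  rcases (hC y hy.1).lt_or_gt with hyζ | hyζ
  · rw [← neg_pos, ← inner_neg_right] at hyζ
    exact .inr (eq_of_mem_extContrib hε hneg hp.1 (by simpa using hpζ) hy hyζ hq hqζ)
  · exact .inl (eq_of_mem_extContrib hε h hq.1 (by simpa using hqζ) hy hyζ hp hpζ)

end ExtremalContributors

section GeometryTypes

variable {E : Set Plane} {ε : ℝ} {x ξ : Plane}

lemma IsCompOfCompl.nonempty {V : Set Plane} (hV : IsCompOfCompl E ε V) : V.Nonempty := by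
  obtain ⟨z, hz, rfl⟩ := hV
  exact ⟨z, mem_connectedComponentIn hz⟩

lemma chainType_of_tendsto {V : ℕ → Set Plane} {u p q : ℕ → Plane} {b : ℕ → ℝ} {r : ℝ}
    (hbr : ∀ n, b n < r) (hcomp : ∀ n, IsCompOfCompl E ε (V n))
    (hdisj : Pairwise fun m n => Disjoint (V m) (V n))
    (hV : ∀ n, ∀ z ∈ V n, ‖z - x‖ ≤ b n ∧ 0 < ⟪z - x, ξ⟫) (hb : Tendsto b atTop (𝓝 0))
    (hsing : ∀ n, IsSingularity E ε (u n)) (hu : ∀ n, u n ∈ frontier (V n))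
    (hpq : ∀ n, extContrib E ε (u n) = {p n, q n})
    (hangle : Tendsto (fun n => ⟪ε⁻¹ • (p n - u n), ε⁻¹ • (q n - u n)⟫) atTop (𝓝 (-1))) :
    ChainType E ε x ξ := by
  have hball (n : ℕ) : V n ⊆ closedBall x (b n) :=
    fun z hz => mem_closedBall_iff_norm.2 (hV n z hz).1
  have hub (n : ℕ) : dist (u n) x ≤ b n :=
    closure_minimal (hball n) isClosed_closedBall (frontier_subset_closure (hu n))
  refine ⟨r, dist_nonneg.trans_lt ((hub 0).trans_lt (hbr 0)), V, u, hcomp, hdisj,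
    fun n z hz => ⟨(hball n hz).trans_lt (hbr n), (hV n z hz).2⟩, ?_, hsing, hu,
    tendsto_iff_dist_tendsto_zero.2 (squeeze_zero (fun _ => dist_nonneg) hub hb), p, q, hpq, hangle⟩
  exact squeeze_zero (fun _ => hausdorffDist_nonneg)
    (fun n => hausdorffDist_singleton_le (hcomp n).nonempty (hball n)) hb

theorem not_sharpType_and_chainType : ¬ (SharpType E ε x ξ ∧ ChainType E ε x ξ) := by
  rintro ⟨⟨r, hr, V, -, -, -, hV⟩, ⟨r', -, Vs, -, hcomp, hdisj, hsub, hdist, -⟩⟩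
  have heq : ∀ᶠ n in atTop, Vs n = V := by
    filter_upwards [hdist.eventually_lt_const hr] with n hn
    have hbounded : Bornology.IsBounded (Vs n) := isBounded_ball.subset fun z hz => (hsub n hz).1
    obtain ⟨z, hz, hzx⟩ := exists_dist_lt_of_hausdorffDist_lt (mem_singleton x) hn
      (hausdorffEDist_ne_top_of_nonempty_of_bounded (singleton_nonempty x) (hcomp n).nonempty
        Bornology.isBounded_singleton hbounded)
    exact hV _ (hcomp n) ⟨z, hz, mem_ball'.2 hzx, (hsub n hz).2⟩
  obtain ⟨N, hN⟩ := eventually_atTop.1 heq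
  have hself : Disjoint (Vs N) (Vs N) := by
    simpa only [hN N le_rfl, hN (N + 1) N.le_succ] using hdisj N.lt_succ_self.ne
  exact (hcomp N).nonempty.ne_empty (disjoint_self.1 hself)

end GeometryTypes

section LocalGeometry

/-- The upper half of the parabolic cusp at `x` in the direction `ξ` that two circles of radius `ε`
through `x`, centred at `x ± ε • ζ`, leave free, cut off at height `r`. -/
def cusp (ε : ℝ) (x ξ ζ : Plane) (r : ℝ) : Set Plane :=
  {z | ⟪z - x, ξ⟫ ∈ Ioo 0 r ∧ ε * |⟪z - x, ζ⟫| ≤ ⟪z - x, ξ⟫ ^ 2}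

/-- The part of the complement of the `ε`-neighbourhood within distance `ε` of the line through `x`
orthogonal to `ζ`. -/
def strip (E : Set Plane) (ε : ℝ) (x ζ : Plane) : Set Plane :=
  {z | z ∉ eNbhd E ε ∧ |⟪z - x, ζ⟫| < ε}

/-- The part of the strip lying over a set `I` of heights, a height being a coordinate along `ξ`. -/
def stripOver (E : Set Plane) (ε : ℝ) (x ξ ζ : Plane) (I : Set ℝ) : Set Plane :=
  strip E ε x ζ ∩ (fun z => ⟪z - x, ξ⟫) ⁻¹' I

/-- The projection of the strip to the axis through `x` along `ξ`. -/
def shadow (E : Set Plane) (ε : ℝ) (x ξ ζ : Plane) : Set ℝ :=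
  (fun z => ⟪z - x, ξ⟫) '' strip E ε x ζ

/-- Points of `E` within distance `ε` of the cusp are seen from there in a direction which is almost
parallel to `ζ`, up to an error `η` along `ξ`. -/
def IsNearVertical (E : Set Plane) (ε : ℝ) (x ξ ζ : Plane) (η r : ℝ) : Prop :=
  ∀ z ∈ cusp ε x ξ ζ r, ∀ y ∈ closure E, ‖y - z‖ ≤ ε → |⟪y - z, ξ⟫| ≤ η

/-- An orthonormal frame `(ξ, ζ)` at a boundary point `x`, for which `ξ` is an outward direction and
`x ± ε • ζ` are opposite contributors. -/
structure OpposedFrame (E : Set Plane) (ε : ℝ) (x ξ ζ : Plane) : Prop where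
  pos : 0 < ε
  mem_frontier : x ∈ frontier (eNbhd E ε)
  orthonormal : Orthonormal ℝ ![ξ, ζ]
  add_mem : x + ε • ζ ∈ closure E
  sub_mem : x - ε • ζ ∈ closure E
  outward : ξ ∈ outwardDirs E ε x

variable {E : Set Plane} {ε r τ : ℝ} {x ξ ζ z : Plane}

lemma abs_inner_le_of_mem_cusp (hε : 0 < ε) (hr : r ≤ ε) (hz : z ∈ cusp ε x ξ ζ r) :
    |⟪z - x, ζ⟫| ≤ ⟪z - x, ξ⟫ := by
  obtain ⟨⟨ht0, htr⟩, hs⟩ := hz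
  refine le_of_mul_le_mul_left (hs.trans ?_) hε
  rw [sq]
  exact mul_le_mul_of_nonneg_right (htr.le.trans hr) ht0.le

lemma norm_sub_le_of_mem_cusp (h : Orthonormal ℝ ![ξ, ζ]) (hε : 0 < ε) (hr : r ≤ ε)
    (hz : z ∈ cusp ε x ξ ζ r) : ‖z - x‖ ≤ 2 * ⟪z - x, ξ⟫ := by
  have ht0 := hz.1.1
  have hs := sq_le_sq' (neg_le_of_abs_le (abs_inner_le_of_mem_cusp hε hr hz))
    (le_of_abs_le (abs_inner_le_of_mem_cusp hε hr hz))
  refine le_of_sq_le_sq ?_ (by positivity)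
  rw [norm_sq_eq_of_orthonormal_pair h]
  nlinarith

lemma isOpen_strip : IsOpen (strip E ε x ζ) := by
  have hcont : Continuous fun z => |⟪z - x, ζ⟫| := by fun_prop
  exact isOpen_compl_eNbhd.inter (isOpen_lt hcont continuous_const)

lemma isOpen_stripOver {I : Set ℝ} (hI : IsOpen I) : IsOpen (stripOver E ε x ξ ζ I) :=
  isOpen_strip.inter (hI.preimage (by fun_prop))

lemma halfBall_diff_eNbhd_subset_stripOver (hξ : ‖ξ‖ = 1) (hζ : ‖ζ‖ = 1) (hr : r ≤ ε) :
    (eNbhd E ε)ᶜ ∩ halfBall x ξ r ⊆ stripOver E ε x ξ ζ (Ioo 0 r) := by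
  rintro z ⟨hz, hzr, hz0⟩
  rw [mem_ball_iff_norm] at hzr
  have hlt {v : Plane} (hv : ‖v‖ = 1) : |⟪z - x, v⟫| < r :=
    (abs_real_inner_le_norm _ _).trans_lt (by rwa [hv, mul_one])
  exact ⟨⟨hz, (hlt hζ).trans_le hr⟩, hz0, (le_abs_self _).trans_lt (hlt hξ)⟩

lemma mem_cusp_of_mem_uIcc (hε : 0 < ε) {z₁ z₂ : Plane} (hz₁ : z₁ ∈ cusp ε x ξ ζ r)
    (hz₂ : z₂ ∈ cusp ε x ξ ζ r) (hξ₁ : ⟪z₁ - x, ξ⟫ = ⟪z - x, ξ⟫)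
    (hξ₂ : ⟪z₂ - x, ξ⟫ = ⟪z - x, ξ⟫) (hζ : ⟪z - x, ζ⟫ ∈ uIcc ⟪z₁ - x, ζ⟫ ⟪z₂ - x, ζ⟫) :
    z ∈ cusp ε x ξ ζ r := by
  obtain ⟨ht, hs₁⟩ := hz₁
  have hs₂ := hz₂.2
  rw [hξ₁, ← le_div_iff₀' hε, abs_le] at hs₁
  rw [hξ₂, ← le_div_iff₀' hε, abs_le] at hs₂
  refine ⟨hξ₁ ▸ ht, ?_⟩
  rw [← le_div_iff₀' hε, abs_le]
  exact uIcc_subset_Icc hs₁ hs₂ hζ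

namespace OpposedFrame

lemma ne_zero (h : OpposedFrame E ε x ξ ζ) : ξ ≠ 0 :=
  h.orthonormal.ne_zero 0

lemma mul_abs_inner_lt_sq (h : OpposedFrame E ε x ξ ζ) (hz : z ∉ eNbhd E ε)
    (hzζ : |⟪z - x, ζ⟫| ≤ ε) : ε * |⟪z - x, ζ⟫| < ⟪z - x, ξ⟫ ^ 2 := by
  obtain ⟨-, hζ, hξζ⟩ := orthonormal_pair_iff.1 h.orthonormal
  have hζξ : ⟪ζ, ξ⟫ = 0 := (real_inner_comm _ _).trans hξζ
  have hlt {σ : ℝ} (hσ : x + σ • ζ ∈ closure E) :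
      ε ^ 2 < ⟪z - x, ξ⟫ ^ 2 + (σ - ⟪z - x, ζ⟫) ^ 2 := by
    have hdist := pow_lt_pow_left₀ ((notMem_eNbhd_iff h.pos).1 hz _ hσ) h.pos.le two_ne_zero
    have hdecomp : x + σ • ζ - z = σ • ζ - (z - x) := by abel
    rw [hdecomp, norm_sq_eq_of_orthonormal_pair h.orthonormal] at hdist
    simpa [inner_sub_left (σ • ζ) (z - x), real_inner_smul_left, hζξ, hζ] using hdist
  have hadd := hlt h.add_mem
  have hsub := hlt (σ := -ε) (by simpa only [neg_smul, ← sub_eq_add_neg] using h.sub_mem)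
  have hsq : |⟪z - x, ζ⟫| ^ 2 ≤ ε * |⟪z - x, ζ⟫| := by
    rw [sq]
    exact mul_le_mul_of_nonneg_right hzζ (abs_nonneg _)
  rcases abs_choice ⟪z - x, ζ⟫ with habs | habs <;> rw [habs] at hsq ⊢ <;> linarith

lemma mem_cusp (h : OpposedFrame E ε x ξ ζ) (hz : z ∈ stripOver E ε x ξ ζ (Ioo 0 r)) :
    z ∈ cusp ε x ξ ζ r :=
  ⟨hz.2, (h.mul_abs_inner_lt_sq hz.1.1 hz.1.2.le).le⟩

lemma neg_two_mul_le_inner (h : OpposedFrame E ε x ξ ζ) (hr : r ≤ ε / 4) {y : Plane}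
    (hz : z ∈ cusp ε x ξ ζ r) (hy : y ∈ closure E) (hyz : ‖y - z‖ ≤ ε) :
    -(2 * ⟪z - x, ξ⟫) ≤ ⟪y - x, ξ⟫ := by
  have hε := h.pos
  have hinner : 0 ≤ ⟪y - x, z - x⟫ := by
    have hexpand := norm_sub_sq_real (y - x) (z - x)
    have hle : ‖y - z‖ ^ 2 ≤ ‖y - x‖ ^ 2 :=
      pow_le_pow_left₀ (norm_nonneg _)
        (hyz.trans (le_norm_sub_of_mem_frontier hε h.mem_frontier hy)) 2
    rw [sub_sub_sub_cancel_right] at hexpand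
    linarith [sq_nonneg ‖z - x‖]
  have hyζ : |⟪y - x, ζ⟫| ≤ 2 * ε :=
    calc |⟪y - x, ζ⟫| ≤ ‖y - x‖ * ‖ζ‖ := abs_real_inner_le_norm _ _
      _ = ‖y - x‖ := by rw [(orthonormal_pair_iff.1 h.orthonormal).2.1, mul_one]
      _ ≤ ‖y - z‖ + ‖z - x‖ := norm_sub_le_norm_sub_add_norm_sub _ _ _
      _ ≤ 2 * ε := by
        linarith [norm_sub_le_of_mem_cusp h.orthonormal hε (by linarith) hz, hz.1.2]
  have hprod : ⟪y - x, ζ⟫ * ⟪z - x, ζ⟫ ≤ 2 * ⟪z - x, ξ⟫ ^ 2 :=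
    calc ⟪y - x, ζ⟫ * ⟪z - x, ζ⟫ ≤ |⟪y - x, ζ⟫| * |⟪z - x, ζ⟫| :=
          (le_abs_self _).trans (abs_mul _ _).le
      _ ≤ 2 * ε * |⟪z - x, ζ⟫| := mul_le_mul_of_nonneg_right hyζ (abs_nonneg _)
      _ ≤ 2 * ⟪z - x, ξ⟫ ^ 2 := by linarith [hz.2]
  rw [inner_eq_of_orthonormal_pair h.orthonormal] at hinner
  refine le_of_mul_le_mul_right ?_ hz.1.1
  linarith

lemma eventually_isNearVertical (h : OpposedFrame E ε x ξ ζ) {η : ℝ} (hη : 0 < η) :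
    ∀ᶠ r in 𝓝[>] 0, IsNearVertical E ε x ξ ζ η r := by
  have hfar := eventually_lt_norm_sub_of_forall_notMem h.pos h.mem_frontier
    (F := {y | η ≤ ⟪y - x, ξ⟫}) (isClosed_le continuous_const (by fun_prop)) fun y hy =>
      ((inner_nonpos_of_mem_outwardDirs h.pos h.outward hy).trans_lt hη).not_ge
  obtain ⟨δ, hδ, hball⟩ := eventually_nhds_iff_ball.1 hfar
  have hsmall {c : ℝ} (hc : 0 < c) : ∀ᶠ r in 𝓝[>] (0 : ℝ), r ≤ c :=
    Filter.mem_of_superset (Ioo_mem_nhdsGT hc) fun r hr => hr.2.le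
  filter_upwards [hsmall (c := ε / 4) (by linarith [h.pos]), hsmall (c := δ / 2) (by positivity),
    hsmall (c := η / 3) (by positivity)] with r hrε hrδ hrη z hz y hy hyz
  have hzδ : z ∈ ball x δ := mem_ball_iff_norm.2 <| by
    linarith [norm_sub_le_of_mem_cusp h.orthonormal h.pos (by linarith [h.pos]) hz, hz.1.2]
  have hupper : ⟪y - x, ξ⟫ < η := not_le.1 fun hle => (hball z hzδ y hy hle).not_ge hyz
  have hlower := h.neg_two_mul_le_inner hrε hz hy hyz
  rw [← sub_sub_sub_cancel_right y z x, inner_sub_left, abs_le]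
  constructor <;> linarith [hz.1.1, hz.1.2]

lemma lt_abs_inner_of_norm_sub_le (h : OpposedFrame E ε x ξ ζ)
    (hvert : IsNearVertical E ε x ξ ζ (ε / 4) r) (hr : r ≤ ε / 4) {y : Plane}
    (hz : z ∈ cusp ε x ξ ζ r) (hy : y ∈ closure E) (hyz : ‖y - z‖ ≤ ε) :
    ε / 4 < |⟪y - x, ζ⟫| := by
  have hε := h.pos
  have hξ := hvert z hz y hy hyz
  rw [← sub_sub_sub_cancel_right y z x, inner_sub_left, abs_le] at hξ
  have hξsq : ⟪y - x, ξ⟫ ^ 2 ≤ (ε / 2) ^ 2 :=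
    sq_le_sq' (by linarith [hξ.1, hz.1.1]) (by linarith [hξ.2, hz.1.2])
  have hnorm : ε ^ 2 ≤ ‖y - x‖ ^ 2 :=
    pow_le_pow_left₀ hε.le (le_norm_sub_of_mem_frontier hε h.mem_frontier hy) 2
  rw [norm_sq_eq_of_orthonormal_pair h.orthonormal] at hnorm
  refine lt_of_pow_lt_pow_left₀ 2 (abs_nonneg _) ?_
  rw [sq_abs]
  nlinarith

lemma notMem_eNbhd_of_mem_uIcc (h : OpposedFrame E ε x ξ ζ)
    (hvert : IsNearVertical E ε x ξ ζ (ε / 4) r) (hr : r ≤ ε / 4) (hτ : τ ∈ Ioo 0 r)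
    {z₁ z₂ : Plane} (hz₁ : z₁ ∈ stripOver E ε x ξ ζ {τ}) (hz₂ : z₂ ∈ stripOver E ε x ξ ζ {τ})
    (hzξ : ⟪z - x, ξ⟫ = τ) (hzζ : ⟪z - x, ζ⟫ ∈ uIcc ⟪z₁ - x, ζ⟫ ⟪z₂ - x, ζ⟫) :
    z ∉ eNbhd E ε := by
  have hε := h.pos
  have hcusp {w : Plane} (hw : w ∈ stripOver E ε x ξ ζ {τ}) : w ∈ cusp ε x ξ ζ r :=
    h.mem_cusp ⟨hw.1, singleton_subset_iff.2 hτ hw.2⟩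
  have hz : z ∈ cusp ε x ξ ζ r := mem_cusp_of_mem_uIcc hε (hcusp hz₁) (hcusp hz₂)
    (hz₁.2.trans hzξ.symm) (hz₂.2.trans hzξ.symm) hzζ
  -- A point `y` of `closure E` closer to `z` than to `z₁` and `z₂` has its `ζ`-coordinate between
  -- theirs, contradicting `lt_abs_inner_of_norm_sub_le`.
  refine (notMem_eNbhd_iff hε).2 fun y hy => ?_
  by_contra! hyz
  have hnormsq {w : Plane} (hw : ⟪w - x, ξ⟫ = τ) :
      ‖y - w‖ ^ 2 = (⟪y - x, ξ⟫ - τ) ^ 2 + (⟪y - x, ζ⟫ - ⟪w - x, ζ⟫) ^ 2 := by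
    rw [norm_sq_eq_of_orthonormal_pair h.orthonormal, ← sub_sub_sub_cancel_right y w x,
      inner_sub_left _ _ ξ, inner_sub_left _ _ ζ, hw]
  have hcloser {w : Plane} (hw : w ∈ stripOver E ε x ξ ζ {τ}) :
      |⟪y - x, ζ⟫ - ⟪z - x, ζ⟫| < |⟪y - x, ζ⟫ - ⟪w - x, ζ⟫| := by
    have hlt := pow_lt_pow_left₀ (hyz.trans_lt ((notMem_eNbhd_iff hε).1 hw.1.1 y hy))
      (norm_nonneg _) two_ne_zero
    rw [hnormsq hzξ, hnormsq hw.2] at hlt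
    exact sq_lt_sq.1 (lt_of_add_lt_add_left hlt)
  have hsmall {w : Plane} (hw : w ∈ stripOver E ε x ξ ζ {τ}) :
      ⟪w - x, ζ⟫ ∈ Icc (-(ε / 4)) (ε / 4) :=
    abs_le.1 <| (abs_inner_le_of_mem_cusp hε (by linarith) (hcusp hw)).trans
      ((hcusp hw).1.2.le.trans hr)
  have hy_mem := mem_uIcc_of_abs_sub_lt_abs_sub hzζ (hcloser hz₁) (hcloser hz₂)
  exact (h.lt_abs_inner_of_norm_sub_le hvert hr hz hy hyz).not_ge
    (abs_le.2 (uIcc_subset_Icc (hsmall hz₁) (hsmall hz₂) hy_mem))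

lemma convex_stripOver_singleton (h : OpposedFrame E ε x ξ ζ)
    (hvert : IsNearVertical E ε x ξ ζ (ε / 4) r) (hr : r ≤ ε / 4) (hτ : τ ∈ Ioo 0 r) :
    Convex ℝ (stripOver E ε x ξ ζ {τ}) := by
  intro z₁ hz₁ z₂ hz₂ a b ha hb hab
  have hcomb (v : Plane) :
      ⟪a • z₁ + b • z₂ - x, v⟫ = a • ⟪z₁ - x, v⟫ + b • ⟪z₂ - x, v⟫ := by
    rw [smul_eq_mul, smul_eq_mul, ← real_inner_smul_left, ← real_inner_smul_left, ← inner_add_left,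
      smul_sub, smul_sub, sub_add_sub_comm, ← add_smul, hab, one_smul]
  have hξ : ⟪a • z₁ + b • z₂ - x, ξ⟫ = τ :=
    (hcomb ξ).trans (convex_singleton τ hz₁.2 hz₂.2 ha hb hab)
  have hζ : ⟪a • z₁ + b • z₂ - x, ζ⟫ ∈ uIcc ⟪z₁ - x, ζ⟫ ⟪z₂ - x, ζ⟫ :=
    (hcomb ζ) ▸ convex_uIcc _ _ left_mem_uIcc right_mem_uIcc ha hb hab
  refine ⟨⟨h.notMem_eNbhd_of_mem_uIcc hvert hr hτ hz₁ hz₂ hξ hζ, ?_⟩, hξ⟩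
  exact abs_lt.2 ((convex_Ioo (-ε) ε).ordConnected.uIcc_subset (abs_lt.1 hz₁.1.2)
    (abs_lt.1 hz₂.1.2) hζ)

lemma isPreconnected_stripOver (h : OpposedFrame E ε x ξ ζ)
    (hvert : IsNearVertical E ε x ξ ζ (ε / 4) r) (hr : r ≤ ε / 4) {I : Set ℝ} (hI : IsOpen I)
    (hconn : IsPreconnected I) (hIr : I ⊆ Ioo 0 r) (hshadow : I ⊆ shadow E ε x ξ ζ) :
    IsPreconnected (stripOver E ε x ξ ζ I) := by
  refine isPreconnected_of_isOpenMap_of_fibers (isOpenMap_inner_sub h.ne_zero (x := x))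
    (isOpen_stripOver hI) (fun τ => ?_) ?_
  · rw [stripOver, inter_assoc, ← preimage_inter]
    by_cases hτ : τ ∈ I
    · rw [inter_eq_right.2 (singleton_subset_iff.2 hτ)]
      exact (h.convex_stripOver_singleton hvert hr (hIr hτ)).isPreconnected
    · rw [inter_singleton_eq_empty.2 hτ, preimage_empty, inter_empty]
      exact isPreconnected_empty
  · have himage : shadow E ε x ξ ζ ∩ I = I := inter_eq_right.2 hshadow
    rw [stripOver, image_inter_preimage]
    change IsPreconnected (shadow E ε x ξ ζ ∩ I)
    rwa [himage]

lemma mem_closure_stripOver (h : OpposedFrame E ε x ξ ζ) (hr : 0 < r) :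
    x ∈ closure (stripOver E ε x ξ ζ (Ioo 0 r)) := by
  obtain ⟨hξ, hζ, -⟩ := orthonormal_pair_iff.1 h.orthonormal
  have hmin : 0 < min r ε := lt_min hr h.pos
  have hx := mem_closure_of_mem_outwardDirs h.outward
  rw [mem_closure_iff_frequently] at hx ⊢
  refine (hx.and_eventually (ball_mem_nhds x hmin)).mono fun z ⟨⟨hz, hz0⟩, hzr⟩ => ?_
  obtain ⟨hstrip, hIoo⟩ := halfBall_diff_eNbhd_subset_stripOver hξ hζ (min_le_right r ε)
    ⟨hz, hzr, hz0⟩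
  exact ⟨hstrip, hIoo.1, hIoo.2.trans_le (min_le_left r ε)⟩

lemma frequently_mem_shadow (h : OpposedFrame E ε x ξ ζ) :
    ∃ᶠ τ in 𝓝[>] 0, τ ∈ shadow E ε x ξ ζ := by
  refine (nhdsGT_basis (0 : ℝ)).frequently_iff.2 fun r hr => ?_
  obtain ⟨z, hz⟩ := closure_nonempty_iff.1 ⟨x, h.mem_closure_stripOver hr⟩
  exact ⟨_, hz.2, z, hz.1, rfl⟩

theorem sharpType_of_eventually_mem_shadow (h : OpposedFrame E ε x ξ ζ)
    (hshadow : ∀ᶠ τ in 𝓝[>] 0, τ ∈ shadow E ε x ξ ζ) : SharpType E ε x ξ := by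
  obtain ⟨hξ, hζ, -⟩ := orthonormal_pair_iff.1 h.orthonormal
  have hε4 : 0 < ε / 4 := by linarith [h.pos]
  obtain ⟨ρ, hρ, hρsub⟩ := mem_nhdsGT_iff_exists_Ioo_subset.1 hshadow
  obtain ⟨r, hvert, hr0, hr⟩ := ((h.eventually_isNearVertical hε4).and
    (Ioo_mem_nhdsGT (lt_min hρ hε4))).exists
  have hrε : r ≤ ε / 4 := hr.le.trans (min_le_right _ _)
  have hconn : IsPreconnected (stripOver E ε x ξ ζ (Ioo 0 r)) :=
    h.isPreconnected_stripOver hvert hrε isOpen_Ioo isPreconnected_Ioo subset_rfl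
      ((Ioo_subset_Ioo_right (hr.le.trans (min_le_left _ _))).trans hρsub)
  have hclosure := h.mem_closure_stripOver hr0
  obtain ⟨z₀, hz₀⟩ := closure_nonempty_iff.1 ⟨x, hclosure⟩
  set V := connectedComponentIn (eNbhd E ε)ᶜ z₀ with hV
  have hVsub : V ⊆ (eNbhd E ε)ᶜ := connectedComponentIn_subset _ _
  have hstrip : stripOver E ε x ξ ζ (Ioo 0 r) ⊆ V :=
    hconn.subset_connectedComponentIn hz₀ fun z hz => hz.1.1
  have hhalf : (eNbhd E ε)ᶜ ∩ halfBall x ξ r ⊆ V :=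
    (halfBall_diff_eNbhd_subset_stripOver hξ hζ (by linarith)).trans hstrip
  have hxV : x ∈ frontier V := by
    rw [isOpen_compl_eNbhd.connectedComponentIn.frontier_eq]
    exact ⟨closure_mono hstrip hclosure,
      fun hx => hVsub hx (isClosed_closure.frontier_subset h.mem_frontier)⟩
  refine ⟨r, hr0, V, ⟨z₀, hz₀.1.1, rfl⟩, hxV, ?_, ?_⟩
  · exact (subset_inter hhalf inter_subset_right).antisymm (inter_subset_inter_left _ hVsub)
  · rintro _ ⟨w, -, rfl⟩ ⟨z, hzw, hzr⟩
    have hz := connectedComponentIn_subset _ _ hzw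
    rw [connectedComponentIn_eq hzw, hV, connectedComponentIn_eq (hhalf ⟨hz, hzr⟩)]

lemma isOpen_shadow (h : OpposedFrame E ε x ξ ζ) : IsOpen (shadow E ε x ξ ζ) :=
  isOpenMap_inner_sub h.ne_zero _ isOpen_strip

lemma closure_stripOver_Ioo_subset (h : OpposedFrame E ε x ξ ζ) {a b : ℝ} (ha : 0 < a)
    (hb : b < r) : closure (stripOver E ε x ξ ζ (Ioo a b)) ⊆
      cusp ε x ξ ζ r ∩ {z | ⟪z - x, ξ⟫ ∈ Icc a b} := by
  have hclosed : IsClosed ({z : Plane | ε * |⟪z - x, ζ⟫| ≤ ⟪z - x, ξ⟫ ^ 2} ∩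
      {z | ⟪z - x, ξ⟫ ∈ Icc a b}) :=
    (isClosed_le (by fun_prop) (by fun_prop)).inter (isClosed_Icc.preimage (by fun_prop))
  have hsub : stripOver E ε x ξ ζ (Ioo a b) ⊆
      {z | ε * |⟪z - x, ζ⟫| ≤ ⟪z - x, ξ⟫ ^ 2} ∩ {z | ⟪z - x, ξ⟫ ∈ Icc a b} :=
    fun z hz => ⟨(h.mul_abs_inner_lt_sq hz.1.1 hz.1.2.le).le, Ioo_subset_Icc_self hz.2⟩
  intro z hz
  obtain ⟨hs, hab⟩ := closure_minimal hsub hclosed hz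
  exact ⟨⟨⟨ha.trans_le hab.1, hab.2.trans_lt hb⟩, hs⟩, hab⟩

lemma closure_stripOver_inter_compl_subset (h : OpposedFrame E ε x ξ ζ) (hr : r ≤ ε) {a b : ℝ}
    (hgap : IsMaximalIoo (shadow E ε x ξ ζ) a b) (ha : 0 < a) (hb : b < r) :
    closure (stripOver E ε x ξ ζ (Ioo a b)) ∩ (eNbhd E ε)ᶜ ⊆ stripOver E ε x ξ ζ (Ioo a b) := by
  rintro z ⟨hzW, hz⟩
  obtain ⟨hcusp, hzab⟩ := h.closure_stripOver_Ioo_subset ha hb hzW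
  have hstrip : z ∈ strip E ε x ζ :=
    ⟨hz, (abs_inner_le_of_mem_cusp h.pos hr hcusp).trans_lt (hcusp.1.2.trans_le hr)⟩
  have hmem : ⟪z - x, ξ⟫ ∈ shadow E ε x ξ ζ := ⟨z, hstrip, rfl⟩
  exact ⟨hstrip, hzab.1.lt_of_ne (ne_of_mem_of_not_mem hmem hgap.left_notMem).symm,
    hzab.2.lt_of_ne (ne_of_mem_of_not_mem hmem hgap.right_notMem)⟩

lemma isCompOfCompl_stripOver (h : OpposedFrame E ε x ξ ζ)
    (hvert : IsNearVertical E ε x ξ ζ (ε / 4) r) (hr : r ≤ ε / 4) {a b : ℝ}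
    (hgap : IsMaximalIoo (shadow E ε x ξ ζ) a b) (ha : 0 < a) (hb : b < r) :
    IsCompOfCompl E ε (stripOver E ε x ξ ζ (Ioo a b)) := by
  obtain ⟨τ, hτ⟩ := nonempty_Ioo.2 hgap.lt
  obtain ⟨z, hz, rfl⟩ := hgap.subset hτ
  have hconn := h.isPreconnected_stripOver hvert hr isOpen_Ioo isPreconnected_Ioo
    (Ioo_subset_Ioo ha.le hb.le) hgap.subset
  exact ⟨z, hz.1, (connectedComponentIn_eq_of_closure_inter_subset (isOpen_stripOver isOpen_Ioo)
    hconn (fun w hw => hw.1.1) ⟨hz, hτ⟩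
    (h.closure_stripOver_inter_compl_subset (by linarith [h.pos]) hgap ha hb)).symm⟩

lemma norm_sub_le_of_mem_stripOver (h : OpposedFrame E ε x ξ ζ) {b : ℝ} (hb : b ≤ ε)
    (hz : z ∈ stripOver E ε x ξ ζ (Ioo 0 b)) : ‖z - x‖ ≤ 2 * b :=
  (norm_sub_le_of_mem_cusp h.orthonormal h.pos hb (h.mem_cusp hz)).trans (by linarith [hz.2.2])

lemma exists_mem_closure_stripOver_inner_eq (h : OpposedFrame E ε x ξ ζ) {a b : ℝ} (hab : a < b)
    (hsub : Ioo a b ⊆ shadow E ε x ξ ζ) (ha : 0 < a) (hb : b ≤ ε) :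
    ∃ u ∈ closure (stripOver E ε x ξ ζ (Ioo a b)), ⟪u - x, ξ⟫ = b := by
  have hbounded : Bornology.IsBounded (stripOver E ε x ξ ζ (Ioo a b)) :=
    isBounded_closedBall.subset fun z hz => mem_closedBall_iff_norm.2 <|
      h.norm_sub_le_of_mem_stripOver hb ⟨hz.1, Ioo_subset_Ioo_left ha.le hz.2⟩
  have himage : (fun z => ⟪z - x, ξ⟫) '' stripOver E ε x ξ ζ (Ioo a b) = Ioo a b := by
    rw [stripOver, image_inter_preimage]
    exact inter_eq_right.2 hsub
  have hclosure := image_closure_of_isCompact hbounded.isCompact_closure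
    (f := fun z => ⟪z - x, ξ⟫) (by fun_prop)
  rw [himage, closure_Ioo hab.ne] at hclosure
  exact hclosure.ge (right_mem_Icc.2 hab.le)

lemma inner_ne_zero_of_mem_contributors (h : OpposedFrame E ε x ξ ζ)
    (hvert : IsNearVertical E ε x ξ ζ (ε / 4) r) {u y : Plane} (hu : u ∈ cusp ε x ξ ζ r)
    (hy : y ∈ contributors E ε u) : ⟪y - u, ζ⟫ ≠ 0 := by
  intro hyζ
  have hnorm := norm_sq_eq_of_orthonormal_pair h.orthonormal (y - u)
  rw [hyζ, zero_pow two_ne_zero, add_zero, sq_eq_sq_iff_abs_eq_abs, hy.2, abs_of_pos h.pos] at hnorm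
  linarith [hvert u hu y hy.1.1 hy.2.le, h.pos]

lemma exists_contributor_inner_nonneg_of_notMem_shadow (hε : 0 < ε) {u v : Plane}
    (hu : u ∈ frontier (eNbhd E ε)) (huζ : |⟪u - x, ζ⟫| < ε)
    (hshadow : ⟪u - x, ξ⟫ ∉ shadow E ε x ξ ζ) (hv : ⟪v, ξ⟫ = 0) :
    ∃ y ∈ contributors E ε u, 0 ≤ ⟪y - u, v⟫ := by
  refine exists_contributor_inner_nonneg hε hu (Eventually.frequently ?_)
  have hcont : ContinuousAt (fun δ : ℝ => |⟪u + δ • v - x, ζ⟫|) 0 := by fun_prop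
  have hnear : ∀ᶠ δ in 𝓝 (0 : ℝ), |⟪u + δ • v - x, ζ⟫| < ε :=
    hcont.eventually_lt_const (by simpa using huζ)
  filter_upwards [hnear.filter_mono nhdsWithin_le_nhds] with δ hδ
  by_contra hmem
  refine hshadow ⟨u + δ • v, ⟨hmem, hδ⟩, ?_⟩
  simp [add_sub_right_comm, inner_add_left, real_inner_smul_left, hv]

lemma exists_extContrib_eq_pair_of_notMem_shadow (h : OpposedFrame E ε x ξ ζ)
    (hvert : IsNearVertical E ε x ξ ζ (ε / 4) r) (hr : r ≤ ε) {u : Plane}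
    (hu : u ∈ frontier (eNbhd E ε)) (hucusp : u ∈ cusp ε x ξ ζ r)
    (hshadow : ⟪u - x, ξ⟫ ∉ shadow E ε x ξ ζ) (hout : ∃ η ∈ outwardDirs E ε u, ⟪η, ξ⟫ ≤ 0) :
    ∃ p q, extContrib E ε u = {p, q} ∧ 0 < ⟪p - u, ζ⟫ ∧ ⟪q - u, ζ⟫ < 0 := by
  have huζ : |⟪u - x, ζ⟫| < ε :=
    (abs_inner_le_of_mem_cusp h.pos hr hucusp).trans_lt (hucusp.1.2.trans_le hr)
  have hne (y : Plane) : y ∈ contributors E ε u → ⟪y - u, ζ⟫ ≠ 0 :=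
    h.inner_ne_zero_of_mem_contributors hvert hucusp
  have hζξ : ⟪ζ, ξ⟫ = 0 :=
    (real_inner_comm _ _).trans (orthonormal_pair_iff.1 h.orthonormal).2.2
  obtain ⟨y, hy, hyζ⟩ :=
    exists_contributor_inner_nonneg_of_notMem_shadow h.pos hu huζ hshadow hζξ
  obtain ⟨y', hy', hy'ζ⟩ := exists_contributor_inner_nonneg_of_notMem_shadow h.pos hu huζ
    hshadow (v := -ζ) (by rw [inner_neg_left, hζξ, neg_zero])
  rw [inner_neg_right, neg_nonneg] at hy'ζ
  exact exists_extContrib_eq_pair h.pos hu h.orthonormal hne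
    ⟨y, hy, hyζ.lt_of_ne' (hne y hy)⟩ ⟨y', hy', hy'ζ.lt_of_ne (hne y' hy')⟩ hout

lemma exists_isSingularity_mem_frontier_stripOver (h : OpposedFrame E ε x ξ ζ)
    (hvert : IsNearVertical E ε x ξ ζ (ε / 4) r) (hr : r ≤ ε / 4) {a b : ℝ}
    (hgap : IsMaximalIoo (shadow E ε x ξ ζ) a b) (ha : 0 < a) (hb : b < r) :
    ∃ u p q, u ∈ frontier (stripOver E ε x ξ ζ (Ioo a b)) ∧ u ∈ cusp ε x ξ ζ r ∧
      ⟪u - x, ξ⟫ = b ∧ IsSingularity E ε u ∧ extContrib E ε u = {p, q} ∧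
      0 < ⟪p - u, ζ⟫ ∧ ⟪q - u, ζ⟫ < 0 := by
  have hrε : r ≤ ε := by linarith [h.pos]
  obtain ⟨u, huW, hub⟩ :=
    h.exists_mem_closure_stripOver_inner_eq hgap.lt hgap.subset ha (hb.le.trans hrε)
  have hucusp := (h.closure_stripOver_Ioo_subset ha hb huW).1
  have hunotMem : u ∉ stripOver E ε x ξ ζ (Ioo a b) := fun hu => hu.2.2.ne hub
  have hueNbhd : u ∈ eNbhd E ε := by
    by_contra hu
    exact hunotMem (h.closure_stripOver_inter_compl_subset hrε hgap ha hb ⟨huW, hu⟩)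
  have hfrontier : u ∈ frontier (eNbhd E ε) := by
    rw [frontier_eq_closure_inter_closure]
    exact ⟨subset_closure hueNbhd, closure_mono (fun z hz => hz.1.1) huW⟩
  have hbelow : stripOver E ε x ξ ζ (Ioo a b) ⊆ {z | z ∉ eNbhd E ε ∧ ⟪z - u, ξ⟫ ≤ 0} := by
    refine fun z hz => ⟨hz.1.1, ?_⟩
    rw [← sub_sub_sub_cancel_right z u x, inner_sub_left, hub]
    exact sub_nonpos.2 hz.2.2.le
  have hout : ∃ η ∈ outwardDirs E ε u, ⟪η, ξ⟫ ≤ 0 :=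
    exists_mem_outwardDirs_inner_nonpos hueNbhd (closure_mono hbelow huW)
  obtain ⟨p, q, hpq, hp, hq⟩ := h.exists_extContrib_eq_pair_of_notMem_shadow hvert hrε hfrontier
    hucusp (hub ▸ hgap.right_notMem) hout
  have hpC : p ∈ extContrib E ε u := hpq ▸ mem_insert p {q}
  have hqC : q ∈ extContrib E ε u := hpq ▸ mem_insert_of_mem p rfl
  exact ⟨u, p, q, (isOpen_stripOver isOpen_Ioo).frontier_eq ▸ ⟨huW, hunotMem⟩, hucusp, hub,
    isSingularity_of_mem_contributors hfrontier hpC.1 hqC.1 (by rintro rfl; exact hp.not_gt hq),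
    hpq, hp, hq⟩

lemma tendsto_contributor_inner_zero (h : OpposedFrame E ε x ξ ζ) {ι : Type*} {l : Filter ι}
    {u y : ι → Plane} (hu : ∀ i, u i ∈ cusp ε x ξ ζ r)
    (hlim : Tendsto (fun i => ⟪u i - x, ξ⟫) l (𝓝[>] 0))
    (hy : ∀ i, y i ∈ contributors E ε (u i)) :
    Tendsto (fun i => ⟪y i - u i, ξ⟫) l (𝓝 0) := by
  refine Metric.tendsto_nhds.2 fun η hη => ?_
  obtain ⟨ρ, hvert, hρ⟩ :=
    ((h.eventually_isNearVertical (half_pos hη)).and self_mem_nhdsWithin).exists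
  filter_upwards [hlim.eventually (Ioo_mem_nhdsGT hρ)] with i hi
  rw [Real.dist_eq, sub_zero]
  exact (hvert _ ⟨hi, (hu i).2⟩ _ (hy i).1.1 (hy i).2.le).trans_lt (half_lt_self hη)

lemma tendsto_contributors_inner_neg_one (h : OpposedFrame E ε x ξ ζ) {ι : Type*} {l : Filter ι}
    {u p q : ι → Plane} (hu : ∀ i, u i ∈ cusp ε x ξ ζ r)
    (hlim : Tendsto (fun i => ⟪u i - x, ξ⟫) l (𝓝[>] 0))
    (hp : ∀ i, p i ∈ contributors E ε (u i)) (hq : ∀ i, q i ∈ contributors E ε (u i))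
    (hpζ : ∀ i, 0 ≤ ⟪p i - u i, ζ⟫) (hqζ : ∀ i, ⟪q i - u i, ζ⟫ ≤ 0) :
    Tendsto (fun i => ⟪ε⁻¹ • (p i - u i), ε⁻¹ • (q i - u i)⟫) l (𝓝 (-1)) := by
  have hε := h.pos
  have hunit {y : ι → Plane} (hy : ∀ i, y i ∈ contributors E ε (u i)) (i : ι) :
      ‖ε⁻¹ • (y i - u i)‖ = 1 := by
    rw [norm_smul, (hy i).2, norm_inv, Real.norm_of_nonneg hε.le, inv_mul_cancel₀ hε.ne']
  have hξ {y : ι → Plane} (hy : ∀ i, y i ∈ contributors E ε (u i)) :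
      Tendsto (fun i => ⟪ε⁻¹ • (y i - u i), ξ⟫) l (𝓝 0) := by
    simpa only [real_inner_smul_left, mul_zero] using
      (h.tendsto_contributor_inner_zero hu hlim hy).const_mul ε⁻¹
  refine tendsto_inner_neg_one_of_orthonormal_pair h.orthonormal (hunit hp) (hunit hq)
    (fun i => ?_) (fun i => ?_) (hξ hp) (hξ hq) <;> rw [real_inner_smul_left]
  · exact mul_nonneg (inv_nonneg.2 hε.le) (hpζ i)
  · exact mul_nonpos_of_nonneg_of_nonpos (inv_nonneg.2 hε.le) (hqζ i)

theorem chainType_of_frequently_notMem_shadow (h : OpposedFrame E ε x ξ ζ)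
    (hshadow : ∃ᶠ τ in 𝓝[>] 0, τ ∉ shadow E ε x ξ ζ) : ChainType E ε x ξ := by
  have hε4 : 0 < ε / 4 := by linarith [h.pos]
  obtain ⟨r, hvert, hr0, hr⟩ := ((h.eventually_isNearVertical hε4).and
    (Ioo_mem_nhdsGT hε4)).exists
  have hrε : r ≤ ε := by linarith
  obtain ⟨b, hanti, hb0, hb⟩ := exists_strictAnti_tendsto_of_frequently_nhdsGT
    ((frequently_exists_isMaximalIoo h.isOpen_shadow h.frequently_mem_shadow hshadow).and_eventually
      (Ioo_mem_nhdsGT hr0))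
  choose a ha hgap using fun n => (hb n).1
  have hbr (n : ℕ) : b n < r := (hb n).2.2
  choose u p q huW hucusp hub hsing hpq hp hq using fun n =>
    h.exists_isSingularity_mem_frontier_stripOver hvert hr.le (hgap n) (ha n) (hbr n)
  have hpC (n : ℕ) : p n ∈ contributors E ε (u n) :=
    ((hpq n).symm ▸ mem_insert _ _ : p n ∈ extContrib E ε (u n)).1
  have hqC (n : ℕ) : q n ∈ contributors E ε (u n) :=
    ((hpq n).symm ▸ mem_insert_of_mem _ rfl : q n ∈ extContrib E ε (u n)).1
  have h2b : Tendsto (fun n => 2 * b n) atTop (𝓝 0) := by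
    simpa using (tendsto_nhds_of_tendsto_nhdsWithin hb0).const_mul 2
  have hmono (n : ℕ) : stripOver E ε x ξ ζ (Ioo (a n) (b n)) ⊆ stripOver E ε x ξ ζ (Ioo 0 (b n)) :=
    inter_subset_inter_right _ (preimage_mono (Ioo_subset_Ioo_left (ha n).le))
  refine chainType_of_tendsto (r := 2 * r) (fun n => ?_)
    (fun n => h.isCompOfCompl_stripOver hvert hr.le (hgap n) (ha n) (hbr n)) (fun m n hmn => ?_)
    (fun n z hz => ⟨?_, (hmono n hz).2.1⟩) h2b hsing huW hpq
    (h.tendsto_contributors_inner_neg_one hucusp (by simpa only [hub] using hb0) hpC hqC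
      (fun n => (hp n).le) (fun n => (hq n).le))
  · linarith [hbr n]
  · exact (((hgap m).disjoint (hgap n) (hanti.injective.ne hmn)).preimage _).mono
      inter_subset_right inter_subset_right
  · exact h.norm_sub_le_of_mem_stripOver ((hbr n).le.trans hrε) (hmono n hz)

end OpposedFrame

lemma exists_opposedFrame (hε : 0 < ε) (hx : x ∈ frontier (eNbhd E ε)) {y₁ y₂ : Plane}
    (hy₁ : y₁ ∈ contributors E ε x) (hy₂ : y₂ ∈ contributors E ε x) (hopp : y₁ - x = -(y₂ - x))
    (hξ : ξ ∈ outwardDirs E ε x) : ∃ ζ, OpposedFrame E ε x ξ ζ := by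
  have hle₁ := inner_nonpos_of_mem_outwardDirs hε hξ hy₁
  have hle₂ := inner_nonpos_of_mem_outwardDirs hε hξ hy₂
  rw [← neg_neg (y₂ - x), ← hopp, inner_neg_left, neg_nonpos] at hle₂
  have hperp : ⟪ξ, y₁ - x⟫ = 0 := (real_inner_comm _ _).trans (hle₁.antisymm hle₂)
  have hsmul : ε • ε⁻¹ • (y₁ - x) = y₁ - x := smul_inv_smul₀ hε.ne' _
  refine ⟨ε⁻¹ • (y₁ - x), hε, hx, orthonormal_pair_iff.2 ⟨hξ.1, ?_, ?_⟩, ?_, ?_, hξ⟩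
  · rw [norm_smul, hy₁.2, norm_inv, Real.norm_of_nonneg hε.le, inv_mul_cancel₀ hε.ne']
  · rw [real_inner_smul_right, hperp, mul_zero]
  · rw [hsmul, add_sub_cancel]
    exact hy₁.1.1
  · rw [hsmul, hopp, sub_neg_eq_add, add_sub_cancel]
    exact hy₂.1.1

end LocalGeometry

theorem sharp_or_chain_type_general {E : Set Plane} {ε : ℝ} (hε : 0 < ε) {x : Plane}
    (hx : x ∈ frontier (eNbhd E ε)) {y₁ y₂ : Plane} (hy₁ : y₁ ∈ contributors E ε x)
    (hy₂ : y₂ ∈ contributors E ε x) (hopp : y₁ - x = -(y₂ - x)) {ξ : Plane}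
    (hξ : ξ ∈ outwardDirs E ε x) :
    (SharpType E ε x ξ ∨ ChainType E ε x ξ) ∧ ¬ (SharpType E ε x ξ ∧ ChainType E ε x ξ) := by
  refine ⟨?_, not_sharpType_and_chainType⟩
  obtain ⟨ζ, hζ⟩ := exists_opposedFrame hε hx hy₁ hy₂ hopp hξ
  by_cases hshadow : ∀ᶠ τ in 𝓝[>] 0, τ ∈ shadow E ε x ξ ζ
  · exact .inl (hζ.sharpType_of_eventually_mem_shadow hshadow)
  · exact .inr (hζ.chainType_of_frequently_notMem_shadow (not_eventually.1 hshadow))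

/-- Difference between sharp-type and chain-type geometry: at a boundary point whose two
extremal contributors are opposite, each extremal outward direction exhibits exactly one
of the two geometries. -/
theorem sharp_or_chain_type (E : Set Plane) (hE : IsCompact E) {ε : ℝ} (hε : 0 < ε)
    (x : Plane) (hx : x ∈ frontier (eNbhd E ε)) (y₁ y₂ : Plane)
    (hcon : extContrib E ε x = {y₁, y₂}) (hopp : y₁ - x = -(y₂ - x)) (ξ : Plane)
    (hξ : ξ ∈ extOutward E ε x) :
    (SharpType E ε x ξ ∨ ChainType E ε x ξ) ∧
    ¬ (SharpType E ε x ξ ∧ ChainType E ε x ξ) :=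
  sharp_or_chain_type_general hε hx (hcon.ge (mem_insert _ _)).1
    (hcon.ge (mem_insert_of_mem _ rfl)).1 hopp hξ.1

end
end

section
/- Let E ⊆ ℝ² be compact, ε > 0, and x ∈ ∂E_ε. Then x does not lie on the boundary ∂V of any connected component V of the complement E_ε^c if and only if x is a one-sided chain singularity (S6) or a chain-chain singularity (S7). -/
open Metric Set Filter Topology RealInnerProductSpace

noncomputable section

/-!
If every point of `E` at distance `ε` from `x` is left behind, to first order, by moving in some
direction `d`, then a short segment from `x` along `d` lies in the complement of `E_ε`, and `x` is
on the boundary of the component containing it. Otherwise `x` is pinched between two antipodal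
contributors `x ± ε ν`: near `x` the complement is confined to the two cusps between the discs
about them, which open in the directions `±ξ` orthogonal to `ν`.

If a chain of singularities converges to `x` inside a cusp, then at each of them the two nearly
opposite contributors block the cusp along a line orthogonal to `ξ`. Such cuts accumulate at `x`,
so no component of the complement has `x` in its closure.

Conversely, suppose that `x` is pinched and not in the closure of any component, and let `V` be a
component entering a cusp close to `x`. As `V` stays away from `x`, the height `⟪·, ξ⟫` has a
local minimum on `closure V` at a point `u` of the cusp. No escape direction at `u` may descend,
so `u` has contributors on both sides of the cusp, and these are nearly antipodal because the
contributors of points tending to `x` inside the cusp become orthogonal to `ξ`. Letting `V`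
approach `x` gives a chain.
-/

namespace ParallelSet

section Thickening

theorem notMem_thickening_iff {X : Type*} [PseudoMetricSpace X] {E : Set X} {ε : ℝ} {z : X} :
    z ∉ thickening ε E ↔ ∀ y ∈ E, ε ≤ dist y z := by
  simp [mem_thickening_iff, dist_comm z]

theorem lt_dist_of_notMem_cthickening {X : Type*} [PseudoMetricSpace X] {E : Set X} {ε : ℝ}
    {y z : X} (hz : z ∉ cthickening ε E) (hy : y ∈ E) : ε < dist y z := by
  contrapose! hz
  exact closedBall_subset_cthickening hy ε (mem_closedBall'.2 hz)

variable {X T : Type*} [PseudoMetricSpace X] [ProperSpace X] [TopologicalSpace T]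
  {E : Set X} {ε : ℝ}

theorem notMem_cthickening_iff (hE : IsClosed E) (hε : 0 ≤ ε) {z : X} :
    z ∉ cthickening ε E ↔ ∀ y ∈ E, ε < dist y z := by
  simp [hE.cthickening_eq_biUnion_closedBall hε, dist_comm z]

/-- Upper semicontinuity of `z ↦ E ∩ closedBall z ε`, in the form of a principle of proof: what
holds locally near each point of `E ∩ closedBall (f t₀) ε` holds on `E ∩ closedBall (f t) ε` for
all `t` near `t₀`. -/
theorem eventually_forall_mem_of_dist_le (hE : IsClosed E) {f : T → X} {t₀ : T}
    (hf : ContinuousAt f t₀) {P : T → X → Prop}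
    (hP : ∀ y ∈ E, dist y (f t₀) ≤ ε → ∀ᶠ p in 𝓝 (t₀, y), P p.1 p.2) :
    ∀ᶠ t in 𝓝 t₀, ∀ y ∈ E, dist y (f t) ≤ ε → P t y := by
  have hK : IsCompact (E ∩ closedBall (f t₀) (ε + 1)) :=
    (isCompact_closedBall _ _).inter_left hE
  have key : ∀ᶠ t in 𝓝 t₀, ∀ y ∈ E ∩ closedBall (f t₀) (ε + 1), dist y (f t) ≤ ε → P t y := by
    refine hK.eventually_forall_of_forall_eventually fun y hy ↦ ?_
    rcases le_or_gt (dist y (f t₀)) ε with hyε | hyε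
    · exact (hP y hy.1 hyε).mono fun p hp _ ↦ hp
    · have hcont : ContinuousAt (fun p : T × X ↦ dist p.2 (f p.1)) (t₀, y) :=
        continuousAt_snd.dist (ContinuousAt.comp (x := (t₀, y)) hf continuousAt_fst)
      filter_upwards [hcont.eventually_const_lt hyε] with p hp hle
      exact absurd hle hp.not_ge
  filter_upwards [key, Metric.tendsto_nhds.1 hf 1 one_pos] with t ht hclose y hy hyε
  refine ht y ⟨hy, ?_⟩ hyε
  rw [mem_closedBall]
  linarith [dist_triangle y (f t) (f t₀)]

end Thickening

section EscapeDir

variable {F : Type*} [NormedAddCommGroup F] [InnerProductSpace ℝ F] {E : Set F} {ε : ℝ}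
  {u d : F}

/-- A direction `d` in which every point of `E` at distance `ε` from `u` is left behind: moving
from `u` along `d` increases the distance to all of them to first order. -/
def IsEscapeDir (E : Set F) (ε : ℝ) (u d : F) : Prop :=
  ∀ y ∈ E ∩ sphere u ε, ⟪y - u, d⟫ < 0

variable [ProperSpace F]

theorem IsEscapeDir.eventually_notMem_cthickening (hE : IsClosed E) (hε : 0 ≤ ε)
    (hu : u ∉ thickening ε E) (hd : IsEscapeDir E ε u d) :
    ∀ᶠ p in 𝓝 (u, (0 : ℝ)), 0 < p.2 → p.1 ∉ thickening ε E →
      p.1 + p.2 • d ∉ cthickening ε E := by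
  have hf : ContinuousAt (fun p : F × ℝ ↦ p.1 + p.2 • d) (u, 0) := by fun_prop
  have hneg : ∀ᶠ p in 𝓝 (u, (0 : ℝ)), ∀ y ∈ E, dist y (p.1 + p.2 • d) ≤ ε →
      ⟪y - p.1, d⟫ < 0 := by
    refine eventually_forall_mem_of_dist_le hE hf fun y hy hyε ↦ ?_
    simp only [zero_smul, add_zero] at hyε
    have hyu : ⟪y - u, d⟫ < 0 := hd y ⟨hy, hyε.antisymm (notMem_thickening_iff.1 hu y hy)⟩
    have hcont : ContinuousAt (fun q : (F × ℝ) × F ↦ ⟪q.2 - q.1.1, d⟫) ((u, 0), y) := by fun_prop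
    exact hcont.eventually_lt_const hyu
  filter_upwards [hneg] with p hp ht hp1
  refine (notMem_cthickening_iff hE hε).2 fun y hy ↦ ?_
  by_contra! hle
  have hfar : ε ≤ ‖y - p.1‖ := by
    simpa only [dist_eq_norm] using notMem_thickening_iff.1 hp1 y hy
  have hsq : ‖y - (p.1 + p.2 • d)‖ ^ 2 =
      ‖y - p.1‖ ^ 2 - 2 * (p.2 * ⟪y - p.1, d⟫) + ‖p.2 • d‖ ^ 2 := by
    rw [← sub_sub, norm_sub_sq_real, real_inner_smul_right]
  have := hp y hy hle
  rw [dist_eq_norm] at hle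
  nlinarith [mul_neg_of_pos_of_neg ht this, sq_nonneg ‖p.2 • d‖, norm_nonneg (y - p.1),
    norm_nonneg (y - (p.1 + p.2 • d))]

theorem IsEscapeDir.exists_mem_closure_connectedComponentIn (hE : IsClosed E) (hε : 0 ≤ ε)
    (hu : u ∉ thickening ε E) (hd : IsEscapeDir E ε u d) :
    ∃ z ∉ cthickening ε E, u ∈ closure (connectedComponentIn (cthickening ε E)ᶜ z) := by
  have hline : ContinuousAt (fun t : ℝ ↦ (u, t)) 0 := by fun_prop
  obtain ⟨τ, hτ, hout⟩ := Metric.eventually_nhds_iff_ball.1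
    (hline.eventually (hd.eventually_notMem_cthickening hE hε hu))
  have hcont : Continuous fun t : ℝ ↦ u + t • d := by fun_prop
  have hmaps : (fun t : ℝ ↦ u + t • d) '' Ioo 0 τ ⊆ (cthickening ε E)ᶜ := by
    rintro _ ⟨t, ht, rfl⟩
    exact hout t (by simpa [abs_of_pos ht.1] using ht.2) ht.1 hu
  have hmid : τ / 2 ∈ Ioo 0 τ := ⟨half_pos hτ, half_lt_self hτ⟩
  refine ⟨u + (τ / 2) • d, hmaps (mem_image_of_mem _ hmid), ?_⟩
  have hsub := (isPreconnected_Ioo.image _ hcont.continuousOn).subset_connectedComponentIn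
    (mem_image_of_mem _ hmid) hmaps
  refine closure_mono hsub (image_closure_subset_closure_image hcont ⟨0, ?_, by simp⟩)
  simp [closure_Ioo hτ.ne, hτ.le]

theorem IsEscapeDir.eventually_mem_closure_connectedComponentIn (hE : IsClosed E) (hε : 0 ≤ ε)
    {z : F} (hu : u ∉ thickening ε E) (hd : IsEscapeDir E ε u d)
    (huz : u ∈ closure (connectedComponentIn (cthickening ε E)ᶜ z)) :
    ∀ᶠ t : ℝ in 𝓝[>] 0, u + t • d ∈ closure (connectedComponentIn (cthickening ε E)ᶜ z) := by
  set V := connectedComponentIn (cthickening ε E)ᶜ z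
  obtain ⟨A, hA, B, hB, hout⟩ := eventually_prod_iff.1 (nhds_prod_eq (x := u) (y := (0 : ℝ)) ▸
    hd.eventually_notMem_cthickening hE hε hu)
  obtain ⟨τ, hτ, hBτ⟩ := Metric.eventually_nhds_iff_ball.1 hB
  filter_upwards [Ioo_mem_nhdsGT hτ] with t ht
  have hstay : ∀ v ∈ V, A v → v + t • d ∈ V := by
    intro v hv hAv
    have hvC : v ∉ cthickening ε E := connectedComponentIn_subset _ _ hv
    have hcont : Continuous fun s : ℝ ↦ v + s • d := by fun_prop
    have hmaps : (fun s : ℝ ↦ v + s • d) '' Icc 0 t ⊆ (cthickening ε E)ᶜ := by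
      rintro _ ⟨s, hs, rfl⟩
      rcases hs.1.eq_or_lt with rfl | hs0
      · simpa using hvC
      · refine hout hAv (hBτ s ?_) hs0 fun h ↦ hvC (thickening_subset_cthickening ε E h)
        simpa [abs_of_pos hs0] using hs.2.trans_lt ht.2
    have hv0 : v ∈ (fun s : ℝ ↦ v + s • d) '' Icc 0 t := ⟨0, ⟨le_rfl, ht.1.le⟩, by simp⟩
    have hsub := (isPreconnected_Icc.image _ hcont.continuousOn).subset_connectedComponentIn
      hv0 hmaps
    rw [← connectedComponentIn_eq hv] at hsub
    exact hsub ⟨t, ⟨ht.1.le, le_rfl⟩, rfl⟩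
  have hcont : Tendsto (fun v : F ↦ v + t • d) (𝓝 u) (𝓝 (u + t • d)) :=
    (continuous_id.add continuous_const).tendsto u
  have hfreq : ∃ᶠ v in 𝓝 u, v + t • d ∈ V :=
    ((mem_closure_iff_frequently.1 huz).and_eventually hA).mono fun v hv ↦ hstay v hv.1 hv.2
  exact mem_closure_of_frequently_of_tendsto hfreq hcont

theorem IsEscapeDir.inner_nonneg_of_isLocalMinOn (hE : IsClosed E) (hε : 0 ≤ ε) {z ξ : F}
    (hu : u ∉ thickening ε E) (hd : IsEscapeDir E ε u d)
    (huz : u ∈ closure (connectedComponentIn (cthickening ε E)ᶜ z))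
    (hmin : IsLocalMinOn (⟪·, ξ⟫) (closure (connectedComponentIn (cthickening ε E)ᶜ z)) u) :
    0 ≤ ⟪d, ξ⟫ := by
  set V := connectedComponentIn (cthickening ε E)ᶜ z
  have hV := hd.eventually_mem_closure_connectedComponentIn hE hε hu huz
  have hline : Tendsto (fun t : ℝ ↦ u + t • d) (𝓝[>] 0) (𝓝[closure V] u) := by
    refine tendsto_nhdsWithin_iff.2 ⟨?_, hV⟩
    have hcont : Continuous fun t : ℝ ↦ u + t • d := by fun_prop
    simpa using (hcont.tendsto 0).mono_left nhdsWithin_le_nhds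
  obtain ⟨t, hle, ht⟩ := ((hline.eventually hmin).and self_mem_nhdsWithin).exists
  simp only [inner_add_left, real_inner_smul_left] at hle
  exact nonneg_of_mul_nonneg_right (by linarith) (mem_Ioi.1 ht)

end EscapeDir

section Antipodal

variable {F ι : Type*} [NormedAddCommGroup F] [InnerProductSpace ℝ F] {ε : ℝ}

theorem inner_smul_smul_eq_norm_add_sq_sub_one (hε : ε ≠ 0) {a b : F} (ha : ‖a‖ = ε)
    (hb : ‖b‖ = ε) : ⟪ε⁻¹ • a, ε⁻¹ • b⟫ = ‖a + b‖ ^ 2 / (2 * ε ^ 2) - 1 := by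
  rw [norm_add_sq_real, ha, hb, real_inner_smul_left, real_inner_smul_right]
  field_simp
  ring

theorem tendsto_inner_smul_smul_neg_one_iff (hε : ε ≠ 0) {l : Filter ι} {a b : ι → F}
    (ha : ∀ i, ‖a i‖ = ε) (hb : ∀ i, ‖b i‖ = ε) :
    Tendsto (fun i ↦ ⟪ε⁻¹ • a i, ε⁻¹ • b i⟫) l (𝓝 (-1)) ↔
      Tendsto (fun i ↦ a i + b i) l (𝓝 0) := by
  have key (i : ι) := inner_smul_smul_eq_norm_add_sq_sub_one hε (ha i) (hb i)
  simp only [key]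
  constructor
  · intro h
    have hsq : Tendsto (fun i ↦ ‖a i + b i‖ ^ 2) l (𝓝 0) := by
      convert (h.add_const 1).mul_const (2 * ε ^ 2) using 2
      · field_simp
        ring
      · ring
    rw [tendsto_zero_iff_norm_tendsto_zero]
    simpa using hsq.sqrt
  · intro h
    convert ((h.norm.pow 2).div_const (2 * ε ^ 2)).sub_const 1 using 2
    simp

end Antipodal

section Frame

variable {F : Type*} [NormedAddCommGroup F] [InnerProductSpace ℝ F] {ξ ν v w : F}

/-- The vectors `ξ` and `ν` are orthonormal; in a plane they serve as coordinate axes. -/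
structure IsFrame (ξ ν : F) : Prop where
  norm_left : ‖ξ‖ = 1
  norm_right : ‖ν‖ = 1
  inner_eq_zero : ⟪ξ, ν⟫ = 0

namespace IsFrame

theorem orthonormal (h : IsFrame ξ ν) : Orthonormal ℝ ![ξ, ν] := by
  refine ⟨fun i ↦ ?_, fun i j hij ↦ ?_⟩
  · fin_cases i <;> simp [h.norm_left, h.norm_right]
  · fin_cases i <;> fin_cases j <;> simp_all [h.inner_eq_zero, real_inner_comm]

theorem neg_left (h : IsFrame ξ ν) : IsFrame (-ξ) ν :=
  ⟨by rw [norm_neg, h.norm_left], h.norm_right, by rw [inner_neg_left, h.inner_eq_zero, neg_zero]⟩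

theorem neg_right (h : IsFrame ξ ν) : IsFrame ξ (-ν) :=
  ⟨h.norm_left, by rw [norm_neg, h.norm_right], by rw [inner_neg_right, h.inner_eq_zero, neg_zero]⟩

theorem inner_smul_add_smul_left (h : IsFrame ξ ν) (a b : ℝ) : ⟪a • ξ + b • ν, ξ⟫ = a := by
  rw [inner_add_left, real_inner_smul_left, real_inner_smul_left, real_inner_comm ξ ν,
    h.inner_eq_zero, real_inner_self_eq_norm_sq, h.norm_left]
  ring

theorem inner_smul_add_smul_right (h : IsFrame ξ ν) (a b : ℝ) : ⟪a • ξ + b • ν, ν⟫ = b := by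
  rw [inner_add_left, real_inner_smul_left, real_inner_smul_left, h.inner_eq_zero,
    real_inner_self_eq_norm_sq, h.norm_right]
  ring

variable [Fact (Module.finrank ℝ F = 2)]

theorem exists_right (hξ : ‖ξ‖ = 1) : ∃ ν, IsFrame ξ ν := by
  have := FiniteDimensional.of_fact_finrank_eq_two (K := ℝ) (V := F)
  have hon : Orthonormal ℝ (({0} : Set (Fin 2)).domRestrict ![ξ, 0]) := by
    refine ⟨fun i ↦ ?_, fun i j hij ↦ absurd (Subsingleton.elim i j) hij⟩
    obtain ⟨i, rfl⟩ := i
    simpa using hξ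
  obtain ⟨b, hb⟩ := hon.exists_orthonormalBasis_extension_of_card_eq
    ((Fact.out : Module.finrank ℝ F = 2).trans (Fintype.card_fin 2).symm)
  have hb0 : b 0 = ξ := by simpa using hb 0 rfl
  refine ⟨b 1, hξ, b.norm_eq_one 1, ?_⟩
  rw [← hb0]
  exact b.orthonormal.2 Fin.zero_ne_one

theorem inner_eq (h : IsFrame ξ ν) (v w : F) :
    ⟪v, w⟫ = ⟪v, ξ⟫ * ⟪w, ξ⟫ + ⟪v, ν⟫ * ⟪w, ν⟫ := by
  have := FiniteDimensional.of_fact_finrank_eq_two (K := ℝ) (V := F)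
  let b := OrthonormalBasis.mk h.orthonormal (h.orthonormal.linearIndependent
    |>.span_eq_top_of_card_eq_finrank' <| by simp [(Fact.out : Module.finrank ℝ F = 2)]).ge
  simpa [b, real_inner_comm w] using (b.sum_inner_mul_inner v w).symm

theorem norm_sq_eq (h : IsFrame ξ ν) (v : F) : ‖v‖ ^ 2 = ⟪v, ξ⟫ ^ 2 + ⟪v, ν⟫ ^ 2 := by
  rw [← real_inner_self_eq_norm_sq, h.inner_eq v v, sq, sq]

theorem ext (h : IsFrame ξ ν) (hξ : ⟪v, ξ⟫ = ⟪w, ξ⟫) (hν : ⟪v, ν⟫ = ⟪w, ν⟫) : v = w := by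
  have := h.norm_sq_eq (v - w)
  simpa [inner_sub_left, hξ, hν, sub_eq_zero] using this

theorem eq_smul_right_of_inner_left_eq_zero (h : IsFrame ξ ν) (hv : ⟪v, ξ⟫ = 0) :
    v = ⟪v, ν⟫ • ν := by
  have hadd : ⟪v, ν⟫ • ν = (0 : ℝ) • ξ + ⟪v, ν⟫ • ν := by rw [zero_smul, zero_add]
  refine h.ext ?_ ?_ <;> rw [hadd]
  · rw [h.inner_smul_add_smul_left, hv]
  · rw [h.inner_smul_add_smul_right]

theorem norm_sub_le_of_half_le_inner (h : IsFrame ξ ν) {a u : F} {ε : ℝ} (ha : ‖a - u‖ = ε)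
    (haν : ε / 2 ≤ ⟪a - u, ν⟫) (hξ : ⟪v - u, ξ⟫ = 0) (hν : 0 ≤ ⟪v - u, ν⟫)
    (hνε : ⟪v - u, ν⟫ ≤ ε) : ‖a - v‖ ≤ ε := by
  have hε : 0 ≤ ε := ha ▸ norm_nonneg _
  have hsq : ‖a - v‖ ^ 2 = ε ^ 2 - 2 * (⟪v - u, ν⟫ * ⟪a - u, ν⟫) + ⟪v - u, ν⟫ ^ 2 := by
    rw [← sub_sub_sub_cancel_right a v u, norm_sub_sq_real, ha, h.inner_eq (a - u) (v - u), hξ,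
      h.norm_sq_eq (v - u), hξ]
    ring
  refine abs_le_of_sq_le_sq' ?_ hε |>.2
  nlinarith

theorem norm_add_le_of_abs_inner_le (h : IsFrame ξ ν) {ε η : ℝ} (hv : ‖v‖ = ε) (hw : ‖w‖ = ε)
    (hvξ : |⟪v, ξ⟫| ≤ η) (hwξ : |⟪w, ξ⟫| ≤ η) (hηε : η ≤ ε) (hvν : 0 ≤ ⟪v, ν⟫)
    (hwν : ⟪w, ν⟫ ≤ 0) : ‖v + w‖ ≤ 3 * η := by
  have hη : 0 ≤ η := (abs_nonneg _).trans hvξ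
  have hvsq := h.norm_sq_eq v
  have hwsq := h.norm_sq_eq w
  have hvξsq := sq_le_sq' (neg_le_of_abs_le hvξ) (le_of_abs_le hvξ)
  have hwξsq := sq_le_sq' (neg_le_of_abs_le hwξ) (le_of_abs_le hwξ)
  rw [hv] at hvsq
  rw [hw] at hwsq
  have hv₁ : ε - η ≤ ⟪v, ν⟫ := by nlinarith
  have hv₂ : ⟪v, ν⟫ ≤ ε := by nlinarith
  have hw₁ : -ε ≤ ⟪w, ν⟫ := by nlinarith
  have hw₂ : ⟪w, ν⟫ ≤ -(ε - η) := by nlinarith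
  have hadd := h.norm_sq_eq (v + w)
  rw [inner_add_left, inner_add_left] at hadd
  have hξ : (⟪v, ξ⟫ + ⟪w, ξ⟫) ^ 2 ≤ (2 * η) ^ 2 := by
    rw [abs_le] at hvξ hwξ
    exact sq_le_sq' (by linarith) (by linarith)
  have hν : (⟪v, ν⟫ + ⟪w, ν⟫) ^ 2 ≤ η ^ 2 := sq_le_sq' (by linarith) (by linarith)
  exact (abs_le_of_sq_le_sq' (by nlinarith) (by positivity)).2

end IsFrame

end Frame

open scoped EuclideanSpace

section Boundary

variable {E : Set Plane} {ε : ℝ} {x u v z : Plane}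

theorem eNbhd_eq_cthickening (hε : 0 < ε) (E : Set Plane) : eNbhd E ε = cthickening ε E := by
  rw [eNbhd, ← thickening_eq_biUnion_ball, closure_thickening hε]

theorem lt_norm_sub_of_notMem_eNbhd (hε : 0 < ε) (hz : z ∉ eNbhd E ε) {y : Plane} (hy : y ∈ E) :
    ε < ‖y - z‖ := by
  rw [eNbhd_eq_cthickening hε] at hz
  exact dist_eq_norm y z ▸ lt_dist_of_notMem_cthickening hz hy

theorem le_norm_sub_of_mem_closure_compl (hε : 0 < ε) (hu : u ∈ closure (eNbhd E ε)ᶜ) {y : Plane}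
    (hy : y ∈ E) : ε ≤ ‖y - u‖ := by
  have hcl : IsClosed {z : Plane | ε ≤ ‖y - z‖} := isClosed_le (by fun_prop) (by fun_prop)
  exact closure_minimal (fun z hz ↦ (lt_norm_sub_of_notMem_eNbhd hε hz hy).le) hcl hu

theorem notMem_thickening_of_mem_closure_compl (hε : 0 < ε) (hu : u ∈ closure (eNbhd E ε)ᶜ) :
    u ∉ thickening ε E :=
  notMem_thickening_iff.2 fun y hy ↦
    dist_eq_norm y u ▸ le_norm_sub_of_mem_closure_compl hε hu hy

theorem isClosed_eNbhd : IsClosed (eNbhd E ε) := isClosed_closure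

theorem mem_frontier_eNbhd_iff :
    u ∈ frontier (eNbhd E ε) ↔ u ∈ eNbhd E ε ∧ u ∈ closure (eNbhd E ε)ᶜ := by
  rw [frontier_eq_closure_inter_closure, isClosed_eNbhd.closure_eq, mem_inter_iff]

theorem notMem_thickening_of_mem_frontier (hε : 0 < ε) (hu : u ∈ frontier (eNbhd E ε)) :
    u ∉ thickening ε E :=
  notMem_thickening_of_mem_closure_compl hε (mem_frontier_eNbhd_iff.1 hu).2

theorem contributors_eq_inter_sphere (hE : IsClosed E) (hε : 0 < ε)
    (hu : u ∈ frontier (eNbhd E ε)) : contributors E ε u = E ∩ sphere u ε := by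
  have hfar : E ⊆ (ball u ε)ᶜ := fun y hy ↦ by
    simpa using notMem_thickening_iff.1 (notMem_thickening_of_mem_frontier hε hu) y hy
  ext y
  simp only [contributors, mem_ofPred_eq, mem_inter_iff, mem_sphere, dist_eq_norm]
  refine and_congr_left fun hy ↦ ⟨fun h ↦ hE.frontier_subset h, fun h ↦ ⟨subset_closure h, ?_⟩⟩
  intro hinterior
  have := interior_mono hfar hinterior
  rw [interior_compl, closure_ball u hε.ne', mem_compl_iff, mem_closedBall, dist_eq_norm] at this
  exact this hy.le

theorem nonempty_inter_sphere_of_mem_frontier (hE : IsClosed E) (hε : 0 < ε)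
    (hu : u ∈ frontier (eNbhd E ε)) : (E ∩ sphere u ε).Nonempty := by
  have huE := (mem_frontier_eNbhd_iff.1 hu).1
  rw [eNbhd_eq_cthickening hε, hE.cthickening_eq_biUnion_closedBall hε.le] at huE
  obtain ⟨y, hy, huy⟩ := mem_iUnion₂.1 huE
  refine ⟨y, hy, le_antisymm (mem_closedBall'.1 huy) ?_⟩
  exact notMem_thickening_iff.1 (notMem_thickening_of_mem_frontier hε hu) y hy

theorem isCompact_inter_sphere (hE : IsClosed E) : IsCompact (E ∩ sphere u ε) :=
  (isCompact_sphere u ε).inter_left hE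

theorem mem_frontier_iff_mem_closure_of_isCompOfCompl {V : Set Plane} (hV : IsCompOfCompl E ε V)
    (hx : x ∈ eNbhd E ε) : x ∈ frontier V ↔ x ∈ closure V := by
  obtain ⟨z, -, rfl⟩ := hV
  refine ⟨fun h ↦ frontier_subset_closure h, fun h ↦ ⟨h, fun hinterior ↦ ?_⟩⟩
  exact connectedComponentIn_subset _ _ (interior_subset hinterior) hx

end Boundary

section OutwardDirs

variable {E : Set Plane} {ε : ℝ} {u ξ : Plane}

theorem mem_outwardDirs_iff :
    ξ ∈ outwardDirs E ε u ↔
      ‖ξ‖ = 1 ∧ MapClusterPt ξ (𝓝[(eNbhd E ε)ᶜ] u) fun z ↦ ‖z - u‖⁻¹ • (z - u) := by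
  refine and_congr_right fun _ ↦ ⟨?_, fun h ↦ ?_⟩
  · rintro ⟨w, hwE, hwu, hwξ⟩
    exact .of_comp (tendsto_nhdsWithin_iff.2 ⟨hwu, .of_forall hwE⟩) hwξ.mapClusterPt
  · obtain ⟨w, hwξ, hwu⟩ := h.exists_seq_tendsto
    obtain ⟨hwu, hwE⟩ := tendsto_nhdsWithin_iff.1 hwu
    obtain ⟨N, hN⟩ := eventually_atTop.1 hwE
    refine ⟨fun n ↦ w (n + N), fun n ↦ hN _ (Nat.le_add_left N n), ?_, ?_⟩
    · exact hwu.comp (tendsto_add_atTop_nat N)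
    · exact hwξ.comp (tendsto_add_atTop_nat N)

theorem isClosed_outwardDirs : IsClosed (outwardDirs E ε u) := by
  simp only [Set.ext fun _ ↦ mem_outwardDirs_iff]
  exact (isClosed_eq continuous_norm continuous_const).inter isClosed_setOfPred_clusterPt

theorem exists_mem_outwardDirs_inner_nonpos (hu : u ∈ eNbhd E ε) {v : Plane}
    (h : ∃ᶠ z in 𝓝[(eNbhd E ε)ᶜ] u, ⟪z - u, v⟫ ≤ 0) : ∃ ξ ∈ outwardDirs E ε u, ⟪ξ, v⟫ ≤ 0 := by
  have hcl : IsClosed {ξ : Plane | ⟪ξ, v⟫ ≤ 0} := isClosed_le (by fun_prop) continuous_const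
  obtain ⟨ξ, ⟨hξ, hξv⟩, hcluster⟩ :=
    ((isCompact_sphere (0 : Plane) 1).inter_right hcl).exists_mapClusterPt_of_frequently
      (f := fun z ↦ ‖z - u‖⁻¹ • (z - u)) <|
        (h.and_eventually self_mem_nhdsWithin).mono fun z ⟨hzv, hz⟩ ↦ by
          have hzu : z - u ≠ 0 := sub_ne_zero.2 fun h ↦ hz (h ▸ hu)
          refine ⟨by simp [norm_smul, hzu], ?_⟩
          rw [mem_ofPred_eq, real_inner_smul_left]
          exact mul_nonpos_of_nonneg_of_nonpos (by positivity) hzv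
  exact ⟨ξ, mem_outwardDirs_iff.2 ⟨mem_sphere_zero_iff_norm.1 hξ, hcluster⟩, hξv⟩

theorem nonempty_outwardDirs (hu : u ∈ frontier (eNbhd E ε)) : (outwardDirs E ε u).Nonempty := by
  obtain ⟨huE, hucl⟩ := mem_frontier_eNbhd_iff.1 hu
  have := mem_closure_iff_nhdsWithin_neBot.1 hucl
  obtain ⟨ξ, hξ, -⟩ := exists_mem_outwardDirs_inner_nonpos huE (v := 0)
    (Eventually.of_forall fun z ↦ by simp).frequently
  exact ⟨ξ, hξ⟩

theorem frequently_inner_pos_of_mem_outwardDirs (hξ : ξ ∈ outwardDirs E ε u) :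
    ∃ᶠ z in 𝓝[(eNbhd E ε)ᶜ] u, 0 < ⟪z - u, ξ⟫ := by
  obtain ⟨hnorm, hcluster⟩ := mem_outwardDirs_iff.1 hξ
  have hpos : ∀ᶠ η in 𝓝 ξ, 0 < ⟪η, ξ⟫ := by
    have hcont : ContinuousAt (fun η : Plane ↦ ⟪η, ξ⟫) ξ := by fun_prop
    exact hcont.eventually_const_lt (by simp [hnorm])
  refine (hcluster.frequently hpos).mono fun z hz ↦ ?_
  rw [real_inner_smul_left] at hz
  exact pos_of_mul_pos_right hz (by positivity)

theorem inner_nonpos_of_mem_outwardDirs (hε : 0 < ε) (hu : u ∈ frontier (eNbhd E ε))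
    (hξ : ξ ∈ outwardDirs E ε u) {y : Plane} (hy : y ∈ E ∩ sphere u ε) : ⟪y - u, ξ⟫ ≤ 0 := by
  by_contra! hpos
  have huE := (mem_frontier_eNbhd_iff.1 hu).1
  have hcont : ContinuousAt (fun η : Plane ↦ ⟪y - u, η⟫) ξ := by fun_prop
  have hclose : ∀ᶠ z in 𝓝[(eNbhd E ε)ᶜ] u, ‖z - u‖ < ⟪y - u, ξ⟫ := by
    have hcont : Tendsto (fun z : Plane ↦ ‖z - u‖) (𝓝 u) (𝓝 0) := tendsto_norm_sub_self u
    exact (hcont.mono_left nhdsWithin_le_nhds).eventually_lt_const hpos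
  obtain ⟨z, hdir, hzu, hz⟩ := (((mem_outwardDirs_iff.1 hξ).2.frequently
    (hcont.eventually_const_lt (half_lt_self hpos))).and_eventually
      (hclose.and self_mem_nhdsWithin)).exists
  have hfar : ε < ‖y - z‖ := lt_norm_sub_of_notMem_eNbhd hε hz hy.1
  have hsq : ‖y - z‖ ^ 2 = ε ^ 2 - 2 * ⟪y - u, z - u⟫ + ‖z - u‖ ^ 2 := by
    rw [← sub_sub_sub_cancel_right y z u, norm_sub_sq_real, mem_sphere_iff_norm.1 hy.2]
  have hzpos : 0 < ‖z - u‖ := norm_pos_iff.2 (sub_ne_zero.2 fun h ↦ hz (h ▸ huE))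
  rw [real_inner_smul_right, inv_mul_eq_div, lt_div_iff₀ hzpos] at hdir
  nlinarith

theorem IsEscapeDir.ne_zero (hE : IsClosed E) (hε : 0 < ε) (hu : u ∈ frontier (eNbhd E ε))
    {d : Plane} (hd : IsEscapeDir E ε u d) : d ≠ 0 := by
  rintro rfl
  obtain ⟨y, hy⟩ := nonempty_inter_sphere_of_mem_frontier hE hε hu
  simpa using hd y hy

theorem IsEscapeDir.normalize_mem_outwardDirs (hE : IsClosed E) (hε : 0 < ε)
    (hu : u ∈ frontier (eNbhd E ε)) {d : Plane} (hd : IsEscapeDir E ε u d) :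
    ‖d‖⁻¹ • d ∈ outwardDirs E ε u := by
  have hd0 : d ≠ 0 := hd.ne_zero hE hε hu
  have hline : Tendsto (fun t : ℝ ↦ u + t • d) (𝓝[>] 0) (𝓝[(eNbhd E ε)ᶜ] u) := by
    have hcont : Continuous fun t : ℝ ↦ u + t • d := by fun_prop
    have hpair : Tendsto (fun t : ℝ ↦ (u, t)) (𝓝[>] 0) (𝓝 (u, 0)) :=
      ((by fun_prop : Continuous fun t : ℝ ↦ (u, t)).tendsto 0).mono_left nhdsWithin_le_nhds
    have hout := notMem_thickening_of_mem_frontier hε hu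
    refine tendsto_nhdsWithin_iff.2
      ⟨by simpa using (hcont.tendsto 0).mono_left nhdsWithin_le_nhds, ?_⟩
    filter_upwards [hpair.eventually (hd.eventually_notMem_cthickening hE hε.le hout),
      self_mem_nhdsWithin] with t ht htpos
    rw [mem_compl_iff, eNbhd_eq_cthickening hε]
    exact ht htpos hout
  refine mem_outwardDirs_iff.2 ⟨by simp [norm_smul, hd0], .of_comp hline ?_⟩
  refine (tendsto_const_nhds.congr' ?_).mapClusterPt
  filter_upwards [self_mem_nhdsWithin] with t (ht : 0 < t)
  simp only [Function.comp_apply, add_sub_cancel_left, norm_smul, Real.norm_of_nonneg ht.le,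
    smul_smul]
  congr 1
  field_simp

theorem IsEscapeDir.mem_outwardDirs_of_inner_nonpos (hE : IsClosed E) (hε : 0 < ε)
    (hu : u ∈ frontier (eNbhd E ε)) {e c : Plane} (he : IsEscapeDir E ε u e) (hc : ‖c‖ = 1)
    (hnonpos : ∀ y ∈ E ∩ sphere u ε, ⟪y - u, c⟫ ≤ 0) : c ∈ outwardDirs E ε u := by
  -- `c + t • e` is an escape direction for every `t > 0`, and the outward directions are closed.
  have hlim : Tendsto (fun t : ℝ ↦ ‖c + t • e‖⁻¹ • (c + t • e)) (𝓝[>] 0) (𝓝 c) := by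
    have hne : ‖c + (0 : ℝ) • e‖ ≠ 0 := by simp [hc]
    have hcont : ContinuousAt (fun t : ℝ ↦ ‖c + t • e‖⁻¹ • (c + t • e)) 0 := by
      fun_prop (disch := exact hne)
    simpa [hc] using hcont.tendsto.mono_left nhdsWithin_le_nhds
  refine isClosed_outwardDirs.mem_of_tendsto hlim ?_
  filter_upwards [self_mem_nhdsWithin] with t (ht : 0 < t)
  refine IsEscapeDir.normalize_mem_outwardDirs hE hε hu fun y hy ↦ ?_
  rw [inner_add_right, real_inner_smul_right]
  linarith [hnonpos y hy, mul_neg_of_pos_of_neg ht (he y hy)]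

end OutwardDirs

section Pinch

variable {E : Set Plane} {ε : ℝ} {x u z ξ η ν : Plane}

/-- The boundary point `x` is pinched, across the direction `ν`, between two antipodal points of
`E` at distance `ε`, so that the complement of `E_ε` can reach `x` only tangentially to `±ξ`. -/
structure IsPinch (E : Set Plane) (ε : ℝ) (x ξ ν : Plane) : Prop where
  pos : 0 < ε
  mem_frontier : x ∈ frontier (eNbhd E ε)
  isFrame : IsFrame ξ ν
  add_mem : x + ε • ν ∈ E
  sub_mem : x - ε • ν ∈ E

namespace IsPinch

theorem neg_left (h : IsPinch E ε x ξ ν) : IsPinch E ε x (-ξ) ν :=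
  { h with isFrame := h.isFrame.neg_left }

theorem neg_right (h : IsPinch E ε x ξ ν) : IsPinch E ε x ξ (-ν) where
  pos := h.pos
  mem_frontier := h.mem_frontier
  isFrame := h.isFrame.neg_right
  add_mem := by simpa [sub_eq_add_neg] using h.sub_mem
  sub_mem := by simpa using h.add_mem

theorem add_mem_inter_sphere (h : IsPinch E ε x ξ ν) : x + ε • ν ∈ E ∩ sphere x ε :=
  ⟨h.add_mem, by simp [norm_smul, h.isFrame.norm_right, h.pos.le]⟩

theorem sub_mem_inter_sphere (h : IsPinch E ε x ξ ν) : x - ε • ν ∈ E ∩ sphere x ε := by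
  simpa [sub_eq_add_neg] using h.neg_right.add_mem_inter_sphere

theorem two_mul_inner_le_norm_sq (h : IsPinch E ε x ξ ν) (hz : z ∉ thickening ε E) :
    2 * ε * ⟪z - x, ν⟫ ≤ ‖z - x‖ ^ 2 := by
  have hfar : ε ≤ ‖x + ε • ν - z‖ :=
    dist_eq_norm (x + ε • ν) z ▸ notMem_thickening_iff.1 hz _ h.add_mem
  have hsq : ‖x + ε • ν - z‖ ^ 2 = ‖z - x‖ ^ 2 - 2 * ε * ⟪z - x, ν⟫ + ε ^ 2 := by
    rw [← norm_neg, show -(x + ε • ν - z) = z - x - ε • ν by abel, norm_sub_sq_real,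
      real_inner_smul_right, norm_smul, h.isFrame.norm_right, Real.norm_of_nonneg h.pos.le]
    ring
  nlinarith [h.pos]

/-- The complement of the two discs of radius `ε` touching at `x` is a pair of cusps. -/
theorem two_mul_abs_inner_le_norm_sq (h : IsPinch E ε x ξ ν) (hz : z ∉ thickening ε E) :
    2 * ε * |⟪z - x, ν⟫| ≤ ‖z - x‖ ^ 2 := by
  have hneg := h.neg_right.two_mul_inner_le_norm_sq hz
  rw [inner_neg_right] at hneg
  rcases abs_cases ⟪z - x, ν⟫ with ⟨heq, -⟩ | ⟨heq, -⟩ <;> rw [heq]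
  · exact h.two_mul_inner_le_norm_sq hz
  · exact hneg

theorem norm_sq_le_two_mul_inner_sq (h : IsPinch E ε x ξ ν) (hz : z ∉ thickening ε E)
    (hzx : ‖z - x‖ ≤ ε) : ‖z - x‖ ^ 2 ≤ 2 * ⟪z - x, ξ⟫ ^ 2 := by
  have hthin := h.two_mul_abs_inner_le_norm_sq hz
  have habs : 2 * |⟪z - x, ν⟫| ≤ ‖z - x‖ := by
    by_contra! hlt
    nlinarith [norm_nonneg (z - x), h.pos]
  have := h.isFrame.norm_sq_eq (z - x)
  nlinarith [abs_nonneg ⟪z - x, ν⟫, sq_abs ⟪z - x, ν⟫]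

theorem eq_or_eq_neg_of_mem_outwardDirs (h : IsPinch E ε x ξ ν) (hη : η ∈ outwardDirs E ε x) :
    η = ξ ∨ η = -ξ := by
  have hadd := inner_nonpos_of_mem_outwardDirs h.pos h.mem_frontier hη h.add_mem_inter_sphere
  have hsub := inner_nonpos_of_mem_outwardDirs h.pos h.mem_frontier hη h.sub_mem_inter_sphere
  rw [add_sub_cancel_left, real_inner_smul_left] at hadd
  rw [sub_sub_cancel_left, inner_neg_left, real_inner_smul_left] at hsub
  have hν : ⟪η, ν⟫ = 0 := by
    rw [real_inner_comm]
    nlinarith [h.pos]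
  have hξ : ⟪η, ξ⟫ ^ 2 = 1 := by
    have := h.isFrame.norm_sq_eq η
    rw [hη.1, hν] at this
    linarith
  rwa [sq_eq_one_iff, inner_eq_one_iff_of_norm_eq_one hη.1 h.isFrame.norm_left,
    inner_eq_neg_one_iff_of_norm_eq_one hη.1 h.isFrame.norm_left] at hξ

theorem eventually_inner_pos_of_neg_notMem (h : IsPinch E ε x ξ ν)
    (hξ : -ξ ∉ outwardDirs E ε x) : ∀ᶠ z in 𝓝[(eNbhd E ε)ᶜ] x, 0 < ⟪z - x, ξ⟫ := by
  by_contra hfreq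
  simp only [not_eventually, not_lt] at hfreq
  obtain ⟨η, hη, hηξ⟩ :=
    exists_mem_outwardDirs_inner_nonpos (mem_frontier_eNbhd_iff.1 h.mem_frontier).1 hfreq
  rcases h.eq_or_eq_neg_of_mem_outwardDirs hη with rfl | rfl
  · norm_num [h.isFrame.norm_left] at hηξ
  · exact hξ hη

theorem inner_eq_zero_of_mem_outwardDirs (h : IsPinch E ε x ξ ν) (hη : η ∈ outwardDirs E ε x) :
    ⟪η, ν⟫ = 0 := by
  rcases h.eq_or_eq_neg_of_mem_outwardDirs hη with rfl | rfl
  · exact h.isFrame.inner_eq_zero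
  · exact h.isFrame.neg_left.inner_eq_zero

theorem extOutward_eq (h : IsPinch E ε x ξ ν) (hE : IsClosed E) :
    extOutward E ε x = outwardDirs E ε x := by
  refine sep_eq_self_iff_mem_true.2 fun η hη ↦ ⟨x + ε • ν, ?_, ?_⟩
  · rw [contributors_eq_inter_sphere hE h.pos h.mem_frontier]
    exact h.add_mem_inter_sphere
  · rw [add_sub_cancel_left, real_inner_smul_left, real_inner_comm,
      h.inner_eq_zero_of_mem_outwardDirs hη, mul_zero]

theorem extOutward_eq_singleton (h : IsPinch E ε x ξ ν) (hE : IsClosed E)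
    (hξ : ξ ∈ outwardDirs E ε x) (hneg : -ξ ∉ outwardDirs E ε x) :
    extOutward E ε x = {ξ} := by
  rw [h.extOutward_eq hE, eq_singleton_iff_unique_mem]
  exact ⟨hξ, fun η hη ↦ (h.eq_or_eq_neg_of_mem_outwardDirs hη).resolve_right
    (by rintro rfl; exact hneg hη)⟩

theorem extOutward_eq_pair (h : IsPinch E ε x ξ ν) (hE : IsClosed E)
    (hξ : ξ ∈ outwardDirs E ε x) (hneg : -ξ ∈ outwardDirs E ε x) :
    extOutward E ε x = {ξ, -ξ} := by
  rw [h.extOutward_eq hE]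
  refine Subset.antisymm (fun η hη ↦ h.eq_or_eq_neg_of_mem_outwardDirs hη) ?_
  exact pair_subset hξ hneg

theorem extContrib_eq (h : IsPinch E ε x ξ ν) (hE : IsClosed E) :
    extContrib E ε x = {x + ε • ν, x - ε • ν} := by
  have hcontr := contributors_eq_inter_sphere hE h.pos h.mem_frontier
  obtain ⟨η, hη⟩ := nonempty_outwardDirs h.mem_frontier
  have hην := h.inner_eq_zero_of_mem_outwardDirs hη
  have hνη : IsFrame ν η := ⟨h.isFrame.norm_right, hη.1, by rw [real_inner_comm, hην]⟩
  refine Subset.antisymm ?_ (pair_subset ⟨?_, η, hη, ?_⟩ ⟨?_, η, hη, ?_⟩)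
  · rintro y ⟨hy, ζ, hζ, hyζ⟩
    have hyη : ⟪y - x, ξ⟫ = 0 := by
      rcases h.eq_or_eq_neg_of_mem_outwardDirs hζ with rfl | rfl
      · exact hyζ
      · simpa using hyζ
    have hyν : ⟪y - x, ν⟫ ^ 2 = ε ^ 2 := by
      have := h.isFrame.norm_sq_eq (y - x)
      rw [hy.2, hyη] at this
      linarith
    have heq := h.isFrame.eq_smul_right_of_inner_left_eq_zero hyη
    rcases sq_eq_sq_iff_eq_or_eq_neg.1 hyν with hpos | hneg
    · exact .inl (by rw [← hpos, ← heq, add_sub_cancel])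
    · exact .inr (by rw [mem_singleton_iff, sub_eq_add_neg, ← neg_smul, ← hneg, ← heq,
        add_sub_cancel])
  · exact hcontr ▸ h.add_mem_inter_sphere
  · rw [add_sub_cancel_left, real_inner_smul_left, hνη.inner_eq_zero, mul_zero]
  · exact hcontr ▸ h.sub_mem_inter_sphere
  · rw [sub_sub_cancel_left, inner_neg_left, real_inner_smul_left, hνη.inner_eq_zero, mul_zero,
      neg_zero]

end IsPinch

theorem isSingularity_of_ne (hE : IsClosed E) (hε : 0 < ε) (hu : u ∈ frontier (eNbhd E ε))
    {y₁ y₂ : Plane} (hy₁ : y₁ ∈ E ∩ sphere u ε) (hy₂ : y₂ ∈ E ∩ sphere u ε) (hne : y₁ ≠ y₂) :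
    IsSingularity E ε u := by
  refine ⟨hu, fun hsmooth ↦ ?_⟩
  obtain ⟨-, y, hy⟩ := hsmooth.1
  rw [contributors_eq_inter_sphere hE hε hu] at hy
  rw [hy] at hy₁ hy₂
  exact hne (hy₁.trans hy₂.symm)

theorem IsPinch.isSingularity (h : IsPinch E ε x ξ ν) (hE : IsClosed E) : IsSingularity E ε x := by
  refine isSingularity_of_ne hE h.pos h.mem_frontier h.add_mem_inter_sphere
    h.sub_mem_inter_sphere fun heq ↦ ?_
  have hinner : ⟪x + ε • ν - x, ν⟫ = ⟪x - ε • ν - x, ν⟫ := by rw [heq]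
  simp only [add_sub_cancel_left, sub_sub_cancel_left, inner_neg_left, real_inner_smul_left,
    real_inner_self_eq_norm_sq, h.isFrame.norm_right] at hinner
  linarith [h.pos]

theorem exists_isEscapeDir_of_add_notMem (hE : IsClosed E) (hε : 0 < ε)
    (hu : u ∈ frontier (eNbhd E ε)) (hξ : ξ ∈ outwardDirs E ε u) (hframe : IsFrame ξ ν)
    (hν : u + ε • ν ∉ E) : ∃ d, IsEscapeDir E ε u d := by
  -- The only contributor `y` with `⟪y - u, ξ⟫ = 0 ≤ ⟪y - u, ν⟫` would be `u + ε • ν`; without it,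
  -- tilting `ξ` slightly towards `ν` gives an escape direction.
  have hle (y) (hy : y ∈ E ∩ sphere u ε) : ⟪y - u, ξ⟫ ≤ 0 :=
    inner_nonpos_of_mem_outwardDirs hε hu hξ hy
  have hlt : ∀ y ∈ (E ∩ sphere u ε) ∩ {y | 0 ≤ ⟪y - u, ν⟫}, ⟪y - u, ξ⟫ < 0 := by
    refine fun y ⟨hy, hyν⟩ ↦ (hle y hy).lt_of_ne fun hyξ ↦ hν ?_
    have hnorm : ⟪y - u, ν⟫ = ε := by
      have := hframe.norm_sq_eq (y - u)
      rw [mem_sphere_iff_norm.1 hy.2, hyξ, zero_pow two_ne_zero, zero_add] at this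
      exact (sq_eq_sq₀ hyν hε.le).1 this.symm
    rw [← hnorm, ← hframe.eq_smul_right_of_inner_left_eq_zero hyξ, add_sub_cancel]
    exact hy.1
  have hK : IsCompact ((E ∩ sphere u ε) ∩ {y | 0 ≤ ⟪y - u, ν⟫}) :=
    (isCompact_inter_sphere hE).inter_right (isClosed_le continuous_const (by fun_prop))
  have htilt : ∀ᶠ t : ℝ in 𝓝 0, ∀ y ∈ (E ∩ sphere u ε) ∩ {y | 0 ≤ ⟪y - u, ν⟫},
      ⟪y - u, ξ + t • ν⟫ < 0 := by
    refine hK.eventually_forall_of_forall_eventually fun y hy ↦ ?_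
    have hcont : ContinuousAt (fun p : ℝ × Plane ↦ ⟪p.2 - u, ξ + p.1 • ν⟫) (0, y) := by fun_prop
    exact hcont.eventually_lt_const (by simpa using hlt y hy)
  obtain ⟨t, ht, htpos⟩ :=
    ((htilt.filter_mono nhdsWithin_le_nhds).and (self_mem_nhdsWithin (s := Ioi 0))).exists
  refine ⟨ξ + t • ν, fun y hy ↦ ?_⟩
  rcases le_or_gt 0 ⟪y - u, ν⟫ with hpos | hneg
  · exact ht y ⟨hy, hpos⟩
  · rw [inner_add_right, real_inner_smul_right]
    linarith [hle y hy, mul_neg_of_pos_of_neg (mem_Ioi.1 htpos) hneg]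

theorem exists_isEscapeDir_or_exists_isPinch (hE : IsClosed E) (hε : 0 < ε)
    (hu : u ∈ frontier (eNbhd E ε)) (hξ : ξ ∈ outwardDirs E ε u) :
    (∃ d, IsEscapeDir E ε u d) ∨ ∃ ν, IsPinch E ε u ξ ν := by
  obtain ⟨ν, hframe⟩ := IsFrame.exists_right hξ.1
  by_cases hadd : u + ε • ν ∈ E
  · by_cases hsub : u - ε • ν ∈ E
    · exact .inr ⟨ν, hε, hu, hframe, hadd, hsub⟩
    · refine .inl (exists_isEscapeDir_of_add_notMem hE hε hu hξ hframe.neg_right ?_)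
      rwa [smul_neg, ← sub_eq_add_neg]
  · exact .inl (exists_isEscapeDir_of_add_notMem hE hε hu hξ hframe hadd)

end Pinch

section ExtremalContributors

theorem mul_lt_mul_of_sq_add_sq_eq {a b a₁ b₁ : ℝ} (ha : a < 0) (ha₁ : a₁ < 0)
    (h : a ^ 2 + b ^ 2 = a₁ ^ 2 + b₁ ^ 2) (hb : b < b₁) : a * b₁ < a₁ * b := by
  rcases le_or_gt b 0 with hb0 | hb0
  · rcases lt_or_ge 0 b₁ with hb₁ | hb₁
    · exact (mul_neg_of_neg_of_pos ha hb₁).trans_le (mul_nonneg_of_nonpos_of_nonpos ha₁.le hb0)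
    · have : a₁ < a := by nlinarith
      nlinarith
  · have : a < a₁ := by nlinarith
    nlinarith

variable {E : Set Plane} {ε : ℝ} {u e f y y₁ n c : Plane}

namespace IsEscapeDir

theorem eq_or_inner_mul_lt_of_isMaxOn (he : IsEscapeDir E ε u e) (hef : IsFrame e f)
    (hy₁ : y₁ ∈ E ∩ sphere u ε) (hmax : IsMaxOn (⟪· - u, f⟫) (E ∩ sphere u ε) y₁)
    (hy : y ∈ E ∩ sphere u ε) :
    y = y₁ ∨ ⟪y - u, e⟫ * ⟪y₁ - u, f⟫ < ⟪y₁ - u, e⟫ * ⟪y - u, f⟫ := by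
  have hnorm : ⟪y - u, e⟫ ^ 2 + ⟪y - u, f⟫ ^ 2 = ⟪y₁ - u, e⟫ ^ 2 + ⟪y₁ - u, f⟫ ^ 2 := by
    rw [← hef.norm_sq_eq, ← hef.norm_sq_eq, mem_sphere_iff_norm.1 hy.2,
      mem_sphere_iff_norm.1 hy₁.2]
  rcases (show ⟪y - u, f⟫ ≤ ⟪y₁ - u, f⟫ from hmax hy).eq_or_lt with heq | hlt
  · have hsq : ⟪y - u, e⟫ ^ 2 = ⟪y₁ - u, e⟫ ^ 2 := by rwa [heq, add_left_inj] at hnorm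
    have hcoord : ⟪y - u, e⟫ = ⟪y₁ - u, e⟫ := by nlinarith [he y hy, he y₁ hy₁]
    exact .inl (sub_left_inj.1 (hef.ext hcoord heq))
  · exact .inr (mul_lt_mul_of_sq_add_sq_eq (he y hy) (he y₁ hy₁) hnorm hlt)

theorem inner_mul_le_of_isMaxOn (he : IsEscapeDir E ε u e) (hef : IsFrame e f)
    (hy₁ : y₁ ∈ E ∩ sphere u ε) (hmax : IsMaxOn (⟪· - u, f⟫) (E ∩ sphere u ε) y₁)
    (hy : y ∈ E ∩ sphere u ε) :
    ⟪y - u, e⟫ * ⟪y₁ - u, f⟫ ≤ ⟪y₁ - u, e⟫ * ⟪y - u, f⟫ := by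
  rcases he.eq_or_inner_mul_lt_of_isMaxOn hef hy₁ hmax hy with rfl | hlt
  · exact le_rfl
  · exact hlt.le

theorem mem_extContrib_of_isMaxOn (he : IsEscapeDir E ε u e) (hE : IsClosed E) (hε : 0 < ε)
    (hu : u ∈ frontier (eNbhd E ε)) (hef : IsFrame e f) (hy₁ : y₁ ∈ E ∩ sphere u ε)
    (hmax : IsMaxOn (⟪· - u, f⟫) (E ∩ sphere u ε) y₁) : y₁ ∈ extContrib E ε u := by
  set c : Plane := ε⁻¹ • (⟪y₁ - u, f⟫ • e + -⟪y₁ - u, e⟫ • f) with hc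
  have hinner (y : Plane) :
      ⟪y - u, c⟫ = ε⁻¹ * (⟪y - u, e⟫ * ⟪y₁ - u, f⟫ - ⟪y₁ - u, e⟫ * ⟪y - u, f⟫) := by
    simp only [hc, inner_add_right, real_inner_smul_right]
    ring
  have hcnorm : ‖c‖ = 1 := by
    have hsq : ‖⟪y₁ - u, f⟫ • e + -⟪y₁ - u, e⟫ • f‖ ^ 2 = ε ^ 2 := by
      rw [hef.norm_sq_eq, hef.inner_smul_add_smul_left, hef.inner_smul_add_smul_right, neg_sq,
        add_comm, ← hef.norm_sq_eq, mem_sphere_iff_norm.1 hy₁.2]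
    rw [hc, norm_smul, (sq_eq_sq₀ (norm_nonneg _) hε.le).1 hsq, norm_inv,
      Real.norm_of_nonneg hε.le, inv_mul_cancel₀ hε.ne']
  refine ⟨contributors_eq_inter_sphere hE hε hu ▸ hy₁, c, ?_, by rw [hinner]; ring⟩
  refine he.mem_outwardDirs_of_inner_nonpos hE hε hu hcnorm fun y hy ↦ ?_
  rw [hinner]
  exact mul_nonpos_of_nonneg_of_nonpos (by positivity)
    (sub_nonpos.2 (he.inner_mul_le_of_isMaxOn hef hy₁ hmax hy))

theorem eq_of_inner_eq_zero_of_isMaxOn (he : IsEscapeDir E ε u e) (hef : IsFrame e f)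
    (hy₁ : y₁ ∈ E ∩ sphere u ε) (hmax : IsMaxOn (⟪· - u, f⟫) (E ∩ sphere u ε) y₁)
    (hc : ⟪y₁ - u, c⟫ ≤ 0) (hcf : 0 < ⟪c, f⟫) (hy : y ∈ E ∩ sphere u ε) (hyc : ⟪y - u, c⟫ = 0) :
    y = y₁ := by
  refine (he.eq_or_inner_mul_lt_of_isMaxOn hef hy₁ hmax hy).resolve_right fun hlt ↦ ?_
  rw [hef.inner_eq] at hc hyc
  have hidentity : ⟪y - u, e⟫ * (⟪y₁ - u, e⟫ * ⟪c, e⟫ + ⟪y₁ - u, f⟫ * ⟪c, f⟫) =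
      (⟪y - u, e⟫ * ⟪y₁ - u, f⟫ - ⟪y₁ - u, e⟫ * ⟪y - u, f⟫) * ⟪c, f⟫ := by
    linear_combination ⟪y₁ - u, e⟫ * hyc
  linarith [mul_nonneg_of_nonpos_of_nonpos (he y hy).le hc,
    mul_neg_of_neg_of_pos (sub_neg.2 hlt) hcf]

theorem inner_pos_of_isMaxOn (he : IsEscapeDir E ε u e) (hef : IsFrame e f)
    (hy₁ : y₁ ∈ E ∩ sphere u ε) (hmax : IsMaxOn (⟪· - u, f⟫) (E ∩ sphere u ε) y₁)
    (hnf : ⟪n, f⟫ ≤ 0) (hn : 0 < ⟪y₁ - u, n⟫) (hy : y ∈ E ∩ sphere u ε) : 0 < ⟪y - u, n⟫ := by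
  have hle := he.inner_mul_le_of_isMaxOn hef hy₁ hmax hy
  rw [hef.inner_eq] at hn ⊢
  refine pos_of_mul_neg_right (a := ⟪y₁ - u, e⟫) ?_ (he y₁ hy₁).le
  nlinarith [mul_neg_of_neg_of_pos (he y hy) hn,
    mul_nonpos_of_nonneg_of_nonpos (sub_nonneg.2 hle) hnf]

theorem extContrib_eq_pair (he : IsEscapeDir E ε u e) (hE : IsClosed E) (hε : 0 < ε)
    (hu : u ∈ frontier (eNbhd E ε)) (hef : IsFrame e f) {y₂ : Plane}
    (hy₁ : y₁ ∈ E ∩ sphere u ε) (hmax : IsMaxOn (⟪· - u, f⟫) (E ∩ sphere u ε) y₁)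
    (hy₂ : y₂ ∈ E ∩ sphere u ε) (hmin : IsMaxOn (⟪· - u, -f⟫) (E ∩ sphere u ε) y₂) :
    extContrib E ε u = {y₁, y₂} := by
  refine Subset.antisymm ?_ (pair_subset (he.mem_extContrib_of_isMaxOn hE hε hu hef hy₁ hmax)
    (he.mem_extContrib_of_isMaxOn hE hε hu hef.neg_right hy₂ hmin))
  rintro y ⟨hy, c, hc, hyc⟩
  rw [contributors_eq_inter_sphere hE hε hu] at hy
  have hnonpos {y : Plane} (hy : y ∈ E ∩ sphere u ε) := inner_nonpos_of_mem_outwardDirs hε hu hc hy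
  rcases lt_trichotomy ⟪c, f⟫ 0 with hneg | hzero | hpos
  · refine .inr (he.eq_of_inner_eq_zero_of_isMaxOn hef.neg_right hy₂ hmin (hnonpos hy₂) ?_ hy hyc)
    simpa using hneg
  · have hce : ⟪c, e⟫ ^ 2 = 1 := by simpa [hzero, hc.1] using (hef.norm_sq_eq c).symm
    have hmul : ⟪y - u, e⟫ * ⟪c, e⟫ = 0 := by simpa [hef.inner_eq (y - u) c, hzero] using hyc
    rw [(mul_eq_zero_iff_left (he y hy).ne).1 hmul] at hce
    norm_num at hce
  · exact .inl (he.eq_of_inner_eq_zero_of_isMaxOn hef hy₁ hmax (hnonpos hy₁) hpos hy hyc)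

theorem exists_extContrib_eq_pair (hE : IsClosed E) (hε : 0 < ε)
    (hu : u ∈ frontier (eNbhd E ε)) (hd : ∃ d, IsEscapeDir E ε u d) :
    ∃ y₁ ∈ E ∩ sphere u ε, ∃ y₂ ∈ E ∩ sphere u ε, extContrib E ε u = {y₁, y₂} ∧
      ∀ n, 0 < ⟪y₁ - u, n⟫ → 0 < ⟪y₂ - u, n⟫ → ∀ y ∈ E ∩ sphere u ε, 0 < ⟪y - u, n⟫ := by
  obtain ⟨d, hd⟩ := hd
  have hd0 : 0 < ‖d‖ := norm_pos_iff.2 (hd.ne_zero hE hε hu)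
  have he : IsEscapeDir E ε u (‖d‖⁻¹ • d) := fun y hy ↦ by
    rw [real_inner_smul_right]
    exact mul_neg_of_pos_of_neg (inv_pos.2 hd0) (hd y hy)
  obtain ⟨f, hef⟩ := IsFrame.exists_right (hd.normalize_mem_outwardDirs hE hε hu).1
  have hS := isCompact_inter_sphere (u := u) (ε := ε) hE
  have hne := nonempty_inter_sphere_of_mem_frontier hE hε hu
  obtain ⟨y₁, hy₁, hmax⟩ := hS.exists_isMaxOn hne (f := (⟪· - u, f⟫)) (by fun_prop)
  obtain ⟨y₂, hy₂, hmin⟩ := hS.exists_isMaxOn hne (f := (⟪· - u, -f⟫)) (by fun_prop)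
  refine ⟨y₁, hy₁, y₂, hy₂, he.extContrib_eq_pair hE hε hu hef hy₁ hmax hy₂ hmin, ?_⟩
  intro n hn₁ hn₂ y hy
  rcases le_total ⟪n, f⟫ 0 with hnf | hnf
  · exact he.inner_pos_of_isMaxOn hef hy₁ hmax hnf hn₁ hy
  · exact he.inner_pos_of_isMaxOn hef.neg_right hy₂ hmin (by simpa using hnf) hn₂ hy

end IsEscapeDir

/-- The positivity clause says that the contributors lie in the cone spanned by the two extremal
ones; it is vacuous when these are antipodal. -/
theorem exists_extContrib_eq_pair (hE : IsClosed E) (hε : 0 < ε)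
    (hu : u ∈ frontier (eNbhd E ε)) :
    ∃ y₁ ∈ E ∩ sphere u ε, ∃ y₂ ∈ E ∩ sphere u ε, extContrib E ε u = {y₁, y₂} ∧
      ∀ n, 0 < ⟪y₁ - u, n⟫ → 0 < ⟪y₂ - u, n⟫ → ∀ y ∈ E ∩ sphere u ε, 0 < ⟪y - u, n⟫ := by
  obtain ⟨ξ, hξ⟩ := nonempty_outwardDirs hu
  rcases exists_isEscapeDir_or_exists_isPinch hE hε hu hξ with hd | ⟨ν, h⟩
  · exact IsEscapeDir.exists_extContrib_eq_pair hE hε hu hd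
  · refine ⟨u + ε • ν, h.add_mem_inter_sphere, u - ε • ν, h.sub_mem_inter_sphere,
      h.extContrib_eq hE, fun n hadd hsub ↦ ?_⟩
    rw [add_sub_cancel_left] at hadd
    rw [sub_sub_cancel_left, inner_neg_left] at hsub
    exact absurd hsub (by linarith)

end ExtremalContributors

section Cuts

variable {E V : Set Plane} {ε : ℝ} {x u z ξ ν : Plane}

/-- Arbitrarily close to `x`, some line orthogonal to `ξ` on the side of `x` towards `ξ` misses the
complement of `E_ε` locally; a component of the complement cannot cross such a line. -/
def HasCuts (E : Set Plane) (ε : ℝ) (x ξ : Plane) : Prop :=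
  ∃ᶠ s in 𝓝[>] (0 : ℝ), ∀ z ∉ eNbhd E ε, ‖z - x‖ < ε → ⟪z - x, ξ⟫ ≠ s

namespace IsPinch

theorem notMem_closure_of_hasCuts (h : IsPinch E ε x ξ ν) (hpos : HasCuts E ε x ξ)
    (hneg : HasCuts E ε x (-ξ)) (hV : IsPreconnected V) (hVE : V ⊆ (eNbhd E ε)ᶜ)
    (hne : V.Nonempty) : x ∉ closure V := by
  intro hxV
  obtain ⟨z₀, hz₀⟩ := hne
  have hz₀x : z₀ - x ≠ 0 := fun h0 ↦
    hVE hz₀ (sub_eq_zero.1 h0 ▸ (mem_frontier_eNbhd_iff.1 h.mem_frontier).1)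
  obtain ⟨r, hr, hrε, hrz₀⟩ : ∃ r > 0, r ≤ ε ∧ r ≤ ‖z₀ - x‖ :=
    ⟨min ε ‖z₀ - x‖, lt_min h.pos (norm_pos_iff.2 hz₀x), min_le_left _ _, min_le_right _ _⟩
  have hsmall : ∀ᶠ s in 𝓝[>] (0 : ℝ), s ∈ Ioo 0 (r / 2) := Ioo_mem_nhdsGT (half_pos hr)
  obtain ⟨s, hs, hs0, hsr⟩ := (hpos.and_eventually hsmall).exists
  obtain ⟨t, ht, ht0, htr⟩ := (hneg.and_eventually hsmall).exists
  have hcont : Continuous fun z : Plane ↦ ⟪z - x, ξ⟫ := by fun_prop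
  set Q : Set Plane := ball x r ∩ (fun z ↦ ⟪z - x, ξ⟫) ⁻¹' Ioo (-t) s with hQ
  have hQ_open : IsOpen Q := isOpen_ball.inter (isOpen_Ioo.preimage hcont)
  have hQ_closure : closure Q ⊆ closedBall x r ∩ (fun z ↦ ⟪z - x, ξ⟫) ⁻¹' Icc (-t) s :=
    closure_minimal (inter_subset_inter ball_subset_closedBall (preimage_mono Ioo_subset_Icc_self))
      (isClosed_closedBall.inter (isClosed_Icc.preimage hcont))
  have hxQ : x ∈ Q := by simp [hQ, hr, hs0, ht0]
  have hVQ : (V ∩ Q).Nonempty := by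
    rw [inter_comm]
    exact mem_closure_iff.1 hxV Q hQ_open hxQ
  refine hrz₀.not_gt (mem_ball_iff_norm.1 (hV.subset_of_closure_inter_subset hQ_open hVQ ?_ hz₀).1)
  rintro z ⟨hzQ, hzV⟩
  obtain ⟨hzr, hzt, hzs⟩ := hQ_closure hzQ
  rw [mem_closedBall_iff_norm] at hzr
  have hthin := h.norm_sq_le_two_mul_inner_sq
    (notMem_thickening_of_mem_closure_compl h.pos (subset_closure (hVE hzV))) (hzr.trans hrε)
  have hinner : ⟪z - x, ξ⟫ ^ 2 ≤ (r / 2) ^ 2 := sq_le_sq' (by linarith) (by linarith)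
  have hzr' : ‖z - x‖ < r := by nlinarith
  have hzs' := hs z (hVE hzV) (hzr'.trans_le hrε)
  have hzt' := ht z (hVE hzV) (hzr'.trans_le hrε)
  rw [inner_neg_right, Ne, neg_eq_iff_eq_neg] at hzt'
  exact ⟨mem_ball_iff_norm.2 hzr', hzt.lt_of_ne' hzt', hzs.lt_of_ne hzs'⟩

theorem hasCuts_neg (h : IsPinch E ε x ξ ν) (hξ : -ξ ∉ outwardDirs E ε x) :
    HasCuts E ε x (-ξ) := by
  obtain ⟨r, hr, hball⟩ := Metric.mem_nhdsWithin_iff.1 (h.eventually_inner_pos_of_neg_notMem hξ)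
  have hsmall : ∀ᶠ s in 𝓝[>] (0 : ℝ), s ∈ Ioo 0 (r / 2) := Ioo_mem_nhdsGT (half_pos hr)
  refine (hsmall.mono fun s ⟨hs0, hsr⟩ z hz hzx hzs ↦ ?_).frequently
  rw [inner_neg_right] at hzs
  have hthin := h.norm_sq_le_two_mul_inner_sq
    (notMem_thickening_of_mem_closure_compl h.pos (subset_closure hz)) hzx.le
  have hzr : ‖z - x‖ < r := by nlinarith
  have hpos : 0 < ⟪z - x, ξ⟫ := hball ⟨mem_ball_iff_norm.2 hzr, hz⟩
  linarith

theorem inner_ne_of_mem_inter_sphere (h : IsPinch E ε x ξ ν) (hu : u ∉ thickening ε E)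
    (hux : ‖u - x‖ ≤ ε) {a b : Plane} (ha : a ∈ E ∩ sphere u ε) (hb : b ∈ E ∩ sphere u ε)
    (haν : ε / 2 ≤ ⟪a - u, ν⟫) (hbν : ⟪b - u, ν⟫ ≤ -(ε / 2)) (hz : z ∉ eNbhd E ε)
    (hzx : ‖z - x‖ ≤ ε) : ⟪z - x, ξ⟫ ≠ ⟪u - x, ξ⟫ := by
  -- On the line through `u` orthogonal to `ξ`, the closed discs of radius `ε` about `a` and `b`
  -- cover everything that is not already covered by the two discs pinching `x`.
  intro hzu
  have hline : ⟪z - u, ξ⟫ = 0 := by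
    rw [← sub_sub_sub_cancel_right z u x, inner_sub_left, hzu, sub_self]
  have hthin : |⟪z - u, ν⟫| ≤ ε := by
    have hzthin := h.two_mul_abs_inner_le_norm_sq
      (notMem_thickening_of_mem_closure_compl h.pos (subset_closure hz))
    have huthin := h.two_mul_abs_inner_le_norm_sq hu
    rw [← sub_sub_sub_cancel_right z u x, inner_sub_left]
    refine (abs_sub _ _).trans ?_
    nlinarith [h.pos, norm_nonneg (z - x), norm_nonneg (u - x)]
  rcases le_total 0 ⟪z - u, ν⟫ with hpos | hneg
  · refine (lt_norm_sub_of_notMem_eNbhd h.pos hz ha.1).not_ge ?_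
    exact h.isFrame.norm_sub_le_of_half_le_inner (mem_sphere_iff_norm.1 ha.2) haν hline hpos
      (le_of_abs_le hthin)
  · refine (lt_norm_sub_of_notMem_eNbhd h.pos hz hb.1).not_ge ?_
    refine h.isFrame.neg_right.norm_sub_le_of_half_le_inner (mem_sphere_iff_norm.1 hb.2)
      ?_ hline ?_ ?_ <;> rw [inner_neg_right]
    · linarith
    · linarith
    · exact (neg_le_abs _).trans hthin

end IsPinch
theorem isPinch_of_add_mem_of_sub_mem (hε : 0 < ε) (hx : x ∈ frontier (eNbhd E ε))
    (hξ : ξ ∈ outwardDirs E ε x) {e : Plane} (he : ‖e‖ = ε) (hadd : x + e ∈ E)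
    (hsub : x - e ∈ E) : IsPinch E ε x ξ (ε⁻¹ • e) := by
  have hle : ⟪x + e - x, ξ⟫ ≤ 0 :=
    inner_nonpos_of_mem_outwardDirs hε hx hξ ⟨hadd, by simpa using he⟩
  have hge : ⟪x - e - x, ξ⟫ ≤ 0 :=
    inner_nonpos_of_mem_outwardDirs hε hx hξ ⟨hsub, by simpa using he⟩
  rw [add_sub_cancel_left] at hle
  rw [sub_sub_cancel_left, inner_neg_left, neg_nonpos] at hge
  have heq : ε • ε⁻¹ • e = e := smul_inv_smul₀ hε.ne' e
  refine ⟨hε, hx, ⟨hξ.1, ?_, ?_⟩, heq.symm ▸ hadd, heq.symm ▸ hsub⟩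
  · rw [norm_smul, norm_inv, Real.norm_of_nonneg hε.le, he, inv_mul_cancel₀ hε.ne']
  · rw [real_inner_smul_right, real_inner_comm, hle.antisymm hge, mul_zero]

theorem exists_isPinch_of_isChainSeq (hE : IsClosed E) (hε : 0 < ε)
    (hx : x ∈ frontier (eNbhd E ε)) (hξ : ξ ∈ outwardDirs E ε x) {v : ℕ → Plane}
    (hv : IsChainSeq E ε x v) :
    ∃ ν, IsPinch E ε x ξ ν ∧ ∃ᶠ n in atTop, ∃ a ∈ E ∩ sphere (v n) ε, ∃ b ∈ E ∩ sphere (v n) ε,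
      ε / 2 ≤ ⟪a - v n, ν⟫ ∧ ⟪b - v n, ν⟫ ≤ -(ε / 2) := by
  obtain ⟨hsing, -, hvx, a, b, hext, hanti⟩ := hv
  have hcontr (n : ℕ) : extContrib E ε (v n) ⊆ E ∩ sphere (v n) ε :=
    contributors_eq_inter_sphere hE hε (hsing n).1 ▸ sep_subset _ _
  have ha (n : ℕ) : a n ∈ E ∩ sphere (v n) ε := hcontr n (hext n ▸ .inl rfl)
  have hb (n : ℕ) : b n ∈ E ∩ sphere (v n) ε := hcontr n (hext n ▸ .inr rfl)
  rw [tendsto_inner_smul_smul_neg_one_iff hε.ne' (fun n ↦ mem_sphere_iff_norm.1 (ha n).2)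
    (fun n ↦ mem_sphere_iff_norm.1 (hb n).2)] at hanti
  obtain ⟨e, he, φ, hφ, hae⟩ := (isCompact_sphere (0 : Plane) ε).tendsto_subseq
    (x := fun n ↦ a n - v n) fun n ↦ by simpa [dist_eq_norm] using (ha n).2
  have hbe : Tendsto (fun n ↦ b (φ n) - v (φ n)) atTop (𝓝 (-e)) := by
    simpa using (hanti.comp hφ.tendsto_atTop).sub hae
  have hvφ := hvx.comp hφ.tendsto_atTop
  have hadd : x + e ∈ E :=
    hE.mem_of_tendsto (hvφ.add hae) (.of_forall fun n ↦ by simpa using (ha (φ n)).1)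
  have hsub : x - e ∈ E := sub_eq_add_neg x e ▸
    hE.mem_of_tendsto (hvφ.add hbe) (.of_forall fun n ↦ by simpa using (hb (φ n)).1)
  rw [mem_sphere_zero_iff_norm] at he
  have hee : ⟪e, ε⁻¹ • e⟫ = ε := by
    rw [real_inner_smul_right, real_inner_self_eq_norm_sq, he]
    field_simp
  refine ⟨ε⁻¹ • e, isPinch_of_add_mem_of_sub_mem hε hx hξ he hadd hsub, ?_⟩
  refine hφ.tendsto_atTop.frequently (Eventually.frequently ?_)
  have halim : Tendsto (fun n ↦ ⟪a (φ n) - v (φ n), ε⁻¹ • e⟫) atTop (𝓝 ε) := by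
    simpa only [hee, Function.comp_apply] using
      hae.inner (𝕜 := ℝ) (tendsto_const_nhds (x := ε⁻¹ • e))
  have hblim : Tendsto (fun n ↦ ⟪b (φ n) - v (φ n), ε⁻¹ • e⟫) atTop (𝓝 (-ε)) := by
    simpa only [inner_neg_left, hee] using hbe.inner (𝕜 := ℝ) (tendsto_const_nhds (x := ε⁻¹ • e))
  filter_upwards [halim.eventually_const_lt (half_lt_self hε),
    hblim.eventually_lt_const (neg_lt_neg (half_lt_self hε))] with n han hbn
  exact ⟨a (φ n), ha _, b (φ n), hb _, han.le, hbn.le⟩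

theorem hasCuts_of_isChainSeq (hE : IsClosed E) (hε : 0 < ε) (hx : x ∈ frontier (eNbhd E ε))
    (hξ : ξ ∈ outwardDirs E ε x) {v : ℕ → Plane} (hv : IsChainSeq E ε x v)
    (hpos : ∀ᶠ n in atTop, 0 < ⟪v n - x, ξ⟫) : HasCuts E ε x ξ := by
  obtain ⟨ν, hpinch, hfreq⟩ := exists_isPinch_of_isChainSeq hE hε hx hξ hv
  obtain ⟨hsing, -, hvx, -⟩ := hv
  have hvx0 : Tendsto (fun n ↦ v n - x) atTop (𝓝 0) := by simpa using hvx.sub_const x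
  have hlevel : Tendsto (fun n ↦ ⟪v n - x, ξ⟫) atTop (𝓝[>] 0) := by
    refine tendsto_nhdsWithin_iff.2 ⟨?_, hpos⟩
    simpa using hvx0.inner (𝕜 := ℝ) (tendsto_const_nhds (x := ξ))
  have hnear : ∀ᶠ n in atTop, ‖v n - x‖ < ε :=
    hvx0.norm.eventually_lt_const (by simpa using hε)
  refine hlevel.frequently ((hfreq.and_eventually hnear).mono ?_)
  rintro n ⟨⟨a, ha, b, hb, haν, hbν⟩, hn⟩ z hz hzx
  exact hpinch.inner_ne_of_mem_inter_sphere (notMem_thickening_of_mem_frontier hε (hsing n).1)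
    hn.le ha hb haν hbν hz hzx.le

theorem IsPinch.eventually_inner_pos_of_mem_frontier (h : IsPinch E ε x ξ ν)
    (hξ : -ξ ∉ outwardDirs E ε x) :
    ∀ᶠ u in 𝓝 x, u ∈ frontier (eNbhd E ε) → u ≠ x → 0 < ⟪u - x, ξ⟫ := by
  obtain ⟨r, hr, hball⟩ := Metric.mem_nhdsWithin_iff.1 (h.eventually_inner_pos_of_neg_notMem hξ)
  filter_upwards [ball_mem_nhds x hr, closedBall_mem_nhds x h.pos] with u hur huε hu hne
  have hcl : IsClosed {z : Plane | 0 ≤ ⟪z - x, ξ⟫} := isClosed_le continuous_const (by fun_prop)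
  have hsub : closure (ball x r ∩ (eNbhd E ε)ᶜ) ⊆ {z | 0 ≤ ⟪z - x, ξ⟫} :=
    closure_minimal (fun z hz ↦ (show 0 < ⟪z - x, ξ⟫ from hball hz).le) hcl
  have hnonneg : 0 ≤ ⟪u - x, ξ⟫ :=
    hsub (isOpen_ball.inter_closure ⟨hur, (mem_frontier_eNbhd_iff.1 hu).2⟩)
  refine hnonneg.lt_of_ne' fun h0 ↦ hne ?_
  have hthin := h.norm_sq_le_two_mul_inner_sq (notMem_thickening_of_mem_frontier h.pos hu)
    (mem_closedBall_iff_norm.1 huε)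
  rw [h0] at hthin
  exact sub_eq_zero.1 (norm_eq_zero.1 (by nlinarith))

theorem exists_hasCuts_of_isChainSing (hE : IsClosed E) (hε : 0 < ε) (h : IsChainSing E ε x) :
    ∃ ξ ν, IsPinch E ε x ξ ν ∧ HasCuts E ε x ξ ∧ HasCuts E ε x (-ξ) := by
  obtain ⟨⟨hx, -⟩, ⟨ξ, hext⟩, v, hv⟩ := h
  have hξ : ξ ∈ outwardDirs E ε x := (hext ▸ mem_singleton ξ : ξ ∈ extOutward E ε x).1
  obtain ⟨ν, hpinch, -⟩ := exists_isPinch_of_isChainSeq hE hε hx hξ hv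
  have hneg : -ξ ∉ outwardDirs E ε x := by
    rw [← hpinch.extOutward_eq hE, hext, mem_singleton_iff]
    intro heq
    have := (inner_eq_neg_one_iff_of_norm_eq_one (𝕜 := ℝ) hξ.1 hξ.1).2 heq.symm
    norm_num [hξ.1] at this
  refine ⟨ξ, ν, hpinch, hasCuts_of_isChainSeq hE hε hx hξ hv ?_, hpinch.hasCuts_neg hneg⟩
  filter_upwards [hv.2.2.1.eventually (hpinch.eventually_inner_pos_of_mem_frontier hneg)] with n hn
  exact hn (hv.1 n).1 (hv.2.1 n)

theorem exists_hasCuts_of_isChainChain (hE : IsClosed E) (hε : 0 < ε) (h : IsChainChain E ε x) :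
    ∃ ξ ν, IsPinch E ε x ξ ν ∧ HasCuts E ε x ξ ∧ HasCuts E ε x (-ξ) := by
  obtain ⟨⟨hx, -⟩, ξ, hext, hchain⟩ := h
  have hcuts : ∀ η ∈ ({ξ, -ξ} : Set Plane), HasCuts E ε x η := fun η hη ↦ by
    obtain ⟨δ, -, v, hv, hhalf⟩ := hchain η hη
    exact hasCuts_of_isChainSeq hE hε hx (hext ▸ hη : η ∈ extOutward E ε x).1 hv
      (.of_forall fun n ↦ (hhalf n).2)
  obtain ⟨-, -, v, hv, -⟩ := hchain ξ (.inl rfl)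
  have hξ : ξ ∈ outwardDirs E ε x := (hext ▸ .inl rfl : ξ ∈ extOutward E ε x).1
  obtain ⟨ν, hpinch, -⟩ := exists_isPinch_of_isChainSeq hE hε hx hξ hv
  exact ⟨ξ, ν, hpinch, hcuts ξ (.inl rfl), hcuts (-ξ) (.inr rfl)⟩

end Cuts

section Inaccessible

variable {E : Set Plane} {ε η r : ℝ} {x u y z ξ ν : Plane}

namespace IsPinch

theorem neg_two_mul_le_inner (h : IsPinch E ε x ξ ν) (hu : u ∉ thickening ε E)
    (hux : ‖u - x‖ ≤ ε) (hpos : 0 < ⟪u - x, ξ⟫) (hy : y ∈ E ∩ sphere u ε) :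
    -2 * ⟪u - x, ξ⟫ ≤ ⟪y - u, ξ⟫ := by
  have hfar : ε ≤ ‖y - x‖ := dist_eq_norm y x ▸
    notMem_thickening_iff.1 (notMem_thickening_of_mem_frontier h.pos h.mem_frontier) y hy.1
  have hyu : ‖y - u‖ = ε := mem_sphere_iff_norm.1 hy.2
  have hsq : ‖y - x‖ ^ 2 = ε ^ 2 + 2 * ⟪y - u, u - x⟫ + ‖u - x‖ ^ 2 := by
    rw [← sub_add_sub_cancel y u x, norm_add_sq_real, hyu]
  have hthin := h.two_mul_abs_inner_le_norm_sq hu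
  have hcusp := h.norm_sq_le_two_mul_inner_sq hu hux
  have hyν : |⟪y - u, ν⟫| ≤ ε := by
    simpa [hyu, h.isFrame.norm_right] using abs_real_inner_le_norm (y - u) ν
  have hmul : ⟪y - u, ν⟫ * ⟪u - x, ν⟫ ≤ ε * |⟪u - x, ν⟫| := by
    refine (le_abs_self _).trans ?_
    rw [abs_mul]
    gcongr
  rw [h.isFrame.inner_eq (y - u) (u - x)] at hsq
  refine le_of_mul_le_mul_left ?_ hpos
  nlinarith [h.pos]

theorem eventually_abs_inner_lt (h : IsPinch E ε x ξ ν) (hE : IsClosed E)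
    (hξ : ξ ∈ outwardDirs E ε x) (hη : 0 < η) :
    ∀ᶠ u in 𝓝 x, u ∉ thickening ε E → 0 < ⟪u - x, ξ⟫ →
      ∀ y ∈ E ∩ sphere u ε, |⟪y - u, ξ⟫| < η := by
  have hupper : ∀ᶠ u in 𝓝 x, ∀ y ∈ E, dist y u ≤ ε → ⟪y - u, ξ⟫ < η := by
    refine eventually_forall_mem_of_dist_le hE (f := id) continuousAt_id fun y hy hyx ↦ ?_
    have hyS : y ∈ E ∩ sphere x ε := ⟨hy, hyx.antisymm <| notMem_thickening_iff.1
      (notMem_thickening_of_mem_frontier h.pos h.mem_frontier) y hy⟩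
    have hcont : ContinuousAt (fun p : Plane × Plane ↦ ⟪p.2 - p.1, ξ⟫) (x, y) := by fun_prop
    exact hcont.eventually_lt_const
      ((inner_nonpos_of_mem_outwardDirs h.pos h.mem_frontier hξ hyS).trans_lt hη)
  have hsmall : ∀ᶠ u in 𝓝 x, 2 * ⟪u - x, ξ⟫ < η := by
    have hcont : ContinuousAt (fun u : Plane ↦ 2 * ⟪u - x, ξ⟫) x := by fun_prop
    exact hcont.eventually_lt_const (by simpa using hη)
  filter_upwards [hupper, hsmall, closedBall_mem_nhds x h.pos] with u hup hlow hux hu hpos y hy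
  have := h.neg_two_mul_le_inner hu (mem_closedBall_iff_norm.1 hux) hpos hy
  exact abs_lt.2 ⟨by linarith, hup y hy.1 (mem_sphere.1 hy.2).le⟩

theorem exists_isLocalMinOn (h : IsPinch E ε x ξ ν) (hξ : ξ ∈ outwardDirs E ε x)
    (hx : ∀ z ∉ eNbhd E ε, x ∉ closure (connectedComponentIn (eNbhd E ε)ᶜ z)) (hr : 0 < r) :
    ∃ z, ∃ u ∈ closure (connectedComponentIn (eNbhd E ε)ᶜ z), ‖u - x‖ < r ∧ 0 < ⟪u - x, ξ⟫ ∧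
      IsLocalMinOn (⟪·, ξ⟫) (closure (connectedComponentIn (eNbhd E ε)ᶜ z)) u := by
  wlog hrε : r ≤ ε
  · obtain ⟨z, u, hu, hux, hmin⟩ := this h hξ hx h.pos le_rfl
    exact ⟨z, u, hu, hux.trans (not_le.1 hrε), hmin⟩
  have hnear : ∀ᶠ z in 𝓝[(eNbhd E ε)ᶜ] x, ‖z - x‖ < r / 2 := by
    have hcont : Tendsto (fun z : Plane ↦ ‖z - x‖) (𝓝 x) (𝓝 0) := tendsto_norm_sub_self x
    exact (hcont.mono_left nhdsWithin_le_nhds).eventually_lt_const (half_pos hr)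
  obtain ⟨z, hzpos, hzx, hz⟩ := ((frequently_inner_pos_of_mem_outwardDirs hξ).and_eventually
    (hnear.and self_mem_nhdsWithin)).exists
  set V := connectedComponentIn (eNbhd E ε)ᶜ z
  have hcont : Continuous fun v : Plane ↦ ⟪v - x, ξ⟫ := by fun_prop
  have hcompact : IsCompact (closedBall x r ∩ (closure V ∩ {v | 0 ≤ ⟪v - x, ξ⟫})) :=
    (isCompact_closedBall x r).inter_right
      (isClosed_closure.inter (isClosed_le continuous_const hcont))
  have hzK : z ∈ closedBall x r ∩ (closure V ∩ {v | 0 ≤ ⟪v - x, ξ⟫}) :=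
    ⟨mem_closedBall_iff_norm.2 (by linarith), subset_closure (mem_connectedComponentIn hz),
      hzpos.le⟩
  obtain ⟨u, ⟨hur, huV, hu0⟩, hmin⟩ := hcompact.exists_isMinOn ⟨z, hzK⟩ hcont.continuousOn
  have huz : ⟪u - x, ξ⟫ < r / 2 := by
    have := real_inner_le_norm (z - x) ξ
    rw [h.isFrame.norm_left, mul_one] at this
    exact ((hmin hzK).trans this).trans_lt hzx
  have hthin := h.norm_sq_le_two_mul_inner_sq (notMem_thickening_of_mem_closure_compl h.pos
    (closure_mono (connectedComponentIn_subset _ _) huV))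
    ((mem_closedBall_iff_norm.1 hur).trans hrε)
  have hux : ‖u - x‖ < r := by nlinarith [norm_nonneg (u - x), mem_ofPred_eq ▸ hu0]
  have hupos : 0 < ⟪u - x, ξ⟫ := by
    refine lt_of_le_of_ne hu0 fun h0 ↦ hx z hz ?_
    rw [← h0] at hthin
    rwa [← sub_eq_zero.1 (norm_eq_zero.1 (by nlinarith : ‖u - x‖ = 0))]
  refine ⟨z, u, huV, hux, hupos, ?_⟩
  filter_upwards [self_mem_nhdsWithin,
    mem_nhdsWithin_of_mem_nhds (isOpen_ball.mem_nhds (mem_ball_iff_norm.2 hux)),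
    mem_nhdsWithin_of_mem_nhds (hcont.continuousAt.eventually_const_lt hupos)] with v hvV hvr hv0
  simpa [inner_sub_left] using hmin ⟨ball_subset_closedBall hvr, hvV, hv0.le⟩

end IsPinch

theorem exists_inner_neg_of_isLocalMinOn (hE : IsClosed E) (hε : 0 < ε) (hframe : IsFrame ξ ν)
    (hu : u ∉ thickening ε E) (huz : u ∈ closure (connectedComponentIn (eNbhd E ε)ᶜ z))
    (hmin : IsLocalMinOn (⟪·, ξ⟫) (closure (connectedComponentIn (eNbhd E ε)ᶜ z)) u)
    (hξ : ∀ y ∈ E ∩ sphere u ε, |⟪y - u, ξ⟫| < ε / 2) :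
    ∃ y ∈ E ∩ sphere u ε, ⟪y - u, ν⟫ < 0 := by
  by_contra! hnonneg
  have hd : IsEscapeDir E ε u ((-1 : ℝ) • ξ + (-1 : ℝ) • ν) := fun y hy ↦ by
    have hsq := hframe.norm_sq_eq (y - u)
    rw [mem_sphere_iff_norm.1 hy.2] at hsq
    have hyξ := abs_lt.1 (hξ y hy)
    rw [inner_add_right, real_inner_smul_right, real_inner_smul_right]
    nlinarith [hnonneg y hy]
  rw [eNbhd_eq_cthickening hε] at huz hmin
  have := hd.inner_nonneg_of_isLocalMinOn hE hε.le hu huz hmin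
  rw [hframe.inner_smul_add_smul_left] at this
  linarith

theorem exists_extContrib_eq_pair_of_frame (hE : IsClosed E) (hε : 0 < ε)
    (hu : u ∈ frontier (eNbhd E ε)) (hframe : IsFrame ξ ν) (hηε : η < ε)
    (hξ : ∀ y ∈ E ∩ sphere u ε, |⟪y - u, ξ⟫| < η)
    (hpos : ∃ y ∈ E ∩ sphere u ε, 0 < ⟪y - u, ν⟫)
    (hneg : ∃ y ∈ E ∩ sphere u ε, ⟪y - u, ν⟫ < 0) :
    IsSingularity E ε u ∧ ∃ y₁ ∈ sphere u ε, ∃ y₂ ∈ sphere u ε, extContrib E ε u = {y₁, y₂} ∧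
      ‖y₁ - u + (y₂ - u)‖ ≤ 3 * η := by
  obtain ⟨y₁, hy₁, y₂, hy₂, hext, hcontrol⟩ := exists_extContrib_eq_pair hE hε hu
  have hne (y) (hy : y ∈ E ∩ sphere u ε) : ⟪y - u, ν⟫ ≠ 0 := fun h0 ↦ by
    have hsq := hframe.norm_sq_eq (y - u)
    rw [mem_sphere_iff_norm.1 hy.2, h0] at hsq
    have := abs_lt.1 (hξ y hy)
    nlinarith
  have hopp : 0 < ⟪y₁ - u, ν⟫ ∧ ⟪y₂ - u, ν⟫ < 0 ∨ 0 < ⟪y₂ - u, ν⟫ ∧ ⟪y₁ - u, ν⟫ < 0 := by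
    obtain ⟨p, hp, hpν⟩ := hpos
    obtain ⟨q, hq, hqν⟩ := hneg
    have hneg₁₂ := hcontrol (-ν)
    simp only [inner_neg_right, neg_pos] at hneg₁₂
    rcases (hne y₁ hy₁).lt_or_gt with h₁ | h₁ <;> rcases (hne y₂ hy₂).lt_or_gt with h₂ | h₂
    · exact absurd (hneg₁₂ h₁ h₂ p hp) hpν.not_gt
    · exact .inr ⟨h₂, h₁⟩
    · exact .inl ⟨h₁, h₂⟩
    · exact absurd (hcontrol ν h₁ h₂ q hq) hqν.not_gt
  wlog h : 0 < ⟪y₁ - u, ν⟫ ∧ ⟪y₂ - u, ν⟫ < 0 generalizing y₁ y₂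
  · exact this y₂ hy₂ y₁ hy₁ (pair_comm y₁ y₂ ▸ hext) (fun n h₂ h₁ ↦ hcontrol n h₁ h₂) hopp.symm
      (hopp.resolve_left h)
  refine ⟨isSingularity_of_ne hE hε hu hy₁ hy₂ ?_, y₁, hy₁.2, y₂, hy₂.2, hext, ?_⟩
  · rintro rfl
    exact h.1.not_gt h.2
  · exact hframe.norm_add_le_of_abs_inner_le (mem_sphere_iff_norm.1 hy₁.2)
      (mem_sphere_iff_norm.1 hy₂.2) (hξ y₁ hy₁).le (hξ y₂ hy₂).le hηε.le h.1.le h.2.le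

namespace IsPinch

theorem exists_isSingularity (h : IsPinch E ε x ξ ν) (hE : IsClosed E)
    (hξ : ξ ∈ outwardDirs E ε x)
    (hx : ∀ z ∉ eNbhd E ε, x ∉ closure (connectedComponentIn (eNbhd E ε)ᶜ z)) (hr : 0 < r) :
    ∃ u, ‖u - x‖ < r ∧ 0 < ⟪u - x, ξ⟫ ∧ IsSingularity E ε u ∧
      ∃ y₁ ∈ sphere u ε, ∃ y₂ ∈ sphere u ε, extContrib E ε u = {y₁, y₂} ∧
        ‖y₁ - u + (y₂ - u)‖ ≤ 3 * r := by
  obtain ⟨η, hη, hηr, hηε⟩ : ∃ η > 0, η ≤ r ∧ η ≤ ε / 2 :=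
    ⟨min r (ε / 2), lt_min hr (half_pos h.pos), min_le_left _ _, min_le_right _ _⟩
  obtain ⟨ρ, hρ, hcluster⟩ := Metric.eventually_nhds_iff_ball.1
    (h.eventually_abs_inner_lt hE hξ hη)
  obtain ⟨z, u, huz, hux, hpos, hmin⟩ := h.exists_isLocalMinOn hξ hx (lt_min hr hρ)
  have hucl : u ∈ closure (eNbhd E ε)ᶜ := closure_mono (connectedComponentIn_subset _ _) huz
  have hu := notMem_thickening_of_mem_closure_compl h.pos hucl
  have hflat := hcluster u (mem_ball_iff_norm.2 (hux.trans_le (min_le_right _ _))) hu hpos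
  have hflat' (y) (hy : y ∈ E ∩ sphere u ε) : |⟪y - u, ξ⟫| < ε / 2 :=
    (hflat y hy).trans_le hηε
  have hneg := exists_inner_neg_of_isLocalMinOn hE h.pos h.isFrame hu huz hmin hflat'
  have hpos' := exists_inner_neg_of_isLocalMinOn hE h.pos h.isFrame.neg_right hu huz hmin hflat'
  simp only [inner_neg_right, neg_lt_zero] at hpos'
  have huE : u ∈ eNbhd E ε := by
    obtain ⟨y, hy, -⟩ := hneg
    rw [eNbhd_eq_cthickening h.pos]
    exact closedBall_subset_cthickening hy.1 ε (mem_closedBall'.2 (mem_sphere.1 hy.2).le)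
  obtain ⟨hsing, y₁, hy₁, y₂, hy₂, hext, hadd⟩ := exists_extContrib_eq_pair_of_frame hE h.pos
    (mem_frontier_eNbhd_iff.2 ⟨huE, hucl⟩) h.isFrame (hηε.trans_lt (half_lt_self h.pos)) hflat
    hpos' hneg
  exact ⟨u, hux.trans_le (min_le_left _ _), hpos, hsing, y₁, hy₁, y₂, hy₂, hext,
    hadd.trans (by linarith)⟩

theorem exists_isChainSeq (h : IsPinch E ε x ξ ν) (hE : IsClosed E) (hξ : ξ ∈ outwardDirs E ε x)
    (hx : ∀ z ∉ eNbhd E ε, x ∉ closure (connectedComponentIn (eNbhd E ε)ᶜ z)) :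
    ∃ v, IsChainSeq E ε x v ∧ ∀ n, v n ∈ halfBall x ξ 1 := by
  obtain ⟨r, -, hr, hr0⟩ := exists_seq_strictAnti_tendsto' (zero_lt_one (α := ℝ))
  choose v hvx hpos hsing a ha b hb hext hadd using fun n ↦ h.exists_isSingularity hE hξ hx (hr n).1
  refine ⟨v, ⟨hsing, ?_, ?_, a, b, hext, ?_⟩, fun n ↦ ⟨?_, hpos n⟩⟩
  · rintro n hn
    simpa [hn] using hpos n
  · exact tendsto_iff_norm_sub_tendsto_zero.2
      (squeeze_zero (fun n ↦ norm_nonneg _) (fun n ↦ (hvx n).le) hr0)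
  · rw [tendsto_inner_smul_smul_neg_one_iff h.pos.ne' (fun n ↦ mem_sphere_iff_norm.1 (ha n))
      (fun n ↦ mem_sphere_iff_norm.1 (hb n))]
    exact squeeze_zero_norm hadd (by simpa using hr0.const_mul 3)
  · exact mem_ball_iff_norm.2 ((hvx n).trans (hr n).2)

end IsPinch

theorem exists_isPinch_of_forall_notMem_closure (hE : IsClosed E) (hε : 0 < ε)
    (hx : x ∈ frontier (eNbhd E ε)) (hξ : ξ ∈ outwardDirs E ε x)
    (hacc : ∀ z ∉ eNbhd E ε, x ∉ closure (connectedComponentIn (eNbhd E ε)ᶜ z)) :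
    ∃ ν, IsPinch E ε x ξ ν := by
  refine (exists_isEscapeDir_or_exists_isPinch hE hε hx hξ).resolve_left ?_
  rintro ⟨d, hd⟩
  obtain ⟨z, hz, hxz⟩ := hd.exists_mem_closure_connectedComponentIn hE hε.le
    (notMem_thickening_of_mem_frontier hε hx)
  rw [← eNbhd_eq_cthickening hε] at hz hxz
  exact hacc z hz hxz

theorem isChainSing_or_isChainChain_of_forall_notMem_closure (hE : IsClosed E) (hε : 0 < ε)
    (hx : x ∈ frontier (eNbhd E ε))
    (hacc : ∀ z ∉ eNbhd E ε, x ∉ closure (connectedComponentIn (eNbhd E ε)ᶜ z)) :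
    IsChainSing E ε x ∨ IsChainChain E ε x := by
  obtain ⟨ξ, hξ⟩ := nonempty_outwardDirs hx
  obtain ⟨ν, hpinch⟩ := exists_isPinch_of_forall_notMem_closure hE hε hx hξ hacc
  obtain ⟨v, hv, hvξ⟩ := hpinch.exists_isChainSeq hE hξ hacc
  have hsing := hpinch.isSingularity hE
  by_cases hneg : -ξ ∈ outwardDirs E ε x
  · obtain ⟨w, hw, hwξ⟩ := hpinch.neg_left.exists_isChainSeq hE hneg hacc
    refine .inr ⟨hsing, ξ, hpinch.extOutward_eq_pair hE hξ hneg, ?_⟩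
    rintro η (rfl | rfl)
    · exact ⟨1, one_pos, v, hv, hvξ⟩
    · exact ⟨1, one_pos, w, hw, hwξ⟩
  · exact .inl ⟨hsing, ⟨ξ, hpinch.extOutward_eq_singleton hE hξ hneg⟩, v, hv⟩

end Inaccessible

end ParallelSet

open ParallelSet

theorem inaccessible_singularities_general (E : Set Plane) (hE : IsClosed E) {ε : ℝ}
    (hε : 0 < ε) (x : Plane) (hx : x ∈ frontier (eNbhd E ε)) :
    (∀ V, IsCompOfCompl E ε V → x ∉ frontier V) ↔
      (IsChainSing E ε x ∨ IsChainChain E ε x) := by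
  have hxE := (mem_frontier_eNbhd_iff.1 hx).1
  constructor
  · refine fun hacc ↦ isChainSing_or_isChainChain_of_forall_notMem_closure hE hε hx ?_
    intro z hz
    have hV : IsCompOfCompl E ε (connectedComponentIn (eNbhd E ε)ᶜ z) := ⟨z, hz, rfl⟩
    exact (mem_frontier_iff_mem_closure_of_isCompOfCompl hV hxE).not.1 (hacc _ hV)
  · intro h V hV
    obtain ⟨ξ, ν, hpinch, hpos, hneg⟩ :=
      h.elim (exists_hasCuts_of_isChainSing hE hε) (exists_hasCuts_of_isChainChain hE hε)
    rw [mem_frontier_iff_mem_closure_of_isCompOfCompl hV hxE]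
    obtain ⟨z, hz, rfl⟩ := hV
    exact hpinch.notMem_closure_of_hasCuts hpos hneg isPreconnected_connectedComponentIn
      (connectedComponentIn_subset _ _) ⟨z, mem_connectedComponentIn hz⟩

/-- Inaccessible singularities: a boundary point of `E_ε` lies on the boundary of no
connected component of the complement if and only if it is a one-sided chain singularity
(S6) or a chain-chain singularity (S7). -/
theorem inaccessible_singularities (E : Set Plane) (hE : IsCompact E) {ε : ℝ}
    (hε : 0 < ε) (x : Plane) (hx : x ∈ frontier (eNbhd E ε)) :
    (∀ V, IsCompOfCompl E ε V → x ∉ frontier V) ↔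
      (IsChainSing E ε x ∨ IsChainChain E ε x) :=
  inaccessible_singularities_general E hE.isClosed hε x hx

end
end
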